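/- arXiv:2512.17813 — 4 statements merged into one kernel-verified Lean document; each statement's English description precedes it below -/
import Mathlib

section
/- Let Ω ⊆ ℝⁿ be a C¹ domain, f : ℝ → ℝ continuous, and a : [0,∞) → [0,∞) continuous with t ↦ t·a(t) bounded on (0,∞) and locally Lipschitz on [0,∞). Let u ∈ C²(Ω) ∩ C¹(cl Ω) be a weak solution of Δ_a u + f(u) = 0 in Ω and suppose f(u) ≤ 0 in Ω, with no further assumptions on u. Then there exists C > 0 such that for every R > 1, ∫_{Ω ∩ {ρ ≤ R}} a(|∇u|)|∇u|² dx ≤ C·( |Ω ∩ B_{2R}| + R·H^{n−1}(∂⋆Ω ∩ B_{2R}) ), where H^{n−1} is the (n−1)-dimensional Hausdorff measure. -/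
open MeasureTheory Set Metric Filter
open scoped RealInnerProductSpace Topology ENNReal

noncomputable section

variable {n : ℕ}

/-- The quasilinear operator matrix `A(p)` applied to a vector `v`:
`A(p)v = a(|p|) v + (a'(|p|)/|p|) ⟨p,v⟩ p` (with the second term vanishing at `p = 0`). -/
def Aop (a : ℝ → ℝ) (p v : EuclideanSpace ℝ (Fin n)) : EuclideanSpace ℝ (Fin n) :=
  a ‖p‖ • v + ((deriv a ‖p‖ / ‖p‖) * ⟪p, v⟫) • p

/-- `λ₁(t) = a(t) + t·a'(t) = (t a(t))'`. -/
def lam1 (a : ℝ → ℝ) (t : ℝ) : ℝ := a t + t * deriv a t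

/-- `λ₂(t) = a(t)`. -/
def lam2 (a : ℝ → ℝ) (t : ℝ) : ℝ := a t

/-- `λmax(t) = max{λ₁(t), λ₂(t)}`. -/
def lamMax (a : ℝ → ℝ) (t : ℝ) : ℝ := max (lam1 a t) (lam2 a t)

/-- A Lipschitz test function with compact support contained in `Ω`. -/
def IsTestOn (Ω : Set (EuclideanSpace ℝ (Fin n))) (φ : EuclideanSpace ℝ (Fin n) → ℝ) : Prop :=
  (∃ K, LipschitzWith K φ) ∧ HasCompactSupport φ ∧ tsupport φ ⊆ Ω

/-- `u` is a weak solution of `div(a(|∇u|)∇u) + f(u) = 0` in `Ω`. -/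
def IsWeakSolution (a f : ℝ → ℝ) (Ω : Set (EuclideanSpace ℝ (Fin n)))
    (u : EuclideanSpace ℝ (Fin n) → ℝ) : Prop :=
  ∀ φ : EuclideanSpace ℝ (Fin n) → ℝ, IsTestOn Ω φ →
    ∫ x in Ω, a ‖gradient u x‖ * ⟪gradient u x, gradient φ x⟫
      = ∫ x in Ω, f (u x) * φ x

/-- The stability inequality for a solution `u`. -/
def IsStable (a f : ℝ → ℝ) (Ω : Set (EuclideanSpace ℝ (Fin n)))
    (u : EuclideanSpace ℝ (Fin n) → ℝ) : Prop :=
  ∀ φ : EuclideanSpace ℝ (Fin n) → ℝ, IsTestOn Ω φ →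
    ∫ x in Ω, deriv f (u x) * φ x ^ 2
      ≤ ∫ x in Ω, ⟪Aop a (gradient u x) (gradient φ x), gradient φ x⟫

/-- `u` has moderate energy growth in `Ω₀`. -/
def ModerateEnergyGrowth (a : ℝ → ℝ) (u : EuclideanSpace ℝ (Fin n) → ℝ)
    (Ω₀ : Set (EuclideanSpace ℝ (Fin n))) : Prop :=
  ∃ φ : ℕ → EuclideanSpace ℝ (Fin n) → ℝ,
    (∀ j, ∃ K, LipschitzWith K (φ j)) ∧
    (∀ j, HasCompactSupport (φ j)) ∧
    (∀ j x, 0 ≤ φ j x) ∧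
    (∀ K : Set (EuclideanSpace ℝ (Fin n)), IsCompact K → K ⊆ closure Ω₀ →
      TendstoUniformlyOn (fun j => φ j) (fun _ => (1 : ℝ)) atTop K) ∧
    Tendsto (fun j => ∫ x in Ω₀, ‖gradient u x‖ ^ 2 *
        ⟪Aop a (gradient u x) (gradient (φ j) x), gradient (φ j) x⟫)
      atTop (nhds 0)

/-- A `C^k` domain: nonempty, open, connected, with boundary locally given by a regular
`C^k` defining function. -/
def IsCkDomain (k : ℕ∞) (Ω : Set (EuclideanSpace ℝ (Fin n))) : Prop :=
  Ω.Nonempty ∧ IsOpen Ω ∧ IsConnected Ω ∧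
    ∀ p ∈ frontier Ω, ∃ V : Set (EuclideanSpace ℝ (Fin n)),
      ∃ g : EuclideanSpace ℝ (Fin n) → ℝ,
        IsOpen V ∧ p ∈ V ∧ ContDiffOn ℝ k g V ∧ (∀ x ∈ V, gradient g x ≠ 0) ∧
        Ω ∩ V = {x ∈ V | g x < 0}

/-- A `C^k` domain together with its interior unit normal field `η`. -/
def IsCkDomainWithNormal (k : ℕ∞) (Ω : Set (EuclideanSpace ℝ (Fin n)))
    (η : EuclideanSpace ℝ (Fin n) → EuclideanSpace ℝ (Fin n)) : Prop :=
  Ω.Nonempty ∧ IsOpen Ω ∧ IsConnected Ω ∧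
    ∀ p ∈ frontier Ω, ∃ V : Set (EuclideanSpace ℝ (Fin n)),
      ∃ g : EuclideanSpace ℝ (Fin n) → ℝ,
        IsOpen V ∧ p ∈ V ∧ ContDiffOn ℝ k g V ∧ (∀ x ∈ V, gradient g x ≠ 0) ∧
        Ω ∩ V = {x ∈ V | g x < 0} ∧
        η p = -(‖gradient g p‖⁻¹ • gradient g p)

/-- `a ∈ C^{1,1}_loc([0,∞))`: `C¹` on `[0,∞)` with locally Lipschitz derivative. -/
def C11Loc (a : ℝ → ℝ) : Prop :=
  ContDiffOn ℝ 1 a (Ici 0) ∧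
    ∀ t ∈ Ici (0 : ℝ), ∃ V ∈ 𝓝[Ici (0 : ℝ)] t, ∃ K, LipschitzOnWith K (deriv a) V


lemma hcover (d : ℝ) (hd : 0 ≤ d) (S : Set (EuclideanSpace ℝ (Fin n)))
    (hS : (μH[d] : Measure (EuclideanSpace ℝ (Fin n))) S ≠ ∞) (σ : ℝ) (hσ : 0 < σ) :
    ∃ (J : Set ℕ) (c : ℕ → EuclideanSpace ℝ (Fin n)) (r : ℕ → ℝ),
      (∀ i, 0 < r i ∧ r i ≤ σ) ∧ (S ⊆ ⋃ i ∈ J, ball (c i) (r i)) ∧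
      ∀ F : Finset ℕ, (F : Set ℕ) ⊆ J →
        ∑ i ∈ F, (r i) ^ d ≤ ((μH[d] : Measure (EuclideanSpace ℝ (Fin n))) S).toReal + σ := by
  set H := (μH[d] : Measure (EuclideanSpace ℝ (Fin n))) S with hH
  have h1 := Measure.hausdorffMeasure_apply (X := EuclideanSpace ℝ (Fin n)) d S
  rw [← hH] at h1
  have h2 : (⨅ (t : ℕ → Set (EuclideanSpace ℝ (Fin n))) (_ : S ⊆ ⋃ n, t n)
      (_ : ∀ n, ediam (t n) ≤ ENNReal.ofReal (σ/2)),
        ∑' n, ⨆ _ : (t n).Nonempty, ediam (t n) ^ d) ≤ H := by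
    rw [h1]
    exact le_iSup₂_of_le (ENNReal.ofReal (σ/2)) (by simpa using hσ) le_rfl
  have h3 : H < H + ENNReal.ofReal (σ/2) :=
    ENNReal.lt_add_right hS (by simpa using hσ)
  have h4 := h2.trans_lt h3
  simp only [iInf_lt_iff] at h4
  obtain ⟨t, htS, htd, hsum⟩ := h4
  have hfin : ∀ i, ediam (t i) ≠ ∞ := fun i => ((htd i).trans_lt ENNReal.ofReal_lt_top).ne
  have hdle : ∀ i, (ediam (t i)).toReal ≤ σ / 2 := fun i => by
    have := ENNReal.toReal_mono ENNReal.ofReal_ne_top (htd i)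
    rwa [ENNReal.toReal_ofReal (by positivity)] at this
  have hex : ∀ i, ∃ r : ℝ, (ediam (t i)).toReal < r ∧ r ≤ σ ∧
      r ^ d ≤ (ediam (t i)).toReal ^ d + σ / 2 * (1/2 : ℝ)^(i+1) := by
    intro i
    have hc : ContinuousAt (fun r : ℝ => r ^ d) (ediam (t i)).toReal :=
      (Real.continuous_rpow_const hd).continuousAt
    have e1 := (hc.eventually_lt (continuousAt_const
      (y := (ediam (t i)).toReal ^ d + σ / 2 * (1/2 : ℝ)^(i+1))) (by
        have : 0 < σ / 2 * (1/2 : ℝ)^(i+1) := by positivity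
        linarith))
    have e2 : ∀ᶠ r : ℝ in 𝓝 (ediam (t i)).toReal, r < σ :=
      eventually_lt_nhds (by linarith [hdle i])
    have e3 := (e1.and e2).filter_mono (nhdsWithin_le_nhds (s := Ioi (ediam (t i)).toReal))
    obtain ⟨r, hr, hr'⟩ := (e3.and self_mem_nhdsWithin).exists
    exact ⟨r, hr', hr.2.le, hr.1.le⟩
  choose r hr1 hr2 hr3 using hex
  classical
  refine ⟨{i | (t i).Nonempty}, fun i => if h : (t i).Nonempty then h.some else 0, r,
    fun i => ⟨ENNReal.toReal_nonneg.trans_lt (hr1 i), hr2 i⟩, ?_, ?_⟩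
  · intro x hx
    obtain ⟨i, hi⟩ := mem_iUnion.1 (htS hx)
    refine mem_biUnion (x := i) (show (t i).Nonempty from ⟨x, hi⟩) ?_
    have hne : (t i).Nonempty := ⟨x, hi⟩
    simp only [hne, dif_pos, mem_ball]
    refine lt_of_le_of_lt ?_ (hr1 i)
    rw [dist_edist]
    exact ENNReal.toReal_mono (hfin i) (edist_le_ediam_of_mem hi hne.some_mem)
  · intro F hF
    have hA : ∑ i ∈ F, (ediam (t i)).toReal ^ d ≤ H.toReal + σ / 2 := by
      have : ∑ i ∈ F, ediam (t i) ^ d ≤ H + ENNReal.ofReal (σ/2) := by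
        refine le_trans ?_ hsum.le
        refine le_trans (Finset.sum_le_sum fun i hi => ?_) (ENNReal.sum_le_tsum F)
        exact le_iSup (fun _ : (t i).Nonempty => ediam (t i) ^ d) (hF hi)
      have h5 := ENNReal.toReal_mono (by finiteness) this
      rw [ENNReal.toReal_sum (fun i _ => ENNReal.rpow_ne_top_of_nonneg hd (hfin i)),
        ENNReal.toReal_add hS ENNReal.ofReal_ne_top, ENNReal.toReal_ofReal (by positivity)] at h5
      simpa [ENNReal.toReal_rpow] using h5
    have hB : ∑ i ∈ F, σ / 2 * (1/2 : ℝ)^(i+1) ≤ σ / 2 := by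
      rw [← Finset.mul_sum]
      have : ∑ i ∈ F, (1/2 : ℝ)^(i+1) ≤ 1 := by
        have hs : HasSum (fun i : ℕ => (1/2 : ℝ)^(i+1)) 1 := by
          have := hasSum_geometric_two.mul_left (1/2 : ℝ)
          simpa [pow_succ'] using this
        exact sum_le_hasSum F (fun i _ => by positivity) hs
      nlinarith
    calc ∑ i ∈ F, (r i) ^ d ≤ ∑ i ∈ F, ((ediam (t i)).toReal ^ d + σ / 2 * (1/2 : ℝ)^(i+1)) :=
          Finset.sum_le_sum fun i _ => hr3 i
      _ ≤ _ := by rw [Finset.sum_add_distrib]; linarith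

lemma layer (g : EuclideanSpace ℝ (Fin n) → ℝ) (V : Set (EuclideanSpace ℝ (Fin n)))
    (hV : IsOpen V) (p : EuclideanSpace ℝ (Fin n)) (hp : p ∈ V) (hg : ContDiffOn ℝ 1 g V)
    (hgp : gradient g p ≠ 0) :
    ∃ r > 0, ball p r ⊆ V ∧ ∃ C : ℝ, 0 ≤ C ∧ ∀ ε > 0,
      volume {x ∈ ball p r | -ε < g x ∧ g x < 0} ≤ ENNReal.ofReal (C * ε) := by
  have hgc : ContDiffAt ℝ 1 g p := hg.contDiffAt (hV.mem_nhds hp)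
  have hstr : HasStrictFDerivAt g (fderiv ℝ g p) p := hgc.hasStrictFDerivAt (by norm_num)
  set v := gradient g p with hv
  set c := ‖v‖ / 2 with hc
  have hvpos : 0 < ‖v‖ := norm_pos_iff.2 hgp
  have hcpos : 0 < c := by positivity
  obtain ⟨U, hU, hUa⟩ := hstr.approximates_deriv_on_nhds (c := ⟨c, hcpos.le⟩)
    (Or.inr (by exact_mod_cast hcpos))
  obtain ⟨s, hs, hsU⟩ := Metric.mem_nhds_iff.1 (inter_mem hU (hV.mem_nhds hp))
  set e := ‖v‖⁻¹ • v with he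
  have hen : ‖e‖ = 1 := by rw [he, norm_smul, norm_inv, norm_norm]; field_simp
  have hde : fderiv ℝ g p e = 2 * c := by
    rw [← inner_gradient_left, ← hv, he, inner_smul_right, real_inner_self_eq_norm_sq]
    rw [hc]; field_simp
  have key : ∀ x ∈ ball p s, ∀ t ≥ 0, x + t • e ∈ ball p s → c * t ≤ g (x + t • e) - g x := by
    intro x hx t ht hxt
    have := hUa _ (hsU hxt).1 _ (hsU hx).1
    simp only [add_sub_cancel_left, map_smul, hde, norm_smul, hen, Real.norm_eq_abs, smul_eq_mul,
      abs_of_nonneg ht, mul_one] at this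
    have h2 := (abs_le.1 this).1
    change -(c * t) ≤ _ at h2
    linarith
  refine ⟨s / 2, by positivity, (ball_subset_ball (by linarith)).trans
    (hsU.trans inter_subset_right), (volume (ball p s)).toReal / (c * (s/2)), by positivity, ?_⟩
  intro ε hε
  set t := ε / c with ht
  have htpos : 0 < t := by positivity
  set N := ⌊(s/2) / t⌋₊ with hN
  set L := {x ∈ ball p (s/2) | -ε < g x ∧ g x < 0} with hL
  have hLo : IsOpen L := by
    have hcont : ContinuousOn g (ball p (s/2)) := hg.continuousOn.mono
      ((ball_subset_ball (by linarith)).trans (hsU.trans inter_subset_right))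
    exact hcont.isOpen_inter_preimage isOpen_ball (isOpen_Ioo (a := -ε) (b := 0))
  have hjt : ∀ j ∈ Finset.range (N+1), (j : ℝ) * t ≤ s / 2 := by
    intro j hj
    have h1 : (j : ℝ) ≤ N := by exact_mod_cast Nat.lt_succ_iff.1 (Finset.mem_range.1 hj)
    have h2 : (N : ℝ) ≤ (s/2)/t := Nat.floor_le (by positivity)
    have := h1.trans h2
    rwa [le_div_iff₀ htpos] at this
  have hLs : L ⊆ ball p (s/2) := fun x hx => hx.1
  let T : ℕ → Set (EuclideanSpace ℝ (Fin n)) := fun j => (fun x => x + (-((j : ℝ) * t)) • e) ⁻¹' L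
  have hTmem : ∀ j x, x ∈ T j ↔ x + (-((j : ℝ) * t)) • e ∈ L := fun j x => Iff.rfl
  have hTv : ∀ j, volume (T j) = volume L := fun j => measure_preimage_add_right _ _ _
  have hTo : ∀ j, MeasurableSet (T j) := fun j =>
    (hLo.preimage (continuous_id.add continuous_const)).measurableSet
  have hTs : ∀ j ∈ Finset.range (N+1), T j ⊆ ball p s := by
    intro j hj x hx
    have h1 := mem_ball_iff_norm.1 (hLs ((hTmem j x).1 hx))
    rw [mem_ball_iff_norm]
    have h2 : x - p = (x + (-((j : ℝ) * t)) • e - p) + ((j:ℝ) * t) • e := by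
      rw [neg_smul]; abel
    have h3 : ‖((j:ℝ) * t) • e‖ = (j:ℝ) * t := by
      rw [norm_smul, hen, mul_one, Real.norm_of_nonneg (by positivity)]
    rw [h2]
    have := norm_add_le (x + (-((j : ℝ) * t)) • e - p) (((j:ℝ) * t) • e)
    have := hjt j hj
    linarith
  have hdis : ∀ i j : ℕ, i < j → Disjoint (T i) (T j) := by
    intro i j hij
    rw [Set.disjoint_left]
    intro x hi hj
    rw [hTmem] at hi hj
    have hb : ball p (s/2) ⊆ ball p s := ball_subset_ball (by linarith)
    have h1 := key _ (hb hj.1) (((j:ℝ) - i) * t)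
      (mul_nonneg (sub_nonneg.2 (by exact_mod_cast hij.le)) htpos.le)
    have h2 : x + (-((j : ℝ) * t)) • e + (((j:ℝ) - i) * t) • e = x + (-((i : ℝ) * t)) • e := by
      rw [add_assoc, ← add_smul]; congr 2; ring
    rw [h2] at h1
    have h3 := h1 (hb hi.1)
    have h4 : (1:ℝ) ≤ (j:ℝ) - i := by
      have : (i:ℝ) + 1 ≤ j := by exact_mod_cast hij
      linarith
    have h5 : c * t = ε := by rw [ht]; field_simp
    have h6 : ε ≤ c * (((j:ℝ) - i) * t) := by nlinarith
    linarith [hi.2.2, hj.2.1]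
  have hsum : ∑ j ∈ Finset.range (N+1), volume (T j) ≤ volume (ball p s) := by
    rw [← measure_biUnion_finset]
    · exact measure_mono (iUnion₂_subset hTs)
    · intro i _ j _ hij
      rcases lt_or_gt_of_ne hij with h | h
      · exact hdis i j h
      · exact (hdis j i h).symm
    · exact fun j _ => hTo j
  simp only [hTv, Finset.sum_const, Finset.card_range, nsmul_eq_mul] at hsum
  have hLfin : volume L ≠ ∞ := (measure_mono hLs).trans_lt measure_ball_lt_top |>.ne
  have hsr := ENNReal.toReal_mono measure_ball_lt_top.ne hsum
  rw [ENNReal.toReal_mul, ENNReal.toReal_natCast] at hsr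
  rw [← ENNReal.ofReal_toReal hLfin]
  apply ENNReal.ofReal_le_ofReal
  have hN1 : (s/2)/t < (N+1 : ℕ) := by push_cast; exact Nat.lt_floor_add_one _
  have h7 : (s/2)/t * (volume L).toReal ≤ (volume (ball p s)).toReal :=
    (mul_le_mul_of_nonneg_right hN1.le ENNReal.toReal_nonneg).trans hsr
  have h8 : (s/2)/t = (c * (s/2)) / ε := by rw [ht]; field_simp
  rw [h8] at h7
  rw [div_mul_eq_mul_div, le_div_iff₀ (by positivity)]
  rw [div_mul_eq_mul_div, div_le_iff₀ hε] at h7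
  linarith

lemma bdry_zero (g : EuclideanSpace ℝ (Fin n) → ℝ) (V Ω : Set (EuclideanSpace ℝ (Fin n)))
    (hV : IsOpen V) (hg : ContinuousOn g V) (hgV : Ω ∩ V = {x ∈ V | g x < 0})
    (q : EuclideanSpace ℝ (Fin n)) (hqV : q ∈ V) :
    (q ∈ closure Ω → g q ≤ 0) ∧ (q ∉ Ω → 0 ≤ g q) := by
  constructor
  · intro hq
    by_contra! h
    have h1 : ∀ᶠ x in 𝓝 q, 0 < g x :=
      (hg.continuousAt (hV.mem_nhds hqV)).eventually_const_lt h
    obtain ⟨x, ⟨hx1, hx2⟩, hx⟩ := mem_closure_iff_nhds.1 hq _ (h1.and (hV.mem_nhds hqV))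
    have : x ∈ Ω ∩ V := ⟨hx, hx2⟩
    rw [hgV] at this
    exact absurd hx1 (not_lt.2 this.2.le)
  · intro hq
    by_contra! h
    have : q ∈ Ω ∩ V := by rw [hgV]; exact ⟨hqV, h⟩
    exact hq this.1

lemma parallel (g g' : EuclideanSpace ℝ (Fin n) → ℝ) (V V' Ω : Set (EuclideanSpace ℝ (Fin n)))
    (q : EuclideanSpace ℝ (Fin n)) (hV : V ∈ 𝓝 q) (hV' : V' ∈ 𝓝 q)
    (hg : DifferentiableAt ℝ g q) (hg' : DifferentiableAt ℝ g' q)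
    (hgV : Ω ∩ V = {x ∈ V | g x < 0}) (hgV' : Ω ∩ V' = {x ∈ V' | g' x < 0})
    (h0 : g q = 0) (h0' : g' q = 0) (hne : gradient g q ≠ 0)
    (v : EuclideanSpace ℝ (Fin n)) (hv : fderiv ℝ g q v = 0) : fderiv ℝ g' q v = 0 := by
  have key : ∀ w, fderiv ℝ g q w < 0 → fderiv ℝ g' q w ≤ 0 := by
    intro w hw
    have hline : HasDerivAt (fun t : ℝ => q + t • w) w 0 := by
      simpa using ((hasDerivAt_id (0:ℝ)).smul_const w).const_add q
    have hd : HasDerivAt (fun t : ℝ => g (q + t • w)) (fderiv ℝ g q w) 0 := by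
      have := HasFDerivAt.comp_hasDerivAt (x := (0:ℝ)) (f := fun t : ℝ => q + t • w)
        (l := g) (l' := fderiv ℝ g q) (by simpa using hg.hasFDerivAt) hline
      exact this
    have hd' : HasDerivAt (fun t : ℝ => g' (q + t • w)) (fderiv ℝ g' q w) 0 := by
      have := HasFDerivAt.comp_hasDerivAt (x := (0:ℝ)) (f := fun t : ℝ => q + t • w)
        (l := g') (l' := fderiv ℝ g' q) (by simpa using hg'.hasFDerivAt) hline
      exact this
    by_contra! hpos
    have hcont : Tendsto (fun t : ℝ => q + t • w) (𝓝[>] 0) (𝓝 q) := by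
      have := hline.continuousAt.tendsto
      simp only [zero_smul, add_zero] at this
      exact this.mono_left nhdsWithin_le_nhds
    have s1 := (hasDerivAt_iff_tendsto_slope.1 hd).mono_left
      (nhdsWithin_mono _ (fun t ht => ne_of_gt ht) : 𝓝[>] (0:ℝ) ≤ 𝓝[≠] 0)
    have s2 := (hasDerivAt_iff_tendsto_slope.1 hd').mono_left
      (nhdsWithin_mono _ (fun t ht => ne_of_gt ht) : 𝓝[>] (0:ℝ) ≤ 𝓝[≠] 0)
    obtain ⟨t, ⟨⟨⟨⟨t1, t2⟩, t3⟩, t4⟩, t5⟩⟩ := ((((s1.eventually_lt_const hw).and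
      (s2.eventually_const_lt hpos)).and (hcont.eventually hV)).and
      (hcont.eventually hV')).and self_mem_nhdsWithin |>.exists
    simp only [slope_def_field, zero_smul, add_zero, h0, h0', sub_zero] at t1 t2
    have t5' : (0:ℝ) < t := t5
    have u1 : g (q + t • w) < 0 := by
      by_contra! h; exact absurd t1 (not_lt.2 (by positivity))
    have u2 : 0 < g' (q + t • w) := by
      by_contra! h; exact absurd t2 (not_lt.2 (div_nonpos_of_nonpos_of_nonneg h t5'.le))
    have m1 : q + t • w ∈ Ω ∩ V := by rw [hgV]; exact ⟨t3, u1⟩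
    have m2 : q + t • w ∈ Ω ∩ V' := ⟨m1.1, t4⟩
    rw [hgV'] at m2
    exact absurd m2.2 (not_lt.2 u2.le)
  have hw : fderiv ℝ g q (-gradient g q) < 0 := by
    rw [map_neg, ← inner_gradient_left, real_inner_self_eq_norm_sq]
    have := norm_pos_iff.2 hne
    nlinarith
  set w := -gradient g q
  have half : ∀ v, fderiv ℝ g q v = 0 → fderiv ℝ g' q v ≤ 0 := by
    intro v hv
    have : ∀ δ > 0, fderiv ℝ g' q v + δ * fderiv ℝ g' q w ≤ 0 := by
      intro δ hδ
      have := key (v + δ • w) (by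
        simp only [map_add, map_smul, hv, smul_eq_mul, zero_add]; nlinarith)
      simpa using this
    have hl : Tendsto (fun δ : ℝ => fderiv ℝ g' q v + δ * fderiv ℝ g' q w) (𝓝[>] 0)
        (𝓝 (fderiv ℝ g' q v + 0 * fderiv ℝ g' q w)) :=
      ((continuous_const.add (continuous_id.mul continuous_const)).tendsto 0).mono_left
        nhdsWithin_le_nhds
    have := le_of_tendsto hl (eventually_mem_nhdsWithin.mono fun δ hδ => this δ hδ)
    simpa using this
  refine le_antisymm (half v hv) ?_
  have := half (-v) (by simp [hv])
  simpa using this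

lemma ball_h (n : ℕ) : ∃ C0 : ℝ, 0 ≤ C0 ∧ ∀ (c : EuclideanSpace ℝ (Fin n)) (r : ℝ), 0 < r →
    ∃ h : EuclideanSpace ℝ (Fin n) → ℝ, ContDiff ℝ 1 h ∧ (∀ x, 0 ≤ h x ∧ h x ≤ 1) ∧
      (∀ x ∈ closedBall c r, h x = 1) ∧ (∀ x, h x ≠ 0 → x ∈ closedBall c (3 / 2 * r)) ∧
      (∀ x, fderiv ℝ h x ≠ 0 → x ∈ closedBall c (3 / 2 * r)) ∧
      (∀ x v, |fderiv ℝ h x v| ≤ C0 / r * ‖v‖) := by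
  let b : ContDiffBump (0 : EuclideanSpace ℝ (Fin n)) := ⟨1, 3/2, by norm_num, by norm_num⟩
  have hb : ContDiff ℝ 1 b := b.contDiff
  obtain ⟨C, hC⟩ := (b.hasCompactSupport.fderiv ℝ).exists_bound_of_continuous
    (hb.continuous_fderiv (by norm_num))
  refine ⟨C, (norm_nonneg _).trans (hC 0), ?_⟩
  intro c r hr
  have hnorm : ∀ x, ‖r⁻¹ • (x - c)‖ = dist x c / r := fun x => by
    rw [norm_smul, dist_eq_norm, norm_inv, Real.norm_of_nonneg hr.le]; field_simp
  have hsupp : ∀ x, b (r⁻¹ • (x - c)) ≠ 0 → x ∈ closedBall c (3 / 2 * r) := by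
    intro x hx
    have : r⁻¹ • (x - c) ∈ Function.support b := hx
    rw [b.support_eq, mem_ball_zero_iff, hnorm, div_lt_iff₀ hr] at this
    exact this.le
  refine ⟨fun x => b (r⁻¹ • (x - c)), ?_, fun x => ⟨b.nonneg, b.le_one⟩, ?_, hsupp, ?_, ?_⟩
  · exact hb.comp ((contDiff_id.sub contDiff_const).const_smul _)
  · intro x hx
    apply b.one_of_mem_closedBall
    rw [mem_closedBall_zero_iff, hnorm, div_le_iff₀ hr]
    simpa [b] using hx
  · intro x hx
    by_contra hxc
    apply hx
    have : (fun x => b (r⁻¹ • (x - c))) =ᶠ[𝓝 x] fun _ => 0 := by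
      filter_upwards [isClosed_closedBall.isOpen_compl.mem_nhds hxc] with y hy
      by_contra h
      exact hy (hsupp y h)
    rw [this.fderiv_eq]; simp
  · intro x v
    have h1 : HasFDerivAt (fun x => r⁻¹ • (x - c))
        (r⁻¹ • ContinuousLinearMap.id ℝ (EuclideanSpace ℝ (Fin n))) x :=
      ((hasFDerivAt_id (𝕜 := ℝ) x).sub_const c).const_smul r⁻¹
    have h2 := ((hb.differentiable (by norm_num)) (r⁻¹ • (x - c))).hasFDerivAt.comp x h1
    have h3 : fderiv ℝ (fun x => b (r⁻¹ • (x - c))) x = _ := h2.fderiv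
    rw [h3]
    simp only [ContinuousLinearMap.comp_apply, _root_.smul_apply, map_smul,
      ContinuousLinearMap.id_apply, smul_eq_mul, abs_mul, abs_inv, abs_of_pos hr]
    have h4 := (fderiv ℝ b (r⁻¹ • (x - c))).le_opNorm v
    have h5 := mul_le_mul_of_nonneg_right (hC (r⁻¹ • (x - c))) (norm_nonneg v)
    rw [Real.norm_eq_abs] at h4
    calc _ ≤ r⁻¹ * (C * ‖v‖) := by gcongr; exact h4.trans h5
      _ = _ := by ring

lemma theta_bound : ∃ C : ℝ, 0 ≤ C ∧ ∀ t, |deriv Real.smoothTransition t| ≤ C := by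
  have hd : ContDiff ℝ 1 Real.smoothTransition := Real.smoothTransition.contDiff (n := 1)
  have hc : Continuous (deriv Real.smoothTransition) := hd.continuous_deriv (by norm_num)
  obtain ⟨C, hC⟩ := (isCompact_Icc (a := (0:ℝ)) (b := 1)).exists_bound_of_continuousOn
    hc.continuousOn
  have hC0 : 0 ≤ C := (norm_nonneg _).trans (hC 0 (by simp))
  refine ⟨C, hC0, fun t => ?_⟩
  rcases le_total t 0 with h | h
  · have : IsLocalMin Real.smoothTransition t := Filter.Eventually.of_forall fun y => by
      rw [Real.smoothTransition.zero_of_nonpos h]; exact Real.smoothTransition.nonneg y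
    rw [this.deriv_eq_zero]; simpa
  rcases le_total 1 t with h' | h'
  · have : IsLocalMax Real.smoothTransition t := Filter.Eventually.of_forall fun y => by
      rw [Real.smoothTransition.one_of_one_le h']; exact Real.smoothTransition.le_one y
    rw [this.deriv_eq_zero]; simpa
  · exact hC t ⟨h, h'⟩

lemma theta_deriv_one {t : ℝ} (h' : 1 ≤ t) : deriv Real.smoothTransition t = 0 := by
  have : IsLocalMax Real.smoothTransition t := Filter.Eventually.of_forall fun y => by
    rw [Real.smoothTransition.one_of_one_le h']; exact Real.smoothTransition.le_one y
  exact this.deriv_eq_zero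

lemma chart_h (g : EuclideanSpace ℝ (Fin n) → ℝ) (V : Set (EuclideanSpace ℝ (Fin n)))
    (hV : IsOpen V) (p : EuclideanSpace ℝ (Fin n)) (hg : ContDiffOn ℝ 1 g V) (r : ℝ) (hr : 0 < r)
    (hrV : ball p r ⊆ V) :
    ∃ C : ℝ, 0 ≤ C ∧ ∀ ε > 0, ∃ h : EuclideanSpace ℝ (Fin n) → ℝ, ContDiff ℝ 1 h ∧
      (∀ x, 0 ≤ h x ∧ h x ≤ 1) ∧ (∀ x ∈ closedBall p (r/2), -ε < g x → h x = 1) ∧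
      (∀ x, h x ≠ 0 → x ∈ closedBall p (3 / 4 * r) ∧ -(2 * ε) < g x) ∧
      (∀ x, fderiv ℝ h x ≠ 0 → x ∈ closedBall p (3 / 4 * r) ∧ -(2 * ε) < g x) ∧
      (∀ x ∈ closedBall p (3 / 4 * r), ∀ v,
        |fderiv ℝ h x v| ≤ C * ‖v‖ + C / ε * |fderiv ℝ g x v|) := by
  obtain ⟨C0, hC0, hb⟩ := ball_h n
  obtain ⟨Ct, hCt, htb⟩ := theta_bound
  obtain ⟨ξ, hξ, hξ01, hξ1, hξs, hξd, hξb⟩ := hb p (r/2) (by positivity)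
  have e34 : 3 / 2 * (r / 2) = 3 / 4 * r := by ring
  rw [e34] at hξs hξd
  have hsub : closedBall p (3 / 4 * r) ⊆ V :=
    (closedBall_subset_ball (by linarith)).trans hrV
  refine ⟨max (C0 / (r/2)) Ct, le_max_of_le_right hCt, fun ε hε => ?_⟩
  have hθ : ContDiff ℝ 1 Real.smoothTransition := Real.smoothTransition.contDiff (n := 1)
  let T : EuclideanSpace ℝ (Fin n) → ℝ := fun x => 1 - Real.smoothTransition (-(g x) / ε - 1)
  have hT01 : ∀ x, 0 ≤ T x ∧ T x ≤ 1 := fun x =>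
    ⟨sub_nonneg.2 (Real.smoothTransition.le_one _), by
      simp only [T]; linarith [Real.smoothTransition.nonneg (-(g x) / ε - 1)]⟩
  have hTV : ContDiffOn ℝ 1 T V :=
    contDiffOn_const.sub (hθ.comp_contDiffOn ((hg.neg.div_const ε).sub contDiffOn_const))
  have hT0 : ∀ x, g x ≤ -(2*ε) → T x = 0 ∧ 1 ≤ -(g x) / ε - 1 := by
    intro x hx
    have : 1 ≤ -(g x) / ε - 1 := by
      rw [le_sub_iff_add_le, le_div_iff₀ hε]; linarith
    exact ⟨by simp only [T]; rw [Real.smoothTransition.one_of_one_le this]; simp, this⟩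
  have hTd : ∀ x ∈ V, HasFDerivAt T
      ((deriv Real.smoothTransition (-(g x) / ε - 1) / ε) • fderiv ℝ g x) x := by
    intro x hx
    have h1 : HasFDerivAt g (fderiv ℝ g x) x :=
      ((hg.contDiffAt (hV.mem_nhds hx)).differentiableAt (by norm_num)).hasFDerivAt
    have h2 : HasFDerivAt (fun x => -(g x) / ε - 1) (-(ε⁻¹ • fderiv ℝ g x)) x := by
      have := ((h1.const_mul (ε⁻¹)).neg).sub_const (1:ℝ)
      refine this.congr_of_eventuallyEq (Eventually.of_forall fun y => ?_)
      simp only [Pi.neg_apply]; ring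
    have h3 := ((hθ.differentiable (by norm_num) (-(g x) / ε - 1)).hasDerivAt).comp_hasFDerivAt x h2
    have h4 := h3.const_sub 1
    have h5 : (deriv Real.smoothTransition (-(g x) / ε - 1) / ε) • fderiv ℝ g x =
        -(deriv Real.smoothTransition (-g x / ε - 1) • -(ε⁻¹ • fderiv ℝ g x)) := by
      rw [smul_neg, neg_neg, smul_smul, div_eq_mul_inv]
    rw [h5]
    exact h4
  have hout : ∀ x ∉ closedBall p (3 / 4 * r), (fun x => ξ x * T x) =ᶠ[𝓝 x] fun _ => 0 := by
    intro x hx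
    filter_upwards [isClosed_closedBall.isOpen_compl.mem_nhds hx] with y hy
    have : ξ y = 0 := by by_contra h; exact hy (hξs y h)
    simp [this]
  have hder : ∀ x ∈ V, fderiv ℝ (fun x => ξ x * T x) x =
      ξ x • ((deriv Real.smoothTransition (-(g x) / ε - 1) / ε) • fderiv ℝ g x)
        + T x • fderiv ℝ ξ x := fun x hx =>
    ((hξ.differentiable (by norm_num) x).hasFDerivAt.mul (hTd x hx)).fderiv
  refine ⟨fun x => ξ x * T x, ?_, ?_, ?_, ?_, ?_, ?_⟩
  · rw [contDiff_iff_contDiffAt]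
    intro x
    by_cases hx : x ∈ closedBall p (3 / 4 * r)
    · exact hξ.contDiffAt.mul (hTV.contDiffAt (hV.mem_nhds (hsub hx)))
    · exact contDiffAt_const.congr_of_eventuallyEq (hout x hx)
  · intro x
    exact ⟨mul_nonneg (hξ01 x).1 (hT01 x).1, mul_le_one₀ (hξ01 x).2 (hT01 x).1 (hT01 x).2⟩
  · intro x hx hgx
    have : -(g x) / ε - 1 ≤ 0 := by
      rw [sub_nonpos, div_le_one hε]; linarith
    simp only [T]
    rw [hξ1 x hx, Real.smoothTransition.zero_of_nonpos this]; simp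
  · intro x hx
    refine ⟨hξs x (left_ne_zero_of_mul hx), ?_⟩
    by_contra! h
    exact (right_ne_zero_of_mul hx) (hT0 x h).1
  · intro x hx
    have hxc : x ∈ closedBall p (3 / 4 * r) := by
      by_contra h
      exact hx (by rw [(hout x h).fderiv_eq]; simp)
    refine ⟨hxc, ?_⟩
    by_contra! h
    apply hx
    rw [hder x (hsub hxc), theta_deriv_one (hT0 x h).2, (hT0 x h).1]; simp
  · intro x hx v
    rw [hder x (hsub hx)]
    simp only [_root_.add_apply, _root_.smul_apply, smul_eq_mul]
    refine (abs_add_le _ _).trans ?_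
    rw [add_comm]
    gcongr
    · rw [abs_mul, abs_of_nonneg (hT01 x).1]
      calc _ ≤ 1 * |fderiv ℝ ξ x v| := by gcongr; exact (hT01 x).2
        _ ≤ C0 / (r/2) * ‖v‖ := by rw [one_mul]; exact hξb x v
        _ ≤ _ := by gcongr; exact le_max_left _ _
    · rw [abs_mul, abs_mul, abs_of_nonneg (hξ01 x).1, abs_div, abs_of_pos hε]
      calc _ ≤ 1 * (Ct / ε * |fderiv ℝ g x v|) := by
            gcongr
            · exact (hξ01 x).2
            · exact htb _
        _ ≤ _ := by rw [one_mul]; gcongr; exact le_max_right _ _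

lemma compact_ge {Q : Set (EuclideanSpace ℝ (Fin n))} (hQ : IsCompact Q)
    {F : EuclideanSpace ℝ (Fin n) → ℝ} (hF : ContinuousOn F Q) (δ : ℝ) :
    IsCompact {x ∈ Q | δ ≤ F x} :=
  hQ.of_isClosed_subset (hF.preimage_isClosed_of_isClosed hQ.isClosed isClosed_Ici)
    (fun _ hx => hx.1)

lemma prodcut {ι : Type*} [Fintype ι] [DecidableEq ι]
    (h : ι → EuclideanSpace ℝ (Fin n) → ℝ) (hC : ∀ i, ContDiff ℝ 1 (h i))
    (h01 : ∀ i x, 0 ≤ h i x ∧ h i x ≤ 1)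
    (X : EuclideanSpace ℝ (Fin n) → EuclideanSpace ℝ (Fin n))
    (W : Set (EuclideanSpace ℝ (Fin n))) (hW : MeasurableSet W)
    (B : ι → Set (EuclideanSpace ℝ (Fin n))) (hB : ∀ i, MeasurableSet (B i))
    (c : ι → ℝ)
    (hs : ∀ i, ∀ x ∈ W, h i x ≠ 0 → x ∈ B i)
    (hd : ∀ i, ∀ x ∈ W, (∏ j ∈ Finset.univ.erase i, (1 - h j x)) * |fderiv ℝ (h i) x (X x)|
      ≤ (B i).indicator (fun _ => c i) x) :
    ∃ χ : EuclideanSpace ℝ (Fin n) → ℝ, ContDiff ℝ 1 χ ∧ (∀ x, 0 ≤ χ x ∧ χ x ≤ 1) ∧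
      (∀ x i, h i x = 1 → χ x = 0) ∧
      volume {x ∈ W | χ x ≠ 1} ≤ ∑ i, volume (B i) ∧
      ∫⁻ x in W, ENNReal.ofReal |fderiv ℝ χ x (X x)| ≤ ∑ i, ENNReal.ofReal (c i) * volume (B i) := by
  refine ⟨fun x => ∏ i, (1 - h i x), contDiff_prod fun i _ => contDiff_const.sub (hC i), ?_, ?_, ?_, ?_⟩
  · intro x
    exact ⟨Finset.prod_nonneg fun i _ => sub_nonneg.2 (h01 i x).2,
      Finset.prod_le_one (fun i _ => sub_nonneg.2 (h01 i x).2)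
        (fun i _ => by linarith [(h01 i x).1])⟩
  · intro x i hi
    exact Finset.prod_eq_zero (Finset.mem_univ i) (by rw [hi]; ring)
  · refine le_trans (measure_mono ?_) (measure_biUnion_finset_le Finset.univ B)
    rintro x ⟨hx, hne⟩
    by_contra hcon
    apply hne
    refine Finset.prod_eq_one fun i _ => ?_
    have : h i x = 0 := by
      by_contra h0
      exact hcon (mem_biUnion (Finset.mem_coe.2 (Finset.mem_univ i)) (hs i x hx h0))
    rw [this, sub_zero]
  · have hpt : ∀ x ∈ W, ENNReal.ofReal |fderiv ℝ (fun x => ∏ i, (1 - h i x)) x (X x)| ≤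
        ∑ i, (B i).indicator (fun _ => ENNReal.ofReal (c i)) x := by
      intro x hx
      have hder : HasFDerivAt (fun x => ∏ i, (1 - h i x))
          (∑ i, (∏ j ∈ Finset.univ.erase i, (1 - h j x)) • (-(fderiv ℝ (h i) x))) x :=
        HasFDerivAt.finsetProd fun i _ =>
          (((hC i).differentiable (by norm_num) x).hasFDerivAt.const_sub 1)
      rw [hder.fderiv]
      have h1 : |(∑ i, (∏ j ∈ Finset.univ.erase i, (1 - h j x)) • (-(fderiv ℝ (h i) x))) (X x)|
          ≤ ∑ i, (B i).indicator (fun _ => c i) x := by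
        rw [_root_.sum_apply]
        refine (Finset.abs_sum_le_sum_abs _ _).trans (Finset.sum_le_sum fun i _ => ?_)
        simp only [_root_.smul_apply, _root_.neg_apply, smul_eq_mul, abs_mul, abs_neg]
        rw [abs_of_nonneg (Finset.prod_nonneg fun j _ => sub_nonneg.2 (h01 j x).2)]
        exact hd i x hx
      refine (ENNReal.ofReal_le_ofReal h1).trans ?_
      rw [ENNReal.ofReal_sum_of_nonneg]
      · refine Finset.sum_le_sum fun i _ => ?_
        by_cases hxB : x ∈ B i <;> simp [hxB]
      · intro i _
        refine le_trans ?_ (hd i x hx)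
        exact mul_nonneg (Finset.prod_nonneg fun j _ => sub_nonneg.2 (h01 j x).2) (abs_nonneg _)
    calc _ ≤ ∫⁻ x in W, ∑ i, (B i).indicator (fun _ => ENNReal.ofReal (c i)) x :=
          setLIntegral_mono' hW hpt
      _ = ∑ i, ∫⁻ x in W, (B i).indicator (fun _ => ENNReal.ofReal (c i)) x :=
          lintegral_finsetSum _ fun i _ => measurable_const.indicator (hB i)
      _ ≤ ∑ i, ∫⁻ x, (B i).indicator (fun _ => ENNReal.ofReal (c i)) x :=
          Finset.sum_le_sum fun i _ => setLIntegral_le_lintegral _ _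
      _ = _ := by
          refine Finset.sum_congr rfl fun i _ => ?_
          rw [lintegral_indicator_const (hB i)]

/-- Local chart data near a boundary point. -/
structure BChart (Ω : Set (EuclideanSpace ℝ (Fin n)))
    (η : EuclideanSpace ℝ (Fin n) → EuclideanSpace ℝ (Fin n))
    (p : EuclideanSpace ℝ (Fin n)) where
  V : Set (EuclideanSpace ℝ (Fin n))
  g : EuclideanSpace ℝ (Fin n) → ℝ
  r : ℝ
  CL : ℝ
  Cc : ℝ
  hV : IsOpen V
  hpV : p ∈ V
  hg : ContDiffOn ℝ 1 g V
  hgrad : ∀ x ∈ V, gradient g x ≠ 0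
  hΩV : Ω ∩ V = {x ∈ V | g x < 0}
  hη : η p = -(‖gradient g p‖⁻¹ • gradient g p)
  hr : 0 < r
  hrV : ball p r ⊆ V
  hCL : 0 ≤ CL
  hlayer : ∀ ε > 0, volume {x ∈ ball p r | -ε < g x ∧ g x < 0} ≤ ENNReal.ofReal (CL * ε)
  hCc : 0 ≤ Cc
  hh : ∀ ε > 0, ∃ h : EuclideanSpace ℝ (Fin n) → ℝ, ContDiff ℝ 1 h ∧
      (∀ x, 0 ≤ h x ∧ h x ≤ 1) ∧ (∀ x ∈ closedBall p (r/2), -ε < g x → h x = 1) ∧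
      (∀ x, h x ≠ 0 → x ∈ closedBall p (3 / 4 * r) ∧ -(2 * ε) < g x) ∧
      (∀ x, fderiv ℝ h x ≠ 0 → x ∈ closedBall p (3 / 4 * r) ∧ -(2 * ε) < g x) ∧
      (∀ x ∈ closedBall p (3 / 4 * r), ∀ v,
        |fderiv ℝ h x v| ≤ Cc * ‖v‖ + Cc / ε * |fderiv ℝ g x v|)

lemma exists_chart (Ω : Set (EuclideanSpace ℝ (Fin n)))
    (η : EuclideanSpace ℝ (Fin n) → EuclideanSpace ℝ (Fin n))
    (hΩ : IsCkDomainWithNormal 1 Ω η) (p : EuclideanSpace ℝ (Fin n)) (hp : p ∈ frontier Ω) :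
    Nonempty (BChart Ω η p) := by
  obtain ⟨V, g, hV, hpV, hg, hgrad, hΩV, hη⟩ := hΩ.2.2.2 p hp
  have hg' : ContDiffOn ℝ 1 g V := by exact_mod_cast hg
  obtain ⟨r, hr, hrV, CL, hCL, hl⟩ := layer g V hV p hpV hg' (hgrad p hpV)
  obtain ⟨Cc, hCc, hh⟩ := chart_h g V hV p hg' r hr hrV
  exact ⟨⟨V, g, r, CL, Cc, hV, hpV, hg', hgrad, hΩV, hη, hr, hrV, hCL, hl, hCc, hh⟩⟩

lemma eps_small {A t : ℝ} (_hA : 0 ≤ A) (ht : 0 < t) :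
    ∀ᶠ s in 𝓝[>] (0:ℝ), A * s ≤ t := by
  have : Tendsto (fun s : ℝ => A * s) (𝓝[>] 0) (𝓝 (A * 0)) :=
    ((continuous_const.mul continuous_id).tendsto 0).mono_left nhdsWithin_le_nhds
  rw [mul_zero] at this
  exact (this.eventually_lt_const ht).mono fun _ h => h.le

lemma chart_char {Ω : Set (EuclideanSpace ℝ (Fin n))} (hΩo : IsOpen Ω)
    {η : EuclideanSpace ℝ (Fin n) → EuclideanSpace ℝ (Fin n)}
    {p q : EuclideanSpace ℝ (Fin n)} (cp : BChart Ω η p) (cq : BChart Ω η q)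
    (hq : q ∈ frontier Ω) (hqV : q ∈ cp.V) (v : EuclideanSpace ℝ (Fin n))
    (hv : ⟪v, η q⟫ = 0) : fderiv ℝ cp.g q v = 0 := by
  have hqn : q ∉ Ω := by
    rw [hΩo.frontier_eq] at hq; exact hq.2
  have hqc : q ∈ closure Ω := frontier_subset_closure hq
  have b1 := bdry_zero cp.g cp.V Ω cp.hV cp.hg.continuousOn cp.hΩV q hqV
  have b2 := bdry_zero cq.g cq.V Ω cq.hV cq.hg.continuousOn cq.hΩV q cq.hpV
  refine parallel cq.g cp.g cq.V cp.V Ω q (cq.hV.mem_nhds cq.hpV) (cp.hV.mem_nhds hqV)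
    ((cq.hg.contDiffAt (cq.hV.mem_nhds cq.hpV)).differentiableAt (by norm_num))
    ((cp.hg.contDiffAt (cp.hV.mem_nhds hqV)).differentiableAt (by norm_num))
    cq.hΩV cp.hΩV (le_antisymm (b2.1 hqc) (b2.2 hqn)) (le_antisymm (b1.1 hqc) (b1.2 hqn))
    (cq.hgrad q cq.hpV) v ?_
  have hne := cq.hgrad q cq.hpV
  rw [cq.hη, inner_neg_right, inner_smul_right, neg_eq_zero, mul_eq_zero] at hv
  rw [← inner_gradient_left, real_inner_comm]
  exact hv.resolve_left (inv_ne_zero (norm_ne_zero_iff.2 hne))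

lemma cutoff (n : ℕ) (hn : 1 ≤ n) : ∃ C1 : ℝ, 0 ≤ C1 ∧ ∀ (Ω : Set (EuclideanSpace ℝ (Fin n)))
    (η : EuclideanSpace ℝ (Fin n) → EuclideanSpace ℝ (Fin n))
    (_ : IsCkDomainWithNormal 1 Ω η) (X : EuclideanSpace ℝ (Fin n) → EuclideanSpace ℝ (Fin n))
    (_ : ContinuousOn X (closure Ω)) (Cb : ℝ) (_ : 0 ≤ Cb) (_ : ∀ x ∈ closure Ω, ‖X x‖ ≤ Cb)
    (ρ : ℝ) (S : Set (EuclideanSpace ℝ (Fin n)))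
    (_ : (μH[(n:ℝ) - 1] : Measure (EuclideanSpace ℝ (Fin n))) S ≠ ∞)
    (_ : ∀ q ∈ frontier Ω, q ∈ closedBall 0 ρ → ⟪X q, η q⟫ ≠ 0 → q ∈ S)
    (τ : ℝ) (_ : 0 < τ), ∃ χ : EuclideanSpace ℝ (Fin n) → ℝ, ContDiff ℝ 1 χ ∧
      (∀ x, 0 ≤ χ x ∧ χ x ≤ 1) ∧
      (∀ q ∈ frontier Ω, q ∈ closedBall 0 ρ → ∀ᶠ x in 𝓝 q, χ x = 0) ∧
      volume {x ∈ Ω ∩ closedBall 0 ρ | χ x ≠ 1} ≤ ENNReal.ofReal τ ∧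
      ∫⁻ x in Ω ∩ closedBall 0 ρ, ENNReal.ofReal |fderiv ℝ χ x (X x)| ≤
        ENNReal.ofReal (C1 * Cb *
          ((μH[(n:ℝ) - 1] : Measure (EuclideanSpace ℝ (Fin n))) S).toReal + τ) := by
  obtain ⟨C0, hC0, hball⟩ := ball_h n
  set ω := (volume (ball (0 : EuclideanSpace ℝ (Fin n)) 1)).toReal with hω
  have hω0 : 0 ≤ ω := ENNReal.toReal_nonneg
  set C1 := C0 * ω * 2 ^ n with hC1
  have hC10 : 0 ≤ C1 := by positivity
  refine ⟨C1, hC10, ?_⟩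
  intro Ω η hΩ X hX Cb hCb hXb ρ S hS hSS τ hτ
  have hΩo : IsOpen Ω := hΩ.2.1
  set H := ((μH[(n:ℝ) - 1] : Measure (EuclideanSpace ℝ (Fin n))) S).toReal with hH
  have hH0 : 0 ≤ H := ENNReal.toReal_nonneg
  have hd0 : 0 ≤ (n:ℝ) - 1 := by
    have : (1:ℝ) ≤ n := by exact_mod_cast hn
    linarith
  set K := frontier Ω ∩ closedBall (0 : EuclideanSpace ℝ (Fin n)) ρ with hK
  have hKc : IsCompact K := (isCompact_closedBall _ _).inter_left isClosed_frontier
  have hKcl : K ⊆ closure Ω := fun x hx => frontier_subset_closure hx.1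
  let ch : ∀ p : K, BChart Ω η p.1 := fun p => Classical.choice (exists_chart Ω η hΩ p.1 p.2.1)
  obtain ⟨T, hT⟩ := hKc.elim_nhds_subcover' (fun x hx => ball x ((ch ⟨x, hx⟩).r / 2))
    (fun x hx => ball_mem_nhds _ (half_pos (ch ⟨x, hx⟩).hr))
  have hsub : ∀ p : K, closedBall p.1 (3 / 4 * (ch p).r) ⊆ (ch p).V := fun p =>
    (closedBall_subset_ball (by linarith [(ch p).hr])).trans (ch p).hrV
  have hFc : ∀ p : K, ContinuousOn (fun x => |fderiv ℝ (ch p).g x (X x)|)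
      (closure Ω ∩ (ch p).V) := fun p =>
    ((((ch p).hg.continuousOn_fderiv_of_isOpen (ch p).hV le_rfl).mono inter_subset_right).clm_apply
      (hX.mono inter_subset_left)).abs
  set A := ∑ p ∈ T, (ch p).CL * (ch p).Cc with hA
  have hA0 : 0 ≤ A := Finset.sum_nonneg fun p _ => mul_nonneg (ch p).hCL (ch p).hCc
  set B := ∑ p ∈ T, (ch p).CL with hB
  have hB0 : 0 ≤ B := Finset.sum_nonneg fun p _ => (ch p).hCL
  -- choice of the small parameters
  obtain ⟨δ, hδ1, hδ⟩ : ∃ δ : ℝ, (2 * A) * δ ≤ τ / 3 ∧ 0 < δ :=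
    ((eps_small (by positivity) (by positivity : 0 < τ / 3)).and self_mem_nhdsWithin).exists
  obtain ⟨σ, ⟨⟨hσ1, hσ2⟩, hσ3⟩, hσ⟩ : ∃ σ : ℝ, (((C1 * Cb) * σ ≤ τ / 3 ∧ 1 * σ ≤ 1) ∧
      (ω * 2 ^ n * (H + 1)) * σ ≤ τ / 2) ∧ 0 < σ :=
    ((((eps_small (by positivity) (by positivity : 0 < τ / 3)).and
      (eps_small (by positivity) one_pos)).and
      (eps_small (by positivity) (by positivity : 0 < τ / 2))).and self_mem_nhdsWithin).exists
  rw [one_mul] at hσ2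
  obtain ⟨J, c, r, hr, hSc, hsum⟩ := hcover ((n:ℝ) - 1) hd0 S hS σ hσ
  -- finitely many balls cover the bad boundary part
  set D : Set (EuclideanSpace ℝ (Fin n)) := ⋃ p ∈ T,
    {x ∈ K ∩ closedBall p.1 (3 / 4 * (ch p).r) | δ ≤ |fderiv ℝ (ch p).g x (X x)|} with hD
  have hDc : IsCompact D := T.isCompact_biUnion fun p _ =>
    compact_ge (hKc.inter_right isClosed_closedBall)
      ((hFc p).mono (inter_subset_inter hKcl (hsub p))) δ
  have hDS : D ⊆ ⋃ i ∈ J, ball (c i) (r i) := by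
    refine Subset.trans ?_ hSc
    intro q hq
    simp only [hD, mem_iUnion] at hq
    obtain ⟨p, _, ⟨hqK, hqp⟩, hqδ⟩ := hq
    refine hSS q hqK.1 hqK.2 fun h0 => ?_
    rw [chart_char hΩo (ch p) (ch ⟨q, hqK⟩) hqK.1 (hsub p hqp) (X q) h0] at hqδ
    rw [abs_zero] at hqδ
    linarith
  obtain ⟨F', hF'J, hF'f, hF'c⟩ := hDc.elim_finite_subcover_image (fun i _ => isOpen_ball) hDS
  set F := hF'f.toFinset with hF
  have hFJ : (F : Set ℕ) ⊆ J := by rw [hF, Set.Finite.coe_toFinset]; exact hF'J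
  have hDF : D ⊆ ⋃ i ∈ F, ball (c i) (r i) := by
    intro x hx
    have := hF'c hx
    simp only [mem_iUnion] at this ⊢
    simpa [hF] using this
  -- choice of ε
  have hε : ∀ p ∈ T, ∃ e : ℝ, 0 < e ∧ ∀ x ∈ closure Ω, x ∈ closedBall 0 ρ →
      x ∈ closedBall p.1 (3 / 4 * (ch p).r) → x ∉ (⋃ i ∈ F, ball (c i) (r i)) →
      δ ≤ |fderiv ℝ (ch p).g x (X x)| → (ch p).g x ≤ -e := by
    intro p hp
    set Q := {x ∈ (closedBall (0 : EuclideanSpace ℝ (Fin n)) ρ ∩ (closure Ω ∩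
      closedBall p.1 (3 / 4 * (ch p).r) ∩ (⋃ i ∈ F, ball (c i) (r i))ᶜ)) |
        δ ≤ |fderiv ℝ (ch p).g x (X x)|} with hQ
    have hQc : IsCompact Q := by
      refine compact_ge ((isCompact_closedBall _ _).inter_right
        ((isClosed_closure.inter isClosed_closedBall).inter
          (isOpen_biUnion fun i _ => isOpen_ball).isClosed_compl)) ((hFc p).mono ?_) δ
      rintro x ⟨_, ⟨h1, h2⟩, _⟩
      exact ⟨h1, hsub p h2⟩
    have hneg : ∀ x ∈ Q, (ch p).g x < 0 := by
      rintro x ⟨⟨h0, ⟨h1, h2⟩, h3⟩, h4⟩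
      have hxV := hsub p h2
      by_cases hxΩ : x ∈ Ω
      · have : x ∈ Ω ∩ (ch p).V := ⟨hxΩ, hxV⟩
        rw [(ch p).hΩV] at this
        exact this.2
      · exfalso
        apply h3
        apply hDF
        have hxf : x ∈ frontier Ω := by rw [hΩo.frontier_eq]; exact ⟨h1, hxΩ⟩
        simp only [hD, mem_iUnion]
        exact ⟨p, hp, ⟨⟨hxf, h0⟩, h2⟩, h4⟩
    rcases Q.eq_empty_or_nonempty with hQe | hQn
    · refine ⟨1, one_pos, fun x h1 h0 h2 h3 h4 => ?_⟩
      have : x ∈ Q := ⟨⟨h0, ⟨h1, h2⟩, h3⟩, h4⟩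
      rw [hQe] at this
      exact this.elim
    · obtain ⟨m, hm, hmax⟩ := hQc.exists_isMaxOn hQn (f := (ch p).g)
        ((ch p).hg.continuousOn.mono fun x hx => hsub p hx.1.2.1.2)
      refine ⟨-(ch p).g m, neg_pos.2 (hneg m hm), fun x h1 h0 h2 h3 h4 => ?_⟩
      rw [neg_neg]
      exact hmax ⟨⟨h0, ⟨h1, h2⟩, h3⟩, h4⟩
  choose! e he0 he using hε
  have heps : ∀ᶠ ε in 𝓝[>] (0:ℝ), ∀ p ∈ T, 2 * ε ≤ e p :=
    (Finset.eventually_all T).2 fun p hp => eps_small zero_le_two (he0 p hp)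
  obtain ⟨ε, ⟨⟨hε1, hε2⟩, hε3⟩, hε⟩ : ∃ ε : ℝ, (((∀ p ∈ T, 2 * ε ≤ e p) ∧
      (2 * A * Cb) * ε ≤ τ / 3) ∧ (2 * B) * ε ≤ τ / 2) ∧ 0 < ε :=
    (((heps.and (eps_small (by positivity) (by positivity : 0 < τ / 3))).and
      (eps_small (by positivity) (by positivity : 0 < τ / 2))).and self_mem_nhdsWithin).exists
  -- the functions
  choose hc hcC hc01 hc1 hcs hcd hcb using fun p : K => (ch p).hh ε hε
  choose hb hbC hb01 hb1 hbs hbd hbb using fun i : ℕ => hball (c i) (r i) (hr i).1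
  set W := Ω ∩ closedBall (0 : EuclideanSpace ℝ (Fin n)) ρ with hW
  have hWm : MeasurableSet W := hΩo.measurableSet.inter isClosed_closedBall.measurableSet
  let LB : K → Set (EuclideanSpace ℝ (Fin n)) := fun p =>
    {x ∈ ball p.1 (ch p).r | -(2 * ε) < (ch p).g x ∧ (ch p).g x < 0}
  have hLBv : ∀ p, volume (LB p) ≤ ENNReal.ofReal ((ch p).CL * (2 * ε)) := fun p =>
    (ch p).hlayer (2 * ε) (by positivity)
  have hLBm : ∀ p, MeasurableSet (LB p) := fun p =>
    (((ch p).hg.continuousOn.mono (ch p).hrV).isOpen_inter_preimage isOpen_ball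
      (isOpen_Ioo (a := -(2 * ε)) (b := 0))).measurableSet
  have hmemL : ∀ p : K, ∀ x ∈ W, x ∈ closedBall p.1 (3 / 4 * (ch p).r) →
      -(2 * ε) < (ch p).g x → x ∈ LB p := by
    intro p x hx h1 h2
    refine ⟨closedBall_subset_ball (by linarith [(ch p).hr]) h1, h2, ?_⟩
    have : x ∈ Ω ∩ (ch p).V := ⟨hx.1, hsub p h1⟩
    rw [(ch p).hΩV] at this
    exact this.2
  have hBv : ∀ i, volume (ball (c i) (2 * r i)) = ENNReal.ofReal (ω * 2 ^ n * r i ^ n) := by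
    intro i
    rw [Measure.addHaar_ball_of_pos volume _ (by linarith [(hr i).1]), finrank_euclideanSpace_fin,
      ← ENNReal.ofReal_toReal (measure_ball_lt_top (x := (0 : EuclideanSpace ℝ (Fin n)))).ne,
      ← hω, ← ENNReal.ofReal_mul (by have := (hr i).1; positivity)]
    congr 1; ring
  classical
  obtain ⟨χ, hχC, hχ01, hχ0, hχv, hχi⟩ := prodcut (ι := T ⊕ F)
    (Sum.elim (fun p => hc p.1) (fun i => hb i.1))
    (by rintro (p | i); exacts [hcC p.1, hbC i.1])
    (by rintro (p | i); exacts [hc01 p.1, hb01 i.1]) X W hWm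
    (Sum.elim (fun p => LB p.1) (fun i => ball (c i.1) (2 * r i.1)))
    (by rintro (p | i); exacts [hLBm p.1, isOpen_ball.measurableSet])
    (Sum.elim (fun p => (ch p.1).Cc * Cb + (ch p.1).Cc / ε * δ) (fun i => C0 / r i.1 * Cb))
    (by
      rintro (p | i) x hx hne
      · exact hmemL p.1 x hx (hcs p.1 x hne).1 (hcs p.1 x hne).2
      · exact closedBall_subset_ball (by linarith [(hr i.1).1]) (hbs i.1 x hne))
    (by
      have hxc : ∀ x ∈ W, x ∈ closure Ω := fun x hx => subset_closure hx.1
      rintro (p | i) x hx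
      · simp only [Sum.elim_inl]
        have hCcp := (ch p.1).hCc
        by_cases h0 : fderiv ℝ (hc p.1) x = 0
        · rw [h0]; simp only [_root_.zero_apply, abs_zero, mul_zero]
          exact indicator_nonneg (fun _ _ => by positivity) x
        have hin := hcd p.1 x h0
        rw [indicator_of_mem (hmemL p.1 x hx hin.1 hin.2)]
        by_cases hxF : x ∈ ⋃ i ∈ F, ball (c i) (r i)
        · simp only [mem_iUnion] at hxF
          obtain ⟨i, hi, hxi⟩ := hxF
          rw [Finset.prod_eq_zero (i := Sum.inr ⟨i, hi⟩)]
          · rw [zero_mul]; positivity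
          · simp
          · simp only [Sum.elim_inr]
            rw [hb1 i x (ball_subset_closedBall hxi)]; ring
        · have hlt : |fderiv ℝ (ch p.1).g x (X x)| < δ := by
            by_contra! hge
            have := he p.1 p.2 x (hxc x hx) hx.2 hin.1 hxF hge
            linarith [hε1 p.1 p.2]
          have hpr : (∏ j ∈ Finset.univ.erase (Sum.inl p),
              (1 - (Sum.elim (fun p : T => hc p.1) (fun i : F => hb i.1) j) x)) ≤ 1 := by
            refine Finset.prod_le_one ?_ ?_
            · rintro (q | i) _
              · exact sub_nonneg.2 (hc01 q.1 x).2
              · exact sub_nonneg.2 (hb01 i.1 x).2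
            · rintro (q | i) _
              · simp only [Sum.elim_inl]; linarith [(hc01 q.1 x).1]
              · simp only [Sum.elim_inr]; linarith [(hb01 i.1 x).1]
          calc _ ≤ 1 * |fderiv ℝ (hc p.1) x (X x)| :=
                mul_le_mul_of_nonneg_right hpr (abs_nonneg _)
            _ ≤ (ch p.1).Cc * ‖X x‖ + (ch p.1).Cc / ε * |fderiv ℝ (ch p.1).g x (X x)| := by
                rw [one_mul]; exact hcb p.1 x hin.1 (X x)
            _ ≤ _ := by
                gcongr
                exact hXb x (hxc x hx)
      · simp only [Sum.elim_inr]
        have hri := (hr i.1).1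
        by_cases h0 : fderiv ℝ (hb i.1) x = 0
        · rw [h0]; simp only [_root_.zero_apply, abs_zero, mul_zero]
          exact indicator_nonneg (fun _ _ => by positivity) x
        have hin := hbd i.1 x h0
        rw [indicator_of_mem (closedBall_subset_ball (by linarith) hin)]
        have hpr : (∏ j ∈ Finset.univ.erase (Sum.inr i),
            (1 - (Sum.elim (fun p : T => hc p.1) (fun i : F => hb i.1) j) x)) ≤ 1 := by
          refine Finset.prod_le_one ?_ ?_
          · rintro (q | i) _
            · exact sub_nonneg.2 (hc01 q.1 x).2
            · exact sub_nonneg.2 (hb01 i.1 x).2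
          · rintro (q | i) _
            · simp only [Sum.elim_inl]; linarith [(hc01 q.1 x).1]
            · simp only [Sum.elim_inr]; linarith [(hb01 i.1 x).1]
        calc _ ≤ 1 * |fderiv ℝ (hb i.1) x (X x)| :=
              mul_le_mul_of_nonneg_right hpr (abs_nonneg _)
          _ ≤ C0 / r i.1 * ‖X x‖ := by
              rw [one_mul]; exact hbb i.1 x (X x)
          _ ≤ _ := by
              gcongr
              exact hXb x (hxc x hx))
  have hpow : ∀ i, r i ^ n = r i * r i ^ ((n:ℝ) - 1) := by
    intro i
    have := (hr i).1
    rw [Real.rpow_sub_one this.ne', Real.rpow_natCast]; field_simp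
  have hrp : ∀ i, 0 ≤ r i ^ ((n:ℝ) - 1) := fun i => Real.rpow_nonneg (hr i).1.le _
  have hsF := hsum F hFJ
  refine ⟨χ, hχC, hχ01, ?_, ?_, ?_⟩
  · intro q hq hqρ
    have hqK : q ∈ K := ⟨hq, hqρ⟩
    have := hT hqK
    simp only [mem_iUnion] at this
    obtain ⟨p, hp, hqp⟩ := this
    have hqV : q ∈ (ch p).V := (ch p).hrV (ball_subset_ball (by linarith [(ch p).hr]) hqp)
    have hg0 : 0 ≤ (ch p).g q :=
      (bdry_zero (ch p).g (ch p).V Ω (ch p).hV (ch p).hg.continuousOn (ch p).hΩV q hqV).2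
        (by rw [hΩo.frontier_eq] at hq; exact hq.2)
    have hev : ∀ᶠ x in 𝓝 q, -ε < (ch p).g x :=
      ((ch p).hg.continuousOn.continuousAt ((ch p).hV.mem_nhds hqV)).eventually_const_lt
        (by linarith)
    filter_upwards [hev, isOpen_ball.mem_nhds hqp] with x hx1 hx2
    exact hχ0 x (Sum.inl ⟨p, hp⟩) (hc1 p x (ball_subset_closedBall hx2) hx1)
  · refine hχv.trans ?_
    rw [Fintype.sum_sum_type]
    simp only [Sum.elim_inl, Sum.elim_inr]
    rw [Finset.sum_coe_sort T (fun p => volume (LB p)),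
      Finset.sum_coe_sort F (fun i => volume (ball (c i) (2 * r i)))]
    have h1 : ∑ p ∈ T, volume (LB p) ≤ ENNReal.ofReal (τ / 2) := by
      refine (Finset.sum_le_sum fun p _ => hLBv p).trans ?_
      rw [← ENNReal.ofReal_sum_of_nonneg (fun p _ => mul_nonneg (ch p).hCL (by positivity))]
      apply ENNReal.ofReal_le_ofReal
      rw [← Finset.sum_mul]
      linarith
    have h2 : ∑ i ∈ F, volume (ball (c i) (2 * r i)) ≤ ENNReal.ofReal (τ / 2) := by
      simp only [hBv]
      rw [← ENNReal.ofReal_sum_of_nonneg (fun i _ => by have := (hr i).1; positivity)]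
      apply ENNReal.ofReal_le_ofReal
      calc ∑ i ∈ F, ω * 2 ^ n * r i ^ n ≤ ∑ i ∈ F, ω * 2 ^ n * σ * r i ^ ((n:ℝ) - 1) := by
            refine Finset.sum_le_sum fun i _ => ?_
            rw [hpow, ← mul_assoc]
            have := hrp i
            gcongr
            exact (hr i).2
        _ = ω * 2 ^ n * σ * ∑ i ∈ F, r i ^ ((n:ℝ) - 1) := by rw [Finset.mul_sum]
        _ ≤ ω * 2 ^ n * σ * (H + 1) := by gcongr; linarith
        _ ≤ τ / 2 := by linarith
    calc _ ≤ ENNReal.ofReal (τ / 2) + ENNReal.ofReal (τ / 2) := add_le_add h1 h2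
      _ = _ := by rw [← ENNReal.ofReal_add (by positivity) (by positivity)]; congr 1; ring
  · refine hχi.trans ?_
    rw [Fintype.sum_sum_type]
    simp only [Sum.elim_inl, Sum.elim_inr]
    rw [Finset.sum_coe_sort T (fun p => ENNReal.ofReal ((ch p).Cc * Cb + (ch p).Cc / ε * δ) *
        volume (LB p)),
      Finset.sum_coe_sort F (fun i => ENNReal.ofReal (C0 / r i * Cb) *
        volume (ball (c i) (2 * r i)))]
    have h1 : ∑ p ∈ T, ENNReal.ofReal ((ch p).Cc * Cb + (ch p).Cc / ε * δ) * volume (LB p) ≤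
        ENNReal.ofReal (2 * (τ / 3)) := by
      have hnn : ∀ p, 0 ≤ (ch p).Cc * Cb + (ch p).Cc / ε * δ := fun p => by
        have := (ch p).hCc; positivity
      refine (Finset.sum_le_sum fun p _ => mul_le_mul_right (hLBv p) _).trans ?_
      simp only [← ENNReal.ofReal_mul (hnn _)]
      rw [← ENNReal.ofReal_sum_of_nonneg
        (fun p _ => mul_nonneg (hnn p) (mul_nonneg (ch p).hCL (by positivity)))]
      apply ENNReal.ofReal_le_ofReal
      calc _ = ∑ p ∈ T, ((ch p).CL * (ch p).Cc) * (2 * Cb * ε + 2 * δ) := by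
            refine Finset.sum_congr rfl fun p _ => ?_
            field_simp
        _ = A * (2 * Cb * ε + 2 * δ) := by rw [← Finset.sum_mul]
        _ ≤ _ := by linarith
    have h2 : ∑ i ∈ F, ENNReal.ofReal (C0 / r i * Cb) * volume (ball (c i) (2 * r i)) ≤
        ENNReal.ofReal (C1 * Cb * H + τ / 3) := by
      have hnn : ∀ i, 0 ≤ C0 / r i * Cb := fun i => by
        have := (hr i).1; positivity
      simp only [hBv, ← ENNReal.ofReal_mul (hnn _)]
      rw [← ENNReal.ofReal_sum_of_nonneg
        (fun i _ => mul_nonneg (hnn i) (by have := (hr i).1; positivity))]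
      apply ENNReal.ofReal_le_ofReal
      calc _ = ∑ i ∈ F, C1 * Cb * r i ^ ((n:ℝ) - 1) := by
            refine Finset.sum_congr rfl fun i _ => ?_
            have := (hr i).1
            rw [hpow, hC1]; field_simp
        _ = C1 * Cb * ∑ i ∈ F, r i ^ ((n:ℝ) - 1) := by rw [Finset.mul_sum]
        _ ≤ C1 * Cb * (H + σ) := by gcongr
        _ ≤ _ := by linarith
    calc _ ≤ ENNReal.ofReal (2 * (τ / 3)) + ENNReal.ofReal (C1 * Cb * H + τ / 3) := add_le_add h1 h2
      _ = _ := by rw [← ENNReal.ofReal_add (by positivity) (by positivity)]; congr 1; ring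

lemma test_fun {Ω : Set (EuclideanSpace ℝ (Fin n))} (hΩo : IsOpen Ω)
    (φ χ : EuclideanSpace ℝ (Fin n) → ℝ) (hφ : ContDiffOn ℝ 1 φ Ω) (hχ : ContDiff ℝ 1 χ) (ρ : ℝ)
    (hφ0 : ∀ x, x ∉ closedBall 0 ρ → φ x = 0)
    (hχ0 : ∀ q ∈ frontier Ω, q ∈ closedBall 0 ρ → ∀ᶠ x in 𝓝 q, χ x = 0) :
    IsTestOn Ω (Ω.indicator fun x => φ x * χ x) ∧
      ∀ x ∈ Ω, fderiv ℝ (Ω.indicator fun x => φ x * χ x) x =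
        φ x • fderiv ℝ χ x + χ x • fderiv ℝ φ x := by
  set Φ := Ω.indicator fun x => φ x * χ x with hΦ
  have hin : ∀ x ∈ Ω, Φ =ᶠ[𝓝 x] fun x => φ x * χ x := fun x hx => by
    filter_upwards [hΩo.mem_nhds hx] with y hy
    exact indicator_of_mem hy _
  have hout : ∀ x ∉ Ω, Φ =ᶠ[𝓝 x] 0 := by
    intro x hx
    by_cases hxc : x ∈ closure Ω
    · by_cases hxb : x ∈ closedBall (0 : EuclideanSpace ℝ (Fin n)) ρ
      · have hxf : x ∈ frontier Ω := by rw [hΩo.frontier_eq]; exact ⟨hxc, hx⟩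
        filter_upwards [hχ0 x hxf hxb] with y hy
        by_cases hyΩ : y ∈ Ω
        · simp [hΦ, hyΩ, hy]
        · simp [hΦ, hyΩ]
      · filter_upwards [isClosed_closedBall.isOpen_compl.mem_nhds hxb] with y hy
        by_cases hyΩ : y ∈ Ω
        · simp [hΦ, hyΩ, hφ0 y hy]
        · simp [hΦ, hyΩ]
    · filter_upwards [isClosed_closure.isOpen_compl.mem_nhds hxc] with y hy
      have hyΩ : y ∉ Ω := fun h => hy (subset_closure h)
      simp [hΦ, hyΩ]
  have hC : ContDiff ℝ 1 Φ := by
    rw [contDiff_iff_contDiffAt]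
    intro x
    by_cases hx : x ∈ Ω
    · exact ((hφ.contDiffAt (hΩo.mem_nhds hx)).mul hχ.contDiffAt).congr_of_eventuallyEq (hin x hx)
    · exact contDiffAt_const.congr_of_eventuallyEq (hout x hx)
  have hcs : HasCompactSupport Φ := by
    refine HasCompactSupport.intro (isCompact_closedBall 0 ρ) fun x hx => ?_
    by_cases hxΩ : x ∈ Ω
    · simp [hΦ, hxΩ, hφ0 x hx]
    · simp [hΦ, hxΩ]
  refine ⟨⟨hC.lipschitzWith_of_hasCompactSupport hcs one_ne_zero, hcs, ?_⟩, ?_⟩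
  · intro x hx
    by_contra hxΩ
    exact (notMem_tsupport_iff_eventuallyEq.2 (hout x hxΩ)) hx
  · intro x hx
    rw [(hin x hx).fderiv_eq]
    exact fderiv_fun_mul ((hφ.contDiffAt (hΩo.mem_nhds hx)).differentiableAt one_ne_zero)
      (hχ.differentiable one_ne_zero x)

lemma int_est {Ω : Set (EuclideanSpace ℝ (Fin n))} (hΩo : IsOpen Ω) (ρ : ℝ)
    (φ χ G Y : EuclideanSpace ℝ (Fin n) → ℝ) (P M L τ : ℝ) (hP : 0 ≤ P) (hL : 0 ≤ L) (hτ : 0 ≤ τ)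
    (hφc : ContinuousOn φ (closure Ω)) (hχc : Continuous χ) (hGc : ContinuousOn G (closure Ω))
    (hYc : ContinuousOn Y (closure Ω))
    (hφ0 : ∀ x, x ∉ closedBall 0 ρ → φ x = 0) (hG0 : ∀ x, x ∉ closedBall 0 ρ → G x = 0)
    (hφP : ∀ x, 0 ≤ φ x ∧ φ x ≤ P) (hχ01 : ∀ x, 0 ≤ χ x ∧ χ x ≤ 1)
    (hM : ∀ x ∈ Ω ∩ closedBall 0 ρ, |G x| ≤ M) (hM0 : 0 ≤ M)
    (hvol : volume {x ∈ Ω ∩ closedBall 0 ρ | χ x ≠ 1} ≤ ENNReal.ofReal τ)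
    (hYint : ∫⁻ x in Ω ∩ closedBall 0 ρ, ENNReal.ofReal |Y x| ≤ ENNReal.ofReal L)
    (hle : ∫ x in Ω, (φ x * Y x + χ x * G x) ≤ 0) :
    ∫ x in Ω ∩ closedBall 0 ρ, G x ≤ P * L + M * τ := by
  set W := Ω ∩ closedBall (0 : EuclideanSpace ℝ (Fin n)) ρ with hW
  have hWm : MeasurableSet W := hΩo.measurableSet.inter isClosed_closedBall.measurableSet
  have hI : ∀ F : EuclideanSpace ℝ (Fin n) → ℝ, ContinuousOn F (closure Ω) →
      IntegrableOn F W := by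
    intro F hF
    have : IsCompact (closure Ω ∩ closedBall (0 : EuclideanSpace ℝ (Fin n)) ρ) :=
      (isCompact_closedBall _ _).inter_left isClosed_closure
    exact ((hF.mono inter_subset_left).integrableOn_compact this).mono_set
      (inter_subset_inter_left _ subset_closure)
  have e1 : ∫ x in Ω, (φ x * Y x + χ x * G x) = ∫ x in W, (φ x * Y x + χ x * G x) := by
    refine setIntegral_eq_of_subset_of_forall_diff_eq_zero hΩo.measurableSet inter_subset_left ?_
    rintro x ⟨hx, hxW⟩
    have hxb : x ∉ closedBall (0 : EuclideanSpace ℝ (Fin n)) ρ := fun h => hxW ⟨hx, h⟩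
    rw [hφ0 x hxb, hG0 x hxb]; ring
  rw [e1] at hle
  have i1 := hI (fun x => φ x * Y x) (hφc.mul hYc)
  have i2 := hI (fun x => χ x * G x) (hχc.continuousOn.mul hGc)
  have i3 := hI G hGc
  have i4 := hI (fun x => |Y x|) hYc.abs
  rw [integral_add i1 i2] at hle
  have b1 : ∫ x in W, |Y x| ≤ L := by
    rw [integral_eq_lintegral_of_nonneg_ae (ae_of_all _ fun _ => abs_nonneg _)
      i4.aestronglyMeasurable]
    exact ENNReal.toReal_le_of_le_ofReal hL hYint
  have b2 : -(P * L) ≤ ∫ x in W, φ x * Y x := by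
    have : ∫ x in W, -(P * |Y x|) ≤ ∫ x in W, φ x * Y x := by
      refine integral_mono (i4.const_mul P).neg i1 fun x => ?_
      have h1 := hφP x
      have h2 : |φ x * Y x| ≤ P * |Y x| := by
        rw [abs_mul, abs_of_nonneg h1.1]
        exact mul_le_mul_of_nonneg_right h1.2 (abs_nonneg _)
      exact (abs_le.1 h2).1
    rw [integral_neg, integral_const_mul] at this
    have := mul_le_mul_of_nonneg_left b1 hP
    linarith
  set Z := {x ∈ W | χ x ≠ 1} with hZ
  have hZm : MeasurableSet Z := hWm.inter (hχc.measurable (measurableSet_singleton (1:ℝ)).compl)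
  have hZW : Z ⊆ W := fun x hx => hx.1
  have b3 : ∫ x in W, (G x - χ x * G x) ≤ M * τ := by
    have : ∫ x in W, (G x - χ x * G x) = ∫ x in Z, (G x - χ x * G x) := by
      refine setIntegral_eq_of_subset_of_forall_diff_eq_zero hWm hZW ?_
      rintro x ⟨hx, hxZ⟩
      have : χ x = 1 := by by_contra h; exact hxZ ⟨hx, h⟩
      rw [this]; ring
    rw [this]
    have hZf : volume Z < ∞ := hvol.trans_lt ENNReal.ofReal_lt_top
    have hn := norm_setIntegral_le_of_norm_le_const (μ := volume) (C := M)
      (f := fun x => G x - χ x * G x) hZf (fun x hx => by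
        have h1 := hM x hx.1
        have h2 := hχ01 x
        have : G x - χ x * G x = (1 - χ x) * G x := by ring
        rw [this, Real.norm_eq_abs, abs_mul, abs_of_nonneg (by linarith)]
        calc (1 - χ x) * |G x| ≤ 1 * |G x| :=
              mul_le_mul_of_nonneg_right (by linarith) (abs_nonneg _)
          _ ≤ M := by linarith)
    refine (le_abs_self _).trans (hn.trans ?_)
    exact mul_le_mul_of_nonneg_left (ENNReal.toReal_le_of_le_ofReal hτ hvol) hM0
  rw [integral_sub i3 i2] at b3
  linarith

lemma energy_est (C0 C1 Cb : ℝ) (hC0 : 0 ≤ C0) (hC1 : 0 ≤ C1) (hCb0 : 0 ≤ Cb)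
    (hball : ∀ (c : EuclideanSpace ℝ (Fin n)) (r : ℝ), 0 < r →
      ∃ h : EuclideanSpace ℝ (Fin n) → ℝ, ContDiff ℝ 1 h ∧ (∀ x, 0 ≤ h x ∧ h x ≤ 1) ∧
        (∀ x ∈ closedBall c r, h x = 1) ∧ (∀ x, h x ≠ 0 → x ∈ closedBall c (3 / 2 * r)) ∧
        (∀ x, fderiv ℝ h x ≠ 0 → x ∈ closedBall c (3 / 2 * r)) ∧
        (∀ x v, |fderiv ℝ h x v| ≤ C0 / r * ‖v‖))
    (Ω : Set (EuclideanSpace ℝ (Fin n))) (hΩo : IsOpen Ω)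
    (a : ℝ → ℝ) (hac : ContinuousOn a (Ici 0)) (ha0 : ∀ t ≥ (0 : ℝ), 0 ≤ a t)
    (f : ℝ → ℝ)
    (u : EuclideanSpace ℝ (Fin n) → ℝ)
    (hu1 : ContDiffOn ℝ 1 u Ω) (hucl : ContinuousOn u (closure Ω))
    (Du : EuclideanSpace ℝ (Fin n) → EuclideanSpace ℝ (Fin n))
    (hDu : ∀ x ∈ Ω, Du x = gradient u x) (hDuc : ContinuousOn Du (closure Ω))
    (hsol : IsWeakSolution a f Ω u)
    (hfu : ∀ x ∈ Ω, f (u x) ≤ 0)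
    (hXb : ∀ x, ‖a ‖Du x‖ • Du x‖ ≤ Cb)
    (R : ℝ) (hR : 0 < R) (H : ℝ) (hH : 0 ≤ H)
    (hcut : ∀ τ : ℝ, 0 < τ → ∃ χ : EuclideanSpace ℝ (Fin n) → ℝ, ContDiff ℝ 1 χ ∧
      (∀ x, 0 ≤ χ x ∧ χ x ≤ 1) ∧
      (∀ q ∈ frontier Ω, q ∈ closedBall 0 (3 / 2 * R) → ∀ᶠ x in 𝓝 q, χ x = 0) ∧
      volume {x ∈ Ω ∩ closedBall 0 (3 / 2 * R) | χ x ≠ 1} ≤ ENNReal.ofReal τ ∧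
      ∫⁻ x in Ω ∩ closedBall 0 (3 / 2 * R), ENNReal.ofReal |fderiv ℝ χ x (a ‖Du x‖ • Du x)| ≤
        ENNReal.ofReal (C1 * Cb * H + τ)) :
    ∫ x in Ω ∩ {x | Real.sqrt (‖x‖ ^ 2 + u x ^ 2) ≤ R},
          a ‖gradient u x‖ * ‖gradient u x‖ ^ 2 ≤
      2 * (Real.pi * R * (C1 * Cb * H) + Real.pi * C0 * Cb *
        (volume (Ω ∩ closedBall 0 (3 / 2 * R))).toReal) := by
  obtain ⟨ζ, hζC, hζ01, hζ1, hζs, hζd, hζb⟩ := hball 0 R hR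
  set ρ := 3 / 2 * R with hρ
  set W := Ω ∩ closedBall (0 : EuclideanSpace ℝ (Fin n)) ρ with hW
  have hWm : MeasurableSet W := hΩo.measurableSet.inter isClosed_closedBall.measurableSet
  set X : EuclideanSpace ℝ (Fin n) → EuclideanSpace ℝ (Fin n) := fun x => a ‖Du x‖ • Du x with hX
  have haD : ContinuousOn (fun x => a ‖Du x‖) (closure Ω) :=
    hac.comp hDuc.norm fun x _ => norm_nonneg _
  have hXc : ContinuousOn X (closure Ω) := haD.smul hDuc
  let ψ : ℝ → ℝ := fun s => R * (Real.arctan (s / R) + Real.pi / 2)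
  let dψ : ℝ → ℝ := fun s => 1 / (1 + (s / R) ^ 2)
  have hψd : ∀ s, HasDerivAt ψ (dψ s) s := by
    intro s
    have h1 := (((hasDerivAt_id s).div_const R).arctan.add_const (Real.pi / 2)).const_mul R
    have h2 : R * (1 / (1 + (id s / R) ^ 2) * (1 / R)) = dψ s := by
      simp only [dψ, id]; field_simp
    rw [h2] at h1
    exact h1
  have hψC : ContDiff ℝ 1 ψ := by
    exact contDiff_const.mul ((Real.contDiff_arctan.comp (contDiff_id.div_const R)).add contDiff_const)
  have hdψc : Continuous dψ := by
    refine continuous_const.div (by fun_prop) fun s => ?_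
    positivity
  have hψb : ∀ s, 0 ≤ ψ s ∧ ψ s ≤ Real.pi * R := by
    intro s
    have h1 := Real.neg_pi_div_two_lt_arctan (s / R)
    have h2 := Real.arctan_lt_pi_div_two (s / R)
    constructor
    · exact mul_nonneg hR.le (by linarith)
    · simp only [ψ]; rw [mul_comm Real.pi]
      exact mul_le_mul_of_nonneg_left (by linarith) hR.le
  have hdψ0 : ∀ s, 0 ≤ dψ s := fun s => by simp only [dψ]; positivity
  have hdψh : ∀ s, |s| ≤ R → 1 / 2 ≤ dψ s := by
    intro s hs
    have h1 : (s / R) ^ 2 ≤ 1 := by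
      rw [sq_le_one_iff_abs_le_one, abs_div, abs_of_pos hR]
      exact (div_le_one hR).2 hs
    simp only [dψ]
    apply one_div_le_one_div_of_le (by positivity); linarith
  set φ : EuclideanSpace ℝ (Fin n) → ℝ := fun x => ζ x * ψ (u x) with hφ
  set E : EuclideanSpace ℝ (Fin n) → ℝ := fun x => ζ x * dψ (u x) * (a ‖Du x‖ * ‖Du x‖ ^ 2) with hE
  set N : EuclideanSpace ℝ (Fin n) → ℝ := fun x => ψ (u x) * fderiv ℝ ζ x (X x) with hN
  have hζdc : Continuous (fderiv ℝ ζ) := hζC.continuous_fderiv one_ne_zero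
  have hEc : ContinuousOn E (closure Ω) :=
    (hζC.continuous.continuousOn.mul (hdψc.comp_continuousOn hucl)).mul (haD.mul (hDuc.norm.pow 2))
  have hNc : ContinuousOn N (closure Ω) :=
    (hψC.continuous.comp_continuousOn hucl).mul (hζdc.continuousOn.clm_apply hXc)
  have hφc : ContinuousOn φ (closure Ω) :=
    hζC.continuous.continuousOn.mul (hψC.continuous.comp_continuousOn hucl)
  have hζ0 : ∀ x, x ∉ closedBall (0 : EuclideanSpace ℝ (Fin n)) ρ → ζ x = 0 := fun x hx => by
    by_contra h; exact hx (hζs x h)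
  have hζd0 : ∀ x, x ∉ closedBall (0 : EuclideanSpace ℝ (Fin n)) ρ → fderiv ℝ ζ x = 0 :=
    fun x hx => by by_contra h; exact hx (hζd x h)
  have hφ0 : ∀ x, x ∉ closedBall (0 : EuclideanSpace ℝ (Fin n)) ρ → φ x = 0 := fun x hx => by
    simp only [hφ, hζ0 x hx, zero_mul]
  have hG0 : ∀ x, x ∉ closedBall (0 : EuclideanSpace ℝ (Fin n)) ρ → E x + N x = 0 := fun x hx => by
    simp only [hE, hN, hζ0 x hx, hζd0 x hx, zero_mul, _root_.zero_apply, mul_zero, add_zero]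
  have hφP : ∀ x, 0 ≤ φ x ∧ φ x ≤ Real.pi * R := fun x => by
    have h1 := hζ01 x
    have h2 := hψb (u x)
    refine ⟨mul_nonneg h1.1 h2.1, ?_⟩
    calc ζ x * ψ (u x) ≤ 1 * ψ (u x) := mul_le_mul_of_nonneg_right h1.2 h2.1
      _ ≤ _ := by linarith
  have hφC : ContDiffOn ℝ 1 φ Ω := hζC.contDiffOn.mul (hψC.comp_contDiffOn hu1)
  have hφd : ∀ x ∈ Ω, fderiv ℝ φ x (X x) = E x + N x := by
    intro x hx
    have hud : HasFDerivAt u (fderiv ℝ u x) x :=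
      ((hu1.contDiffAt (hΩo.mem_nhds hx)).differentiableAt one_ne_zero).hasFDerivAt
    have h1 : HasFDerivAt (fun y => ψ (u y)) (dψ (u x) • fderiv ℝ u x) x :=
      (hψd (u x)).comp_hasFDerivAt x hud
    have h2 : HasFDerivAt ζ (fderiv ℝ ζ x) x := (hζC.differentiable one_ne_zero x).hasFDerivAt
    have h3 := (h2.mul h1).fderiv
    have h4 : fderiv ℝ φ x = ζ x • dψ (u x) • fderiv ℝ u x + ψ (u x) • fderiv ℝ ζ x := h3
    rw [h4]
    simp only [_root_.add_apply, _root_.smul_apply, smul_eq_mul, hE, hN]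
    congr 1
    have h5 : fderiv ℝ u x (X x) = a ‖Du x‖ * ‖Du x‖ ^ 2 := by
      rw [← inner_gradient_left, ← hDu x hx]
      simp only [hX]
      rw [inner_smul_right, real_inner_self_eq_norm_sq]
    rw [h5]; ring
  have hKc : IsCompact (closure Ω ∩ closedBall (0 : EuclideanSpace ℝ (Fin n)) ρ) :=
    (isCompact_closedBall _ _).inter_left isClosed_closure
  have hWK : W ⊆ closure Ω ∩ closedBall (0 : EuclideanSpace ℝ (Fin n)) ρ :=
    inter_subset_inter_left _ subset_closure
  have hI : ∀ F : EuclideanSpace ℝ (Fin n) → ℝ, ContinuousOn F (closure Ω) →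
      IntegrableOn F W := fun F hF =>
    ((hF.mono inter_subset_left).integrableOn_compact hKc).mono_set hWK
  obtain ⟨M, hM⟩ := hKc.exists_bound_of_continuousOn ((hEc.add hNc).mono inter_subset_left)
  have hGle : ∫ x in W, (E x + N x) ≤ Real.pi * R * (C1 * Cb * H) := by
    have hpi := Real.pi_pos
    refine le_of_forall_pos_le_add fun t ht => ?_
    have hden : 0 < Real.pi * R + |M| + 1 := by positivity
    set τ := t / (Real.pi * R + |M| + 1) with hτ
    have hτ0 : 0 < τ := by positivity
    have hτt : τ * (Real.pi * R + |M| + 1) = t := by rw [hτ]; field_simp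
    obtain ⟨χ, hχC, hχ01, hχ0, hχv, hχi⟩ := hcut τ hτ0
    obtain ⟨hT, hTd⟩ := test_fun hΩo φ χ hφC hχC ρ hφ0 hχ0
    set Φ := Ω.indicator fun x => φ x * χ x with hΦ
    have hs := hsol Φ hT
    have hneg : ∫ x in Ω, f (u x) * Φ x ≤ 0 := by
      refine setIntegral_nonpos hΩo.measurableSet fun x hx => ?_
      refine mul_nonpos_of_nonpos_of_nonneg (hfu x hx) ?_
      rw [hΦ, indicator_of_mem hx]
      exact mul_nonneg (hφP x).1 (hχ01 x).1
    rw [← hs] at hneg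
    have hcongr : ∫ x in Ω, a ‖gradient u x‖ * ⟪gradient u x, gradient Φ x⟫ =
        ∫ x in Ω, (φ x * fderiv ℝ χ x (X x) + χ x * (E x + N x)) := by
      refine setIntegral_congr_fun hΩo.measurableSet fun x hx => ?_
      show a ‖gradient u x‖ * ⟪gradient u x, gradient Φ x⟫ =
        φ x * fderiv ℝ χ x (X x) + χ x * (E x + N x)
      rw [← hφd x hx, ← hDu x hx, real_inner_comm, inner_gradient_left]
      have : a ‖Du x‖ * fderiv ℝ Φ x (Du x) = fderiv ℝ Φ x (X x) := by
        simp only [hX]; rw [map_smul, smul_eq_mul]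
      rw [this, hTd x hx]
      simp only [_root_.add_apply, _root_.smul_apply, smul_eq_mul]
    rw [hcongr] at hneg
    have := int_est hΩo ρ φ χ (fun x => E x + N x) (fun x => fderiv ℝ χ x (X x)) (Real.pi * R)
      |M| (C1 * Cb * H + τ) τ (by positivity) (by positivity) hτ0.le hφc hχC.continuous
      (hEc.add hNc) ((hχC.continuous_fderiv one_ne_zero).continuousOn.clm_apply hXc) hφ0 hG0 hφP
      hχ01 (fun x hx => (hM x (hWK hx)).trans (le_abs_self _)) (abs_nonneg _) hχv hχi hneg
    refine this.trans ?_
    linarith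
  have hWfin : volume W < ∞ := (measure_mono inter_subset_right).trans_lt measure_closedBall_lt_top
  have hNle : -(Real.pi * C0 * Cb * (volume W).toReal) ≤ ∫ x in W, N x := by
    have hpi := Real.pi_pos
    have := norm_setIntegral_le_of_norm_le_const (μ := volume) (C := Real.pi * C0 * Cb)
      (f := N) hWfin (fun x hx => by
        have h1 := hψb (u x)
        have h2 := hζb x (X x)
        simp only [hN]
        rw [Real.norm_eq_abs, abs_mul, abs_of_nonneg h1.1]
        calc ψ (u x) * |fderiv ℝ ζ x (X x)| ≤ (Real.pi * R) * (C0 / R * Cb) := by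
              refine mul_le_mul h1.2 (h2.trans ?_) (abs_nonneg _) (by positivity)
              exact mul_le_mul_of_nonneg_left (hXb x) (by positivity)
          _ = _ := by field_simp)
    exact (abs_le.1 this).1
  rw [integral_add (hI E hEc) (hI N hNc)] at hGle
  set Sg := Ω ∩ {x | Real.sqrt (‖x‖ ^ 2 + u x ^ 2) ≤ R} with hSg
  have hSgm : MeasurableSet Sg := by
    have hc : ContinuousOn (fun x => Real.sqrt (‖x‖ ^ 2 + u x ^ 2)) Ω := by
      have := hucl.mono (subset_closure (s := Ω))
      exact ((continuous_norm.continuousOn.pow 2).add (this.pow 2)).sqrt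
    have ho := hc.isOpen_inter_preimage hΩo (isOpen_Ioi (a := R))
    have : Sg = Ω \ (Ω ∩ (fun x => Real.sqrt (‖x‖ ^ 2 + u x ^ 2)) ⁻¹' Ioi R) := by
      ext x
      simp only [hSg, mem_inter_iff, mem_setOf_eq, mem_diff, mem_preimage, mem_Ioi, not_and, not_lt]
      tauto
    rw [this]
    exact hΩo.measurableSet.diff ho.measurableSet
  have hSgb : ∀ x ∈ Sg, ‖x‖ ≤ R ∧ |u x| ≤ R := by
    rintro x ⟨_, hx⟩
    have hx' : Real.sqrt (‖x‖ ^ 2 + u x ^ 2) ≤ R := hx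
    constructor
    · exact (Real.le_sqrt_of_sq_le (by nlinarith [sq_nonneg (u x)])).trans hx'
    · exact (Real.abs_le_sqrt (by nlinarith [sq_nonneg ‖x‖])).trans hx'
  have hSgW : Sg ⊆ W := fun x hx => ⟨hx.1, by
    rw [mem_closedBall_zero_iff]; linarith [(hSgb x hx).1]⟩
  have hE0 : ∀ x, 0 ≤ E x := fun x =>
    mul_nonneg (mul_nonneg (hζ01 x).1 (hdψ0 _)) (mul_nonneg (ha0 _ (norm_nonneg _)) (sq_nonneg _))
  have hfin : ∫ x in Sg, a ‖gradient u x‖ * ‖gradient u x‖ ^ 2 ≤ ∫ x in W, 2 * E x := by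
    have hi : IntegrableOn (fun x => 2 * E x) W := (hI E hEc).const_mul 2
    calc ∫ x in Sg, a ‖gradient u x‖ * ‖gradient u x‖ ^ 2
        = ∫ x in Sg, a ‖Du x‖ * ‖Du x‖ ^ 2 :=
          setIntegral_congr_fun hSgm fun x hx => by rw [hDu x hx.1]
      _ ≤ ∫ x in Sg, 2 * E x := by
          refine setIntegral_mono_on ((hI _ (haD.mul (hDuc.norm.pow 2))).mono_set hSgW)
            (hi.mono_set hSgW) hSgm fun x hx => ?_
          obtain ⟨h1, h2⟩ := hSgb x hx
          have h3 := hζ1 x (by rw [mem_closedBall_zero_iff]; exact h1)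
          have h4 := hdψh (u x) h2
          have h5 : 0 ≤ a ‖Du x‖ * ‖Du x‖ ^ 2 :=
            mul_nonneg (ha0 _ (norm_nonneg _)) (sq_nonneg _)
          simp only [hE]
          rw [h3, one_mul]
          nlinarith
      _ ≤ _ := setIntegral_mono_set hi
          (ae_of_all _ fun x => mul_nonneg zero_le_two (hE0 x)) hSgW.eventuallyLE
  rw [integral_const_mul] at hfin
  linarith

/-- Proposition 2.7(vi) of the paper, in `ℝⁿ` with `Ω₀ = Ω`: the calibration estimate with
no assumption on `u` apart from `f(u) ≤ 0`. -/
theorem calibration_estimate_no_assumption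
    (n : ℕ) (Ω : Set (EuclideanSpace ℝ (Fin n)))
    (η : EuclideanSpace ℝ (Fin n) → EuclideanSpace ℝ (Fin n))
    (hΩ : IsCkDomainWithNormal 1 Ω η)
    (a : ℝ → ℝ) (hac : ContinuousOn a (Ici 0)) (ha0 : ∀ t ≥ (0 : ℝ), 0 ≤ a t)
    (hbd : ∃ Cb, ∀ t > (0 : ℝ), t * a t ≤ Cb)
    (hlip : ∀ t ∈ Ici (0 : ℝ), ∃ V ∈ 𝓝[Ici (0 : ℝ)] t,
      ∃ K, LipschitzOnWith K (fun s => s * a s) V)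
    (f : ℝ → ℝ) (hf : Continuous f)
    (u : EuclideanSpace ℝ (Fin n) → ℝ)
    (hu2 : ContDiffOn ℝ 2 u Ω) (hucl : ContinuousOn u (closure Ω))
    (Du : EuclideanSpace ℝ (Fin n) → EuclideanSpace ℝ (Fin n))
    (hDu : ∀ x ∈ Ω, Du x = gradient u x) (hDuc : ContinuousOn Du (closure Ω))
    (hsol : IsWeakSolution a f Ω u)
    (hfu : ∀ x ∈ Ω, f (u x) ≤ 0) :
    ∃ C > (0 : ℝ), ∀ R > (1 : ℝ),
      ENNReal.ofReal (∫ x in Ω ∩ {x | Real.sqrt (‖x‖ ^ 2 + u x ^ 2) ≤ R},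
          a ‖gradient u x‖ * ‖gradient u x‖ ^ 2)
        ≤ ENNReal.ofReal C *
          (volume (Ω ∩ Metric.ball (0 : EuclideanSpace ℝ (Fin n)) (2 * R)) +
            ENNReal.ofReal R *
              (μH[(n : ℝ) - 1] : Measure (EuclideanSpace ℝ (Fin n)))
                ({p ∈ frontier Ω | ⟪Du p, η p⟫ ≠ 0} ∩
                  Metric.ball (0 : EuclideanSpace ℝ (Fin n)) (2 * R))) := by
  have hΩo : IsOpen Ω := hΩ.2.1
  rcases Nat.eq_zero_or_pos n with hn0 | hn
  · subst hn0
    refine ⟨1, one_pos, fun R hR => ?_⟩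
    have : ∀ x, gradient u x = 0 := fun x => Subsingleton.elim _ _
    simp [this]
  obtain ⟨C0, hC0, hball⟩ := ball_h n
  obtain ⟨C1, hC1, hcut⟩ := cutoff n hn
  obtain ⟨Cb, hCb⟩ := hbd
  have hCb0 : 0 ≤ Cb := by
    have h1 := hCb 1 one_pos
    have h2 := ha0 1 zero_le_one
    linarith
  have hXb : ∀ x, ‖a ‖Du x‖ • Du x‖ ≤ Cb := by
    intro x
    rw [norm_smul, Real.norm_eq_abs, abs_of_nonneg (ha0 _ (norm_nonneg _)), mul_comm]
    rcases (norm_nonneg (Du x)).eq_or_lt with h | h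
    · rw [← h, zero_mul]; exact hCb0
    · exact hCb _ h
  have hXc : ContinuousOn (fun x => a ‖Du x‖ • Du x) (closure Ω) :=
    (hac.comp hDuc.norm fun x _ => norm_nonneg _).smul hDuc
  have hpi := Real.pi_pos
  refine ⟨2 * Real.pi * Cb * (C0 + C1) + 1, by positivity, fun R hR => ?_⟩
  have hR0 : 0 < R := by linarith
  set C := 2 * Real.pi * Cb * (C0 + C1) + 1 with hC
  have hCpos : 0 < C := by positivity
  set S := {p ∈ frontier Ω | ⟪Du p, η p⟫ ≠ 0} ∩
    Metric.ball (0 : EuclideanSpace ℝ (Fin n)) (2 * R) with hS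
  by_cases hSf : (μH[(n : ℝ) - 1] : Measure (EuclideanSpace ℝ (Fin n))) S = ∞
  · rw [hSf, ENNReal.mul_top (by simpa using hR0), add_top, ENNReal.mul_top (by simpa using hCpos)]
    exact le_top
  set H := ((μH[(n:ℝ) - 1] : Measure (EuclideanSpace ℝ (Fin n))) S).toReal with hH
  have hH0 : 0 ≤ H := ENNReal.toReal_nonneg
  have hSS : ∀ q ∈ frontier Ω, q ∈ closedBall 0 (3 / 2 * R) →
      ⟪a ‖Du q‖ • Du q, η q⟫ ≠ 0 → q ∈ S := by
    intro q hq hqb hne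
    refine ⟨⟨hq, fun h => hne ?_⟩, closedBall_subset_ball (by linarith) hqb⟩
    rw [real_inner_smul_left, h, mul_zero]
  have key := energy_est C0 C1 Cb hC0 hC1 hCb0 hball Ω hΩo a hac ha0 f u
    (hu2.of_le (by norm_num)) hucl Du hDu hDuc hsol hfu hXb R hR0 H hH0
    (fun τ hτ => hcut Ω η hΩ _ hXc Cb hCb0 (fun x _ => hXb x) (3 / 2 * R) S hSf hSS τ hτ)
  set v := (volume (Ω ∩ Metric.ball (0 : EuclideanSpace ℝ (Fin n)) (2 * R))).toReal with hv
  have hvf : volume (Ω ∩ Metric.ball (0 : EuclideanSpace ℝ (Fin n)) (2 * R)) ≠ ∞ :=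
    ((measure_mono inter_subset_right).trans_lt measure_ball_lt_top).ne
  have hv0 : 0 ≤ v := ENNReal.toReal_nonneg
  have hwv : (volume (Ω ∩ closedBall (0 : EuclideanSpace ℝ (Fin n)) (3 / 2 * R))).toReal ≤ v :=
    ENNReal.toReal_mono hvf (measure_mono (inter_subset_inter_right _
      (closedBall_subset_ball (by linarith))))
  rw [← ENNReal.ofReal_toReal hvf, ← ENNReal.ofReal_toReal hSf, ← hv, ← hH,
    ← ENNReal.ofReal_mul hR0.le, ← ENNReal.ofReal_add hv0 (by positivity),
    ← ENNReal.ofReal_mul hCpos.le]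
  apply ENNReal.ofReal_le_ofReal
  refine key.trans ?_
  have h1 : Real.pi * C0 * Cb *
      (volume (Ω ∩ closedBall (0 : EuclideanSpace ℝ (Fin n)) (3 / 2 * R))).toReal ≤
      Real.pi * C0 * Cb * v := by gcongr
  have h2 : 0 ≤ Real.pi * C1 * Cb * v := by positivity
  have h3 : 0 ≤ Real.pi * C0 * Cb * (R * H) := by positivity
  have h4 : 0 ≤ R * H := by positivity
  rw [hC]
  nlinarith
end
end

section
/- Let Ω ⊆ ℝⁿ be open, let a ∈ C¹([0,∞)) satisfy a(t) > 0 and (t·a(t))′ > 0 for all t ≥ 0, let f ∈ C¹(ℝ), and let u ∈ C²(Ω) be a weak solution of Δ_a u + f(u) = 0 in Ω. Then for every fixed vector e ∈ ℝⁿ, the function w := ⟨∇u, e⟩ ∈ C¹(Ω) is a weak solution of the linearized equation div(A(∇u)∇w) + f′(u)·w = 0 in Ω, that is, ∫_Ω ⟨A(∇u)∇w, ∇φ⟩ dx = ∫_Ω f′(u)·w·φ dx for every Lipschitz φ : ℝⁿ → ℝ with compact support contained in Ω. -/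
open MeasureTheory Set Metric Filter
open scoped RealInnerProductSpace Topology ENNReal

noncomputable section

variable {n : ℕ}

/-- Differentiation under the integral sign for translated integrands. -/
theorem aux_hasDerivAt {V : Type*} [NormedAddCommGroup V] [InnerProductSpace ℝ V]
    [FiniteDimensional ℝ V] [MeasurableSpace V] [BorelSpace V]
    {n : ℕ} {Ω K : Set (EuclideanSpace ℝ (Fin n))} (hΩ : IsOpen Ω) (hK : IsCompact K)
    (hKΩ : K ⊆ Ω) (Y : EuclideanSpace ℝ (Fin n) → V) (hY : DifferentiableOn ℝ Y Ω)
    (hYb : ∀ K' ⊆ Ω, IsCompact K' → ∃ M, ∀ x ∈ K', ‖fderiv ℝ Y x‖ ≤ M)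
    (ψ : EuclideanSpace ℝ (Fin n) → V) (hψ : Measurable ψ) (C : ℝ) (hC : ∀ x, ‖ψ x‖ ≤ C)
    (e : EuclideanSpace ℝ (Fin n)) :
    HasDerivAt (fun h : ℝ => ∫ x in K, ⟪Y (x + h • e), ψ x⟫)
      (∫ x in K, ⟪fderiv ℝ Y x e, ψ x⟫) 0 := by
  obtain ⟨δ, hδ, hsub⟩ := hK.exists_cthickening_subset_open hΩ hKΩ
  obtain ⟨M, hM⟩ := hYb _ hsub hK.cthickening
  set ε := δ / (‖e‖ + 1) with hε
  have hεpos : 0 < ε := by positivity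
  have hmem : ∀ h ∈ ball (0 : ℝ) ε, ∀ x ∈ K, x + h • e ∈ cthickening δ K := by
    intro h hh x hx
    refine mem_cthickening_of_dist_le _ x _ _ hx ?_
    rw [mem_ball_zero_iff] at hh
    rw [dist_eq_norm, add_sub_cancel_left, norm_smul]
    calc ‖h‖ * ‖e‖ ≤ ε * (‖e‖ + 1) := by
          gcongr
          linarith
      _ = δ := by rw [hε]; field_simp
  have hcont : ∀ h ∈ ball (0 : ℝ) ε, ContinuousOn (fun x => Y (x + h • e)) K := by
    intro h hh
    exact hY.continuousOn.comp (by fun_prop) (fun x hx => hsub (hmem h hh x hx))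
  have hmeas : ∀ h ∈ ball (0 : ℝ) ε,
      AEStronglyMeasurable (fun x => ⟪Y (x + h • e), ψ x⟫) (volume.restrict K) := by
    intro h hh
    exact ((hcont h hh).aestronglyMeasurable hK.measurableSet).inner
      hψ.aestronglyMeasurable
  have h0 : (0 : ℝ) ∈ ball (0 : ℝ) ε := mem_ball_self hεpos
  have hfin : IsFiniteMeasure (volume.restrict K) :=
    ⟨by rw [Measure.restrict_apply_univ]; exact hK.measure_lt_top⟩
  have key := hasDerivAt_integral_of_dominated_loc_of_deriv_le (μ := volume.restrict K)
    (F := fun (h : ℝ) x => ⟪Y (x + h • e), ψ x⟫)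
    (F' := fun (h : ℝ) x => ⟪fderiv ℝ Y (x + h • e) e, ψ x⟫) (x₀ := (0 : ℝ))
    (bound := fun _ => M * ‖e‖ * C) (ball_mem_nhds _ hεpos)
    (by filter_upwards [ball_mem_nhds _ hεpos] with h hh using hmeas h hh)
    ?_ ?_ ?_ (integrable_const _) ?_
  · simpa using key.2
  · obtain ⟨B, hB⟩ := hK.exists_bound_of_continuousOn (hcont 0 h0)
    refine Integrable.of_bound (hmeas 0 h0) (B * C) ?_
    filter_upwards [ae_restrict_mem hK.measurableSet] with x hx
    refine (norm_inner_le_norm _ _).trans ?_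
    have := hB x hx
    exact mul_le_mul this (hC x) (norm_nonneg _) ((norm_nonneg _).trans this)
  · have : Measurable (fun x => fderiv ℝ Y x e) := measurable_fderiv_apply_const ℝ Y e
    simpa using (this.aestronglyMeasurable.inner hψ.aestronglyMeasurable)
  · filter_upwards [ae_restrict_mem hK.measurableSet] with x hx h hh
    refine (norm_inner_le_norm _ _).trans ?_
    have h1 := hM _ (hmem h hh x hx)
    have h2 : ‖fderiv ℝ Y (x + h • e) e‖ ≤ M * ‖e‖ :=
      (ContinuousLinearMap.le_opNorm _ _).trans (by gcongr)
    exact mul_le_mul h2 (hC x) (norm_nonneg _) ((norm_nonneg _).trans h2)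
  · filter_upwards [ae_restrict_mem hK.measurableSet] with x hx h hh
    have hd : HasFDerivAt Y (fderiv ℝ Y (x + h • e)) (x + h • e) :=
      (hY.differentiableAt (hΩ.mem_nhds (hsub (hmem h hh x hx)))).hasFDerivAt
    have hl : HasDerivAt (fun h : ℝ => x + h • e) e h := by
      simpa using ((hasDerivAt_id h).smul_const e).const_add x
    have := hd.comp_hasDerivAt h hl
    simpa using this.inner ℝ (hasDerivAt_const h (ψ x))

/-- Change of variables for a translated test field. -/
theorem aux_shift {V : Type*} [NormedAddCommGroup V] [InnerProductSpace ℝ V]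
    {n : ℕ} {Ω K : Set (EuclideanSpace ℝ (Fin n))}
    (Y ψ : EuclideanSpace ℝ (Fin n) → V) (hψ : ∀ x ∉ K, ψ x = 0)
    (v : EuclideanSpace ℝ (Fin n)) (hv : ∀ x ∈ K, x + v ∈ Ω) :
    ∫ x in Ω, ⟪Y x, ψ (x - v)⟫ = ∫ x in K, ⟪Y (x + v), ψ x⟫ := by
  rw [setIntegral_eq_integral_of_forall_compl_eq_zero,
    setIntegral_eq_integral_of_forall_compl_eq_zero,
    ← integral_sub_right_eq_self (fun x => ⟪Y (x + v), ψ x⟫) v]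
  · simp
  · intro x hx
    simp [hψ x hx]
  · intro x hx
    rw [hψ, inner_zero_right]
    intro h
    exact hx (by simpa using hv _ h)

/-- The vector field `p ↦ a(|p|) p` is differentiable with derivative `A(p)`. -/
theorem aux_field {n : ℕ} (a : ℝ → ℝ) (ha : ContDiffOn ℝ 1 a (Ici 0))
    (p : EuclideanSpace ℝ (Fin n)) :
    HasFDerivAt (fun q : EuclideanSpace ℝ (Fin n) => a ‖q‖ • q)
      (a ‖p‖ • ContinuousLinearMap.id ℝ (EuclideanSpace ℝ (Fin n)) +
        ((deriv a ‖p‖ / ‖p‖) • innerSL ℝ p).smulRight p) p := by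
  by_cases hp : p = 0
  · subst hp
    have hc : Tendsto (fun q : EuclideanSpace ℝ (Fin n) => a ‖q‖ - a 0) (𝓝 0) (𝓝 0) := by
      have h1 : ContinuousWithinAt a (Ici 0) 0 := ha.continuousOn 0 (by simp)
      have h2 : Tendsto (fun q : EuclideanSpace ℝ (Fin n) => ‖q‖) (𝓝 0) (𝓝[Ici 0] 0) :=
        tendsto_nhdsWithin_iff.2 ⟨tendsto_norm_zero, by simp⟩
      simpa using (h1.tendsto.comp h2).sub_const (a 0)
    rw [hasFDerivAt_iff_isLittleO_nhds_zero]
    have h3 := ((Asymptotics.isLittleO_one_iff ℝ).2 hc).smul_isBigO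
      (Asymptotics.isBigO_refl (fun q : EuclideanSpace ℝ (Fin n) => q) (𝓝 0))
    simpa [sub_smul] using h3
  · have hpn : 0 < ‖p‖ := norm_pos_iff.2 hp
    have hnorm : HasFDerivAt (fun q : EuclideanSpace ℝ (Fin n) => ‖q‖)
        (‖p‖⁻¹ • innerSL ℝ p) p := by
      have h1 := (hasFDerivAt_id (𝕜 := ℝ) p).norm_sq
      have h2 := h1.sqrt (by simpa using hp)
      simp only [id, Real.sqrt_sq (norm_nonneg _)] at h2
      refine h2.congr_fderiv ?_
      ext1 v
      simp
      field_simp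
    have hda : HasDerivAt a (deriv a ‖p‖) ‖p‖ :=
      ((ha.differentiableOn (by simp)).differentiableAt (Ici_mem_nhds hpn)).hasDerivAt
    have h3 := (hda.comp_hasFDerivAt p hnorm).smul (hasFDerivAt_id (𝕜 := ℝ) p)
    refine h3.congr_fderiv ?_
    ext1 v
    simp [smul_smul, div_eq_mul_inv, mul_assoc]

theorem aux_field_bound {n : ℕ} (c b : ℝ) (p v : EuclideanSpace ℝ (Fin n)) :
    ‖(c • ContinuousLinearMap.id ℝ (EuclideanSpace ℝ (Fin n)) +
        ((b / ‖p‖) • innerSL ℝ p).smulRight p) v‖ ≤ (|c| + |b| * ‖p‖) * ‖v‖ := by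
  simp only [_root_.add_apply, _root_.smul_apply,
    ContinuousLinearMap.smulRight_apply, ContinuousLinearMap.id_apply, innerSL_apply_apply,
    smul_eq_mul]
  refine (norm_add_le _ _).trans ?_
  rw [norm_smul, norm_smul, add_mul, Real.norm_eq_abs, Real.norm_eq_abs, abs_mul, abs_div, abs_norm]
  refine add_le_add le_rfl ?_
  by_cases hp : p = 0
  · simp [hp]
  · have hpn : 0 < ‖p‖ := norm_pos_iff.2 hp
    have h1 := abs_real_inner_le_norm p v
    calc |b| / ‖p‖ * |⟪p, v⟫| * ‖p‖ = |b| * |⟪p, v⟫| := by field_simp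
      _ ≤ |b| * (‖p‖ * ‖v‖) := by gcongr
      _ = |b| * ‖p‖ * ‖v‖ := by ring

theorem aux_grad_w {n : ℕ} {Ω : Set (EuclideanSpace ℝ (Fin n))} (hΩ : IsOpen Ω)
    (u : EuclideanSpace ℝ (Fin n) → ℝ) (hu : ContDiffOn ℝ 2 u Ω)
    (hg : DifferentiableOn ℝ (gradient u) Ω)
    (e x : EuclideanSpace ℝ (Fin n)) (hx : x ∈ Ω) :
    gradient (fun y => ⟪gradient u y, e⟫) x = fderiv ℝ (gradient u) x e := by
  have hua : ContDiffAt ℝ 2 u x := hu.contDiffAt (hΩ.mem_nhds hx)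
  have hsym := hua.isSymmSndFDerivAt (by simp)
  have hgx := (hg.differentiableAt (hΩ.mem_nhds hx))
  have hfd : DifferentiableAt ℝ (fderiv ℝ u) x :=
    (hua.fderiv_right (m := 1) (by norm_num)).differentiableAt (by simp)
  have key : ∀ v w, ⟪fderiv ℝ (gradient u) x v, w⟫ = fderiv ℝ (fderiv ℝ u) x v w := by
    intro v w
    have h1 : HasFDerivAt (fun y => ⟪gradient u y, w⟫)
        ((innerSL ℝ w).comp (fderiv ℝ (gradient u) x)) x := by
      have := (innerSL ℝ w).hasFDerivAt.comp x hgx.hasFDerivAt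
      refine this.congr_of_eventuallyEq (Eventually.of_forall fun y => ?_)
      simp [real_inner_comm]
    have h2 : HasFDerivAt (fun y => fderiv ℝ u y w)
        ((fderiv ℝ (fderiv ℝ u) x).flip w) x := by
      simpa using hfd.hasFDerivAt.clm_apply (hasFDerivAt_const w x)
    have h3 : (fun y => ⟪gradient u y, w⟫) = fun y => fderiv ℝ u y w := by
      funext y
      simp [gradient]
    rw [h3] at h1
    have := congrArg (fun L => L v) (h1.unique h2)
    simpa [real_inner_comm] using this
  refine ext_inner_right ℝ fun v => ?_
  rw [key, hsym.eq e v, ← key]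
  have h1 : HasFDerivAt (fun y => ⟪gradient u y, e⟫)
        ((innerSL ℝ e).comp (fderiv ℝ (gradient u) x)) x := by
    have := (innerSL ℝ e).hasFDerivAt.comp x hgx.hasFDerivAt
    refine this.congr_of_eventuallyEq (Eventually.of_forall fun y => ?_)
    simp [real_inner_comm]
  rw [gradient, InnerProductSpace.toDual_symm_apply, h1.fderiv]
  simp [real_inner_comm]

/-- Lemma 3.3 of the paper in `ℝⁿ` with the Killing field a constant field `e`:
`w = ⟨∇u, e⟩` solves the linearized equation weakly. -/
theorem derivative_solves_linearized
    (n : ℕ) (Ω : Set (EuclideanSpace ℝ (Fin n))) (hΩ : IsOpen Ω)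
    (a : ℝ → ℝ) (ha : ContDiffOn ℝ 1 a (Ici 0))
    (hapos : ∀ t ≥ (0 : ℝ), 0 < a t) (hlam : ∀ t ≥ (0 : ℝ), 0 < lam1 a t)
    (f : ℝ → ℝ) (hf : ContDiff ℝ 1 f)
    (u : EuclideanSpace ℝ (Fin n) → ℝ) (hu : ContDiffOn ℝ 2 u Ω)
    (hsol : IsWeakSolution a f Ω u)
    (e : EuclideanSpace ℝ (Fin n)) :
    ∀ φ : EuclideanSpace ℝ (Fin n) → ℝ, IsTestOn Ω φ →
      ∫ x in Ω,
          ⟪Aop a (gradient u x) (gradient (fun y => ⟪gradient u y, e⟫) x),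
            gradient φ x⟫
        = ∫ x in Ω, deriv f (u x) * ⟪gradient u x, e⟫ * φ x := by
  rintro φ ⟨⟨L, hL⟩, hφc, hφΩ⟩
  -- regularity of the gradient of `u`
  have hfd : ContDiffOn ℝ 1 (fderiv ℝ u) Ω := hu.fderiv_of_isOpen hΩ (by norm_num)
  have hgC : ContDiffOn ℝ 1 (gradient u) Ω :=
    (InnerProductSpace.toDual ℝ (EuclideanSpace ℝ (Fin n))).symm.contDiff.comp_contDiffOn hfd
  have hg : DifferentiableOn ℝ (gradient u) Ω := hgC.differentiableOn (by simp)
  have hDg : ContinuousOn (fderiv ℝ (gradient u)) Ω := hgC.continuousOn_fderiv_of_isOpen hΩ le_rfl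
  have hgc : ContinuousOn (fun x => ‖gradient u x‖) Ω := hgC.continuousOn.norm
  set X : EuclideanSpace ℝ (Fin n) → EuclideanSpace ℝ (Fin n) :=
    fun x => a ‖gradient u x‖ • gradient u x with hX
  have hXd : ∀ x ∈ Ω, HasFDerivAt X
      ((a ‖gradient u x‖ • ContinuousLinearMap.id ℝ (EuclideanSpace ℝ (Fin n)) +
        ((deriv a ‖gradient u x‖ / ‖gradient u x‖) • innerSL ℝ (gradient u x)).smulRight
          (gradient u x)).comp (fderiv ℝ (gradient u) x)) x := fun x hx =>
    (aux_field a ha (gradient u x)).comp x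
      (hg.differentiableAt (hΩ.mem_nhds hx)).hasFDerivAt
  have hXe : ∀ x ∈ Ω, fderiv ℝ X x e =
      Aop a (gradient u x) (gradient (fun y => ⟪gradient u y, e⟫) x) := by
    intro x hx
    rw [(hXd x hx).fderiv, aux_grad_w hΩ u hu hg e x hx]
    simp [Aop]
  have hXb : ∀ K' ⊆ Ω, IsCompact K' → ∃ M, ∀ x ∈ K', ‖fderiv ℝ X x‖ ≤ M := by
    intro K' hK' hcomp
    have hmaps : MapsTo (fun x => ‖gradient u x‖) Ω (Ici 0) := fun x _ => norm_nonneg _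
    have hda : ContinuousOn (derivWithin a (Ici 0)) (Ici 0) :=
      ha.continuousOn_derivWithin (uniqueDiffOn_Ici 0) le_rfl
    have hcb : ContinuousOn (fun x => (|a ‖gradient u x‖| +
        |derivWithin a (Ici 0) ‖gradient u x‖| * ‖gradient u x‖) *
          ‖fderiv ℝ (gradient u) x‖) K' := by
      refine ContinuousOn.mono ?_ hK'
      exact (((ha.continuousOn.comp hgc hmaps).abs).add
        (((hda.comp hgc hmaps).abs).mul hgc)).mul hDg.norm
    obtain ⟨M, hM⟩ := hcomp.exists_bound_of_continuousOn hcb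
    refine ⟨M, fun x hx => le_trans ?_ ((le_abs_self _).trans (hM x hx))⟩
    rw [(hXd x (hK' hx)).fderiv]
    refine ContinuousLinearMap.opNorm_le_bound _ (by positivity) fun v => ?_
    have hD : |deriv a ‖gradient u x‖| * ‖gradient u x‖ =
        |derivWithin a (Ici 0) ‖gradient u x‖| * ‖gradient u x‖ := by
      by_cases hp : gradient u x = 0
      · simp [hp]
      · rw [derivWithin_of_mem_nhds (Ici_mem_nhds (norm_pos_iff.2 hp))]
    rw [← hD, ContinuousLinearMap.comp_apply, mul_assoc]
    exact (aux_field_bound _ _ _ _).trans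
      (mul_le_mul_of_nonneg_left (ContinuousLinearMap.le_opNorm _ _) (by positivity))
  -- the right-hand side
  set g : EuclideanSpace ℝ (Fin n) → ℝ := fun x => f (u x) with hgdef
  have hgC1 : ContDiffOn ℝ 1 g Ω := hf.comp_contDiffOn (hu.of_le (by norm_num))
  have hgb : ∀ K' ⊆ Ω, IsCompact K' → ∃ M, ∀ x ∈ K', ‖fderiv ℝ g x‖ ≤ M := fun K' hK' hc =>
    hc.exists_bound_of_continuousOn ((hgC1.continuousOn_fderiv_of_isOpen hΩ le_rfl).mono hK')
  have hge : ∀ x ∈ Ω, fderiv ℝ g x e = deriv f (u x) * ⟪gradient u x, e⟫ := by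
    intro x hx
    have h1 : HasFDerivAt u (fderiv ℝ u x) x :=
      ((hu.differentiableOn (by simp)).differentiableAt (hΩ.mem_nhds hx)).hasFDerivAt
    have h2 : HasDerivAt f (deriv f (u x)) (u x) :=
      (hf.differentiable (by simp) (u x)).hasDerivAt
    have h3 : HasFDerivAt g (deriv f (u x) • fderiv ℝ u x) x := h2.comp_hasFDerivAt x h1
    rw [h3.fderiv]
    simp [gradient]
  -- test function facts
  set K := tsupport φ with hKdef
  have hK : IsCompact K := hφc
  have hgφ0 : ∀ x ∉ K, gradient φ x = 0 := fun x hx => by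
    simp [gradient, fderiv_of_notMem_tsupport ℝ hx]
  have hφ0 : ∀ x ∉ K, φ x = 0 := fun x hx => image_eq_zero_of_notMem_tsupport hx
  have hgφm : Measurable (gradient φ) :=
    (InnerProductSpace.toDual ℝ (EuclideanSpace ℝ (Fin n))).symm.continuous.measurable.comp
      (measurable_fderiv ℝ φ)
  have hgφb : ∀ x, ‖gradient φ x‖ ≤ L := fun x => by
    rw [gradient, LinearIsometryEquiv.norm_map]
    exact norm_fderiv_le_of_lipschitz ℝ hL
  obtain ⟨B, hB⟩ := hL.continuous.bounded_above_of_compact_support hφc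
  have d1 := aux_hasDerivAt hΩ hK hφΩ X (fun x hx => (hXd x hx).differentiableAt.differentiableWithinAt)
    hXb (gradient φ) hgφm L hgφb e
  have d2 := aux_hasDerivAt hΩ hK hφΩ g (hgC1.differentiableOn (by simp))
    hgb φ hL.continuous.measurable B hB e
  -- the translated identity
  obtain ⟨δ, hδ, hsub⟩ := hK.exists_cthickening_subset_open hΩ hφΩ
  have hcontv : Tendsto (fun h : ℝ => ‖h • e‖) (𝓝 0) (𝓝 0) := by
    have : Continuous (fun h : ℝ => ‖h • e‖) := by fun_prop
    simpa using this.tendsto 0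
  have heq : (fun h : ℝ => ∫ x in K, ⟪X (x + h • e), gradient φ x⟫) =ᶠ[𝓝 0]
      fun h : ℝ => ∫ x in K, ⟪g (x + h • e), φ x⟫ := by
    filter_upwards [hcontv.eventually (Iio_mem_nhds hδ)] with h hh
    have hv : ∀ x ∈ K, x + h • e ∈ Ω := fun x hx => hsub (by
      refine mem_cthickening_of_dist_le _ x _ _ hx ?_
      rw [dist_eq_norm, add_sub_cancel_left]
      exact le_of_lt hh)
    have htest : IsTestOn Ω (fun x => φ (x - h • e)) := by
      have hts : tsupport (fun x => φ (x - h • e)) = (fun x => x - h • e) ⁻¹' K :=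
        tsupport_comp_eq_preimage φ (Homeomorph.subRight (h • e))
      refine ⟨⟨L, ?_⟩, ?_, ?_⟩
      · refine LipschitzWith.of_dist_le_mul fun x y => ?_
        simpa using hL.dist_le_mul (x - h • e) (y - h • e)
      · exact hφc.comp_homeomorph (Homeomorph.subRight (h • e))
      · rw [hts]
        intro x hx
        simpa using hv _ hx
    have hs := hsol _ htest
    rw [← aux_shift X (gradient φ) hgφ0 _ hv, ← aux_shift g φ hφ0 _ hv]
    have e1 : ∀ x, gradient (fun x => φ (x - h • e)) x = gradient φ (x - h • e) := fun x => by
      simp only [gradient, fderiv_comp_sub]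
    simp only [e1] at hs
    simpa [hX, hgdef, real_inner_smul_left, mul_comm] using hs
  have hfinal := d1.unique (d2.congr_of_eventuallyEq heq)
  have l1 := setIntegral_eq_of_subset_of_forall_sdiff_eq_zero (μ := volume)
    (f := fun x => ⟪Aop a (gradient u x) (gradient (fun y => ⟪gradient u y, e⟫) x),
            gradient φ x⟫) hΩ.measurableSet hφΩ
    (fun x hx => by simp [hgφ0 x hx.2])
  have l2 := setIntegral_eq_of_subset_of_forall_sdiff_eq_zero (μ := volume)
    (f := fun x => deriv f (u x) * ⟪gradient u x, e⟫ * φ x) hΩ.measurableSet hφΩ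
    (fun x hx => by simp [hφ0 x hx.2])
  rw [l1, l2]
  calc _ = ∫ x in K, ⟪fderiv ℝ X x e, gradient φ x⟫ :=
        setIntegral_congr_fun hK.measurableSet fun x hx => by
          simp only [hXe x (hφΩ hx)]
    _ = ∫ x in K, ⟪fderiv ℝ g x e, φ x⟫ := hfinal
    _ = _ := setIntegral_congr_fun hK.measurableSet fun x hx => by
          simp [hge x (hφΩ hx), mul_comm]
end
end

section
/- Let Ω ⊆ ℝⁿ be open, let a : [0,∞) → ℝ be C¹ with locally Lipschitz derivative, a(t) > 0 and (t·a(t))′ > 0 for all t ≥ 0, let f ∈ C¹(ℝ), and let u ∈ C³(Ω) be a weak solution of Δ_a u + f(u) = 0 in Ω. Then the Bochner-type inequality (1/2)·div(A(∇u)∇|∇u|²) ≥ Q holds weakly in Ω: for every nonnegative Lipschitz φ with compact support in Ω, −(1/2)∫_Ω ⟨A(∇u)∇(|∇u|²), ∇φ⟩ dx ≥ ∫_Ω φ·Q dx, where on {∇u ≠ 0}, writing ν := ∇u/|∇u|, u_{νν} := Hess u(ν,ν), ∇ᵀ|∇u| := ∇|∇u| − ⟨∇|∇u|, ν⟩ν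 and λ_i := λ_i(|∇u|), Q := λ₁·u_{νν}² + (λ₁+λ₂)·|∇ᵀ|∇u||² + λ₂·( ‖Hess u‖² − u_{νν}² − 2|∇ᵀ|∇u||² ) − f′(u)|∇u|², and Q := 0 on crit(u). (The quantity ‖Hess u‖² − u_{νν}² − 2|∇ᵀ|∇u||² equals |∇u|² times the squared norm of the second fundamental form of the level set of u, and is nonnegative.) -/
open MeasureTheory Set Metric Filter
open scoped RealInnerProductSpace Topology ENNReal

noncomputable section

variable {n : ℕ}

/-- The tangential part `∇ᵀ|∇u|` of the gradient of `|∇u|` (orthogonal to `ν = ∇u/|∇u|`). -/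
def tangGrad (u : EuclideanSpace ℝ (Fin n) → ℝ) (x : EuclideanSpace ℝ (Fin n)) :
    EuclideanSpace ℝ (Fin n) :=
  gradient (fun y => ‖gradient u y‖) x -
    ⟪gradient (fun y => ‖gradient u y‖) x, ‖gradient u x‖⁻¹ • gradient u x⟫ •
      (‖gradient u x‖⁻¹ • gradient u x)

/-- The squared Frobenius norm `‖Hess u‖²` of the Hessian of `u`. -/
def hessFrob2 (u : EuclideanSpace ℝ (Fin n) → ℝ) (x : EuclideanSpace ℝ (Fin n)) : ℝ :=
  ∑ i : Fin n, ‖(fderiv ℝ (gradient u) x) (EuclideanSpace.single i (1 : ℝ))‖ ^ 2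

open Classical in
/-- The right-hand side `Q` of the Bochner inequality, set to `0` on `crit(u)`. -/
def bochnerQ (a f : ℝ → ℝ) (u : EuclideanSpace ℝ (Fin n) → ℝ)
    (x : EuclideanSpace ℝ (Fin n)) : ℝ :=
  if gradient u x = 0 then 0
  else
    lam1 a ‖gradient u x‖ *
        ⟪(fderiv ℝ (gradient u) x) (‖gradient u x‖⁻¹ • gradient u x),
          ‖gradient u x‖⁻¹ • gradient u x⟫ ^ 2 +
      (lam1 a ‖gradient u x‖ + lam2 a ‖gradient u x‖) * ‖tangGrad u x‖ ^ 2 +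
      lam2 a ‖gradient u x‖ *
        (hessFrob2 u x -
          ⟪(fderiv ℝ (gradient u) x) (‖gradient u x‖⁻¹ • gradient u x),
            ‖gradient u x‖⁻¹ • gradient u x⟫ ^ 2 -
          2 * ‖tangGrad u x‖ ^ 2) -
      deriv f (u x) * ‖gradient u x‖ ^ 2


section Helpers

local notation "𝔼" => EuclideanSpace ℝ (Fin n)

lemma bw_continuous_norm {b : ℝ → ℝ} (hb : ContinuousOn b (Ici 0)) :
    Continuous (fun p : 𝔼 => b ‖p‖) :=
  hb.comp_continuous continuous_norm (fun p => norm_nonneg p)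

lemma bw_deriv_cont {a : ℝ → ℝ} (ha : C11Loc a) : ContinuousOn (deriv a) (Ici 0) := by
  intro t ht
  obtain ⟨V, hV, K, hK⟩ := ha.2 t ht
  have htV : t ∈ V := mem_of_mem_nhdsWithin ht hV
  have := hK.continuousOn t htV
  exact this.mono_of_mem_nhdsWithin hV

/-- derivative of `p ↦ a(|p|)p`. -/
def bwA (a : ℝ → ℝ) (p : 𝔼) : 𝔼 →L[ℝ] 𝔼 :=
  a ‖p‖ • ContinuousLinearMap.id ℝ 𝔼 +
    (deriv a ‖p‖ / ‖p‖) • ((innerSL ℝ p).smulRight p)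

lemma bwA_apply (a : ℝ → ℝ) (p v : 𝔼) : bwA a p v = Aop a p v := by
  simp [bwA, Aop, smul_smul]

lemma bwA_cont {a : ℝ → ℝ} (ha : C11Loc a) : Continuous (bwA (n := n) a) := by
  have h1 : Continuous (fun p : 𝔼 => a ‖p‖) := bw_continuous_norm ha.1.continuousOn
  have h2 : Continuous (fun p : 𝔼 => deriv a ‖p‖) := bw_continuous_norm (bw_deriv_cont ha)
  have hS : Continuous (fun p : 𝔼 => ((innerSL ℝ p).smulRight p : 𝔼 →L[ℝ] 𝔼)) := by
    have : Continuous (fun p : 𝔼 =>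
      (ContinuousLinearMap.smulRightL ℝ 𝔼 𝔼 (innerSL ℝ p)) p) := by fun_prop
    exact this
  refine (h1.smul continuous_const).add ?_
  rw [continuous_iff_continuousAt]
  intro p
  by_cases hp : p = 0
  · subst hp
    have : Tendsto (fun p : 𝔼 => (deriv a ‖p‖ / ‖p‖) • ((innerSL ℝ p).smulRight p : 𝔼 →L[ℝ] 𝔼))
        (𝓝 0) (𝓝 0) := by
      apply squeeze_zero_norm (a := fun p : 𝔼 => |deriv a ‖p‖| * ‖p‖)
      · intro p
        rw [norm_smul, ContinuousLinearMap.norm_smulRight_apply, innerSL_apply_norm, norm_div,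
          norm_norm, Real.norm_eq_abs]
        by_cases hp : ‖p‖ = 0
        · simp [hp]
        · apply le_of_eq; field_simp
      · have := ((h2.abs.mul continuous_norm).tendsto (0 : 𝔼))
        simp only [Pi.mul_def, norm_zero, mul_zero] at this
        exact this
    simpa [ContinuousAt] using this
  · have : ‖p‖ ≠ 0 := norm_ne_zero_iff.mpr hp
    exact (h2.continuousAt.div continuous_norm.continuousAt this).smul hS.continuousAt

lemma bw_hasDerivAt {a : ℝ → ℝ} (ha : C11Loc a) {t : ℝ} (ht : 0 < t) :
    HasDerivAt a (deriv a t) t :=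
  ((ha.1.contDiffAt (Ici_mem_nhds ht)).differentiableAt (by simp)).hasDerivAt

lemma bw_norm_deriv {F : Type*} [NormedAddCommGroup F] [InnerProductSpace ℝ F] {p : F}
    (hp : p ≠ 0) : HasFDerivAt (fun q : F => ‖q‖) (‖p‖⁻¹ • innerSL ℝ p) p := by
  have h := (hasStrictFDerivAt_norm_sq p).hasFDerivAt.sqrt (by simpa using hp)
  have e : (fun q : F => √(‖q‖ ^ 2)) = fun q => ‖q‖ := by
    ext q; exact Real.sqrt_sq (norm_nonneg q)
  rw [e] at h
  convert h using 1
  rw [Real.sqrt_sq (norm_nonneg p)]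
  ext v
  have := norm_ne_zero_iff.mpr hp
  simp
  field_simp

lemma bwG_hasFDerivAt {a : ℝ → ℝ} (ha : C11Loc a) (p : 𝔼) :
    HasFDerivAt (fun q : 𝔼 => a ‖q‖ • q) (bwA a p) p := by
  by_cases hp : p = 0
  · subst hp
    have h1 : Continuous (fun p : 𝔼 => a ‖p‖) := bw_continuous_norm ha.1.continuousOn
    rw [hasFDerivAt_iff_isLittleO_nhds_zero]
    have h0 : (fun h : 𝔼 => a ‖0 + h‖ • (0 + h) - a ‖(0:𝔼)‖ • (0:𝔼) - bwA a 0 h) =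
        fun h : 𝔼 => (a ‖h‖ - a 0) • h := by
      ext1 h; simp [bwA, sub_smul]
    rw [h0]
    have h2 : (fun h : 𝔼 => a ‖h‖ - a 0) =o[𝓝 0] (fun _ => (1:ℝ)) := by
      rw [Asymptotics.isLittleO_one_iff]
      have := (h1.sub (continuous_const (y := a 0))).tendsto (0 : 𝔼)
      simp only [Pi.sub_def, norm_zero, sub_self] at this
      exact this
    simpa using h2.smul_isBigO (Asymptotics.isBigO_refl (fun h : 𝔼 => h) (𝓝 0))
  · have hp' := norm_ne_zero_iff.mpr hp
    have h := ((bw_hasDerivAt ha (norm_pos_iff.mpr hp)).comp_hasFDerivAt p (bw_norm_deriv hp)).smul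
      (hasFDerivAt_id p)
    refine h.congr_fderiv ?_
    ext v
    simp [bwA, div_eq_mul_inv, smul_smul]

lemma bwG_contDiff {a : ℝ → ℝ} (ha : C11Loc a) : ContDiff ℝ 1 (fun q : 𝔼 => a ‖q‖ • q) :=
  contDiff_one_iff_hasFDerivAt.mpr ⟨_, bwA_cont ha, bwG_hasFDerivAt ha⟩

lemma bw_param {F : Type*} [NormedAddCommGroup F] [InnerProductSpace ℝ F] [CompleteSpace F]
    {X : 𝔼 → F} (hX : ContDiff ℝ 1 X) {M : ℝ} (hM : ∀ x, ‖fderiv ℝ X x‖ ≤ M)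
    {η : 𝔼 → F} (hη : Integrable η) (hi : Integrable (fun x => ⟪X x, η x⟫)) (v : 𝔼) :
    HasDerivAt (fun h : ℝ => ∫ x, ⟪X (x + h • v), η x⟫) (∫ x, ⟪fderiv ℝ X x v, η x⟫) 0 := by
  have hXc := hX.continuous
  have hX'c := hX.continuous_fderiv (by simp)
  have := (hasDerivAt_integral_of_dominated_loc_of_deriv_le (μ := volume) (𝕜 := ℝ)
    (F := fun (h : ℝ) x => ⟪X (x + h • v), η x⟫)
    (F' := fun h x => ⟪fderiv ℝ X (x + h • v) v, η x⟫) (x₀ := 0)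
    (bound := fun x => M * ‖v‖ * ‖η x‖) (s := univ) univ_mem ?_ ?_ ?_ ?_ ?_ ?_).2
  · simpa using this
  · refine Eventually.of_forall fun h => ?_
    exact AEStronglyMeasurable.inner (Continuous.aestronglyMeasurable (by fun_prop)) hη.1
  · simpa using hi
  · exact AEStronglyMeasurable.inner (Continuous.aestronglyMeasurable (by fun_prop)) hη.1
  · refine Eventually.of_forall fun x h _ => ?_
    refine (norm_inner_le_norm _ _).trans ?_
    gcongr
    exact ((fderiv ℝ X (x + h • v)).le_opNorm v).trans (by gcongr; exact hM _)
  · exact hη.norm.const_mul _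
  · refine Eventually.of_forall fun x h _ => ?_
    have h1 : HasDerivAt (fun h : ℝ => X (x + h • v)) (fderiv ℝ X (x + h • v) v) h := by
      have h2 : HasDerivAt (fun h : ℝ => x + h • v) v h := by
        simpa using ((hasDerivAt_id h).smul_const v).const_add x
      exact ((hX.differentiable (by simp)) _).hasFDerivAt.comp_hasDerivAt h h2
    simpa using h1.inner ℝ (hasDerivAt_const h (η x))

lemma bw_grad_meas (ψ : 𝔼 → ℝ) : Measurable (gradient ψ) :=
  ((InnerProductSpace.toDual ℝ 𝔼).symm.continuous.measurable).comp (measurable_fderiv ℝ ψ)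

lemma bw_norm_grad (ψ : 𝔼 → ℝ) (x : 𝔼) : ‖gradient ψ x‖ = ‖fderiv ℝ ψ x‖ := by
  simp [gradient]

lemma bw_grad_zero {ψ : 𝔼 → ℝ} {x : 𝔼} (hx : x ∉ tsupport ψ) : gradient ψ x = 0 := by
  have : fderiv ℝ ψ x = 0 := by
    by_contra h
    exact hx (support_fderiv_subset ℝ h)
  simp [gradient, this]

lemma bw_integrable_of {F : Type*} [NormedAddCommGroup F] {g : 𝔼 → F}
    (hg : AEStronglyMeasurable g) {K : Set 𝔼} (hK : IsCompact K) (h0 : ∀ x, x ∉ K → g x = 0)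
    {M : ℝ} (hM : ∀ x, ‖g x‖ ≤ M) : Integrable g := by
  have : IntegrableOn g K :=
    Measure.integrableOn_of_bounded (M := M) hK.measure_lt_top.ne hg
      (Eventually.of_forall hM)
  exact (integrableOn_iff_integrable_of_support_subset
    (fun x hx => by by_contra h; exact hx (h0 x h))).mp this

lemma bw_grad_int {W : Set 𝔼} {ψ : 𝔼 → ℝ} (hψ : IsTestOn W ψ) : Integrable (gradient ψ) := by
  obtain ⟨⟨K, hK⟩, hc, -⟩ := hψ
  refine bw_integrable_of (bw_grad_meas ψ).aestronglyMeasurable hc (fun x hx => bw_grad_zero hx)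
    (M := K) fun x => ?_
  rw [bw_norm_grad]
  exact norm_fderiv_le_of_lipschitz ℝ hK

lemma bw_test_int {W : Set 𝔼} {ψ : 𝔼 → ℝ} (hψ : IsTestOn W ψ) : Integrable ψ := by
  obtain ⟨⟨K, hK⟩, hc, -⟩ := hψ
  exact hK.continuous.integrable_of_hasCompactSupport hc

lemma bw_mul_int {F : Type*} [NormedAddCommGroup F] [InnerProductSpace ℝ F]
    {X η : 𝔼 → F} (hX : Continuous X) {M : ℝ}
    (hM : ∀ x, ‖X x‖ ≤ M) (hη : Integrable η) : Integrable (fun x => ⟪X x, η x⟫) := by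
  refine Integrable.mono' (hη.norm.const_mul M) (hX.aestronglyMeasurable.inner hη.1)
    (Eventually.of_forall fun x => ?_)
  exact (norm_inner_le_norm _ _).trans (by gcongr; exact hM x)

lemma bw_test_translate {W : Set 𝔼} (hW : IsOpen W) {ψ : 𝔼 → ℝ} (hψ : IsTestOn W ψ) (v : 𝔼) :
    ∀ᶠ h : ℝ in 𝓝 0, IsTestOn W (fun x => ψ (x - h • v)) := by
  obtain ⟨⟨K, hK⟩, hc, hs⟩ := hψ
  obtain ⟨δ, hδ, hδW⟩ := hc.isCompact.exists_thickening_subset_open hW hs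
  have ht : Tendsto (fun h : ℝ => ‖h • v‖) (𝓝 0) (𝓝 0) := by
    have : Continuous (fun h : ℝ => ‖h • v‖) := by fun_prop
    simpa using this.tendsto 0
  filter_upwards [ht.eventually (gt_mem_nhds hδ)] with h hh
  have e : (fun x => ψ (x - h • v)) = ψ ∘ (Homeomorph.subRight (h • v)) := rfl
  refine ⟨⟨K, ?_⟩, ?_, ?_⟩
  · refine LipschitzWith.of_dist_le_mul fun x y => ?_
    simpa using hK.dist_le_mul (x - h • v) (y - h • v)
  · rw [e]; exact hc.comp_homeomorph _
  · rw [e, tsupport_comp_eq_preimage]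
    intro x hx
    apply hδW
    rw [mem_thickening_iff]
    exact ⟨x - h • v, hx, by simpa [dist_eq_norm] using hh⟩

lemma bw_lin {W : Set 𝔼} (hW : IsOpen W) {X : 𝔼 → 𝔼} {g : 𝔼 → ℝ}
    (hX : ContDiff ℝ 1 X) {M : ℝ} (hM : ∀ x, ‖fderiv ℝ X x‖ ≤ M) (hM' : ∀ x, ‖X x‖ ≤ M)
    (hg : ContDiff ℝ 1 g) {N : ℝ} (hN : ∀ x, ‖fderiv ℝ g x‖ ≤ N) (hN' : ∀ x, ‖g x‖ ≤ N)
    (hsol : ∀ ψ, IsTestOn W ψ → ∫ x, ⟪X x, gradient ψ x⟫ = ∫ x, g x * ψ x)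
    {ψ : 𝔼 → ℝ} (hψ : IsTestOn W ψ) (v : 𝔼) :
    ∫ x, ⟪fderiv ℝ X x v, gradient ψ x⟫ = ∫ x, fderiv ℝ g x v * ψ x := by
  have h1 := bw_param hX hM (bw_grad_int hψ) (bw_mul_int hX.continuous hM' (bw_grad_int hψ)) v
  have h2 := bw_param hg hN (bw_test_int hψ) (bw_mul_int hg.continuous hN' (bw_test_int hψ)) v
  have h3 := h1.congr_of_eventuallyEq (f₁ := fun h : ℝ => ∫ x, ⟪g (x + h • v), ψ x⟫) ?_
  · have := h3.unique h2
    rw [this]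
    simp [mul_comm]
  · filter_upwards [bw_test_translate hW hψ v] with h hh
    have := hsol _ hh
    rw [← integral_add_right_eq_self _ (h • v)] at this
    rw [← integral_add_right_eq_self (fun x => g x * _) (h • v)] at this
    simp only [gradient, fderiv_comp_sub, add_sub_cancel_right] at this
    simp only [gradient]
    rw [this]
    simp [mul_comm]

end Helpers

section Main

local notation "𝔼" => EuclideanSpace ℝ (Fin n)

lemma bw_grad_contDiff {u : 𝔼 → ℝ} (hu : ContDiff ℝ 3 u) : ContDiff ℝ 2 (gradient u) :=
  (InnerProductSpace.toDual ℝ 𝔼).symm.toContinuousLinearEquiv.contDiff.comp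
    (hu.fderiv_right (m := 2) (by norm_num))

lemma bw_hess_inner {u : 𝔼 → ℝ} (hu : ContDiff ℝ 3 u) (x v w : 𝔼) :
    ⟪fderiv ℝ (gradient u) x v, w⟫ = fderiv ℝ (fderiv ℝ u) x v w := by
  have hd : DifferentiableAt ℝ (fderiv ℝ u) x :=
    (hu.fderiv_right (m := 2) (by norm_num)).differentiable (by simp) x
  have h := (InnerProductSpace.toDual ℝ 𝔼).symm.toContinuousLinearEquiv.hasFDerivAt.comp x
    hd.hasFDerivAt
  have h' : HasFDerivAt (gradient u) _ x := h
  rw [h'.fderiv]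
  simp

lemma bw_hess_symm {u : 𝔼 → ℝ} (hu : ContDiff ℝ 3 u) (x v w : 𝔼) :
    ⟪fderiv ℝ (gradient u) x v, w⟫ = ⟪fderiv ℝ (gradient u) x w, v⟫ := by
  rw [bw_hess_inner hu, bw_hess_inner hu]
  exact (hu.contDiffAt.isSymmSndFDerivAt (by simp; norm_num)) v w

lemma bw_lip_mul {g φ : 𝔼 → ℝ} {C K : NNReal} (hg : LipschitzWith C g) (hφ : LipschitzWith K φ)
    {B D : ℝ} (hB : ∀ x, ‖g x‖ ≤ B) (hD : ∀ x, ‖φ x‖ ≤ D) :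
    ∃ L, LipschitzWith L (fun x => g x * φ x) := by
  have hB0 : 0 ≤ B := (norm_nonneg _).trans (hB 0)
  have hD0 : 0 ≤ D := (norm_nonneg _).trans (hD 0)
  refine ⟨Real.toNNReal (B * K + D * C), LipschitzWith.of_dist_le_mul fun x y => ?_⟩
  rw [Real.coe_toNNReal _ (by positivity), Real.dist_eq]
  have e : g x * φ x - g y * φ y = g x * (φ x - φ y) + φ y * (g x - g y) := by ring
  have h1 := hg.dist_le_mul x y
  have h2 := hφ.dist_le_mul x y
  rw [Real.dist_eq] at h1 h2
  have h3 := hB x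
  have h4 := hD y
  rw [Real.norm_eq_abs] at h3 h4
  rw [e]
  refine (abs_add_le _ _).trans ?_
  rw [abs_mul, abs_mul, add_mul, mul_assoc, mul_assoc]
  gcongr

/-- The bulk term. -/
def bwP (a f : ℝ → ℝ) (u : 𝔼 → ℝ) (x : 𝔼) : ℝ :=
  (∑ j : Fin n, ⟪Aop a (gradient u x) (fderiv ℝ (gradient u) x (EuclideanSpace.single j 1)),
    fderiv ℝ (gradient u) x (EuclideanSpace.single j 1)⟫) - deriv f (u x) * ‖gradient u x‖ ^ 2

lemma bw_Aop_cont {a : ℝ → ℝ} (ha : C11Loc a) {p v : 𝔼 → 𝔼} (hp : Continuous p)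
    (hv : Continuous v) : Continuous (fun x => Aop a (p x) (v x)) := by
  simp_rw [← bwA_apply]
  exact ((bwA_cont ha).comp hp).clm_apply hv

lemma bwP_cont {a f : ℝ → ℝ} (ha : C11Loc a) (hf : ContDiff ℝ 1 f) {u : 𝔼 → ℝ}
    (hu : ContDiff ℝ 3 u) : Continuous (bwP a f u) := by
  have hg := (bw_grad_contDiff hu).continuous
  have hH : ∀ v, Continuous (fun x => fderiv ℝ (gradient u) x v) := fun v =>
    ((bw_grad_contDiff hu).continuous_fderiv (by simp)).clm_apply continuous_const
  have hf' : Continuous (deriv f) := hf.continuous_deriv le_rfl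
  refine Continuous.sub (continuous_finsetSum _ fun j _ => ?_) ?_
  · exact (bw_Aop_cont ha hg (hH _)).inner (hH _)
  · exact (hf'.comp hu.continuous).mul (hg.norm.pow 2)

lemma bw_sum_single (v : 𝔼) : ∑ j : Fin n, v j • (EuclideanSpace.single j (1 : ℝ) : 𝔼) = v := by
  have := (EuclideanSpace.basisFun (Fin n) ℝ).sum_repr v
  simpa using this

lemma bw_main {W : Set 𝔼} (hW : IsOpen W) {a f : ℝ → ℝ} (ha : C11Loc a) (hf : ContDiff ℝ 1 f)
    {u : 𝔼 → ℝ} (hu : ContDiff ℝ 3 u) (huc : HasCompactSupport u)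
    (hsol : ∀ ψ, IsTestOn W ψ →
      ∫ x, a ‖gradient u x‖ * ⟪gradient u x, gradient ψ x⟫ = ∫ x, f (u x) * ψ x)
    {φ : 𝔼 → ℝ} (hφ : IsTestOn W φ) :
    ∫ x, φ x * bwP a f u x =
      - ∫ x, ⟪Aop a (gradient u x) (fderiv ℝ (gradient u) x (gradient u x)), gradient φ x⟫ := by
  have hg2 := bw_grad_contDiff hu
  have hgc : HasCompactSupport (gradient u) :=
    (huc.fderiv ℝ).comp_left (g := (InnerProductSpace.toDual ℝ 𝔼).symm) (map_zero _)
  set X : 𝔼 → 𝔼 := fun x => a ‖gradient u x‖ • gradient u x with hXdef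
  have hX : ContDiff ℝ 1 X := (bwG_contDiff ha).comp (hg2.of_le (by norm_num))
  have hX' : ∀ x v, fderiv ℝ X x v = Aop a (gradient u x) (fderiv ℝ (gradient u) x v) := by
    intro x v
    have h := (bwG_hasFDerivAt ha (gradient u x)).comp x
      ((hg2.differentiable (by simp)) x).hasFDerivAt
    have h' : HasFDerivAt X _ x := h
    rw [h'.fderiv]
    simp [bwA_apply]
  have hXc : HasCompactSupport X :=
    hgc.comp_left (g := fun p : 𝔼 => a ‖p‖ • p) (by simp)
  obtain ⟨M1, hM1⟩ := hX.continuous.bounded_above_of_compact_support hXc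
  obtain ⟨M2, hM2⟩ := (hX.continuous_fderiv (by simp)).bounded_above_of_compact_support
    (hXc.fderiv ℝ)
  have hfu : ContDiff ℝ 1 (fun x => f (u x)) := hf.comp (hu.of_le (by norm_num))
  have hfu' : ∀ x, fderiv ℝ (fun x => f (u x)) x = deriv f (u x) • fderiv ℝ u x := by
    intro x
    exact ((hf.differentiable (by simp) (u x)).hasDerivAt.comp_hasFDerivAt x
      (hu.differentiable (by simp) x).hasFDerivAt).fderiv
  have hc0 : HasCompactSupport (fun x => f (u x) - f 0) :=
    huc.comp_left (g := fun t => f t - f 0) (by simp)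
  obtain ⟨N1, hN1⟩ := (hfu.continuous.sub continuous_const).bounded_above_of_compact_support hc0
  obtain ⟨N2, hN2⟩ := ((hfu.sub (contDiff_const (c := f 0))).continuous_fderiv
    (by simp)).bounded_above_of_compact_support (hc0.fderiv ℝ)
  have hsol' : ∀ ψ, IsTestOn W ψ → ∫ x, ⟪X x, gradient ψ x⟫ = ∫ x, f (u x) * ψ x := by
    intro ψ hψ
    rw [← hsol ψ hψ]
    simp [X, inner_smul_left]
  have key := fun (ψ : 𝔼 → ℝ) (hψ : IsTestOn W ψ) (v : 𝔼) =>
    bw_lin hW hX (M := max M1 M2) (fun x => (hM2 x).trans (le_max_right _ _))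
      (fun x => (hM1 x).trans (le_max_left _ _)) hfu (N := max (N1 + ‖f 0‖) N2)
      (fun x => by
        have := hN2 x
        simp only [fderiv_sub_const] at this
        exact this.trans (le_max_right _ _))
      (fun x => by
        refine le_trans ?_ (le_max_left _ _)
        have := norm_add_le (f (u x) - f 0) (f 0)
        rw [sub_add_cancel] at this
        have h9 : ‖f (u x) - f 0‖ ≤ N1 := hN1 x
        linarith) hsol' hψ v
  -- coordinates of the gradient
  have hcoord : ∀ j : Fin n, ContDiff ℝ 2 (fun x => gradient u x j) := fun j =>
    (EuclideanSpace.proj j : 𝔼 →L[ℝ] ℝ).contDiff.comp hg2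
  have hcoordc : ∀ j : Fin n, HasCompactSupport (fun x => gradient u x j) := fun j =>
    hgc.comp_left (g := fun p : 𝔼 => p j) (by simp)
  have hφ' := hφ
  obtain ⟨⟨K, hK⟩, hφc, hφs⟩ := hφ'
  have htest : ∀ j : Fin n, IsTestOn W (fun x => gradient u x j * φ x) := by
    intro j
    obtain ⟨C, hC⟩ := (hcoord j).lipschitzWith_of_hasCompactSupport (hcoordc j) (by simp)
    obtain ⟨B, hB⟩ := (hcoord j).continuous.bounded_above_of_compact_support (hcoordc j)
    obtain ⟨D, hD⟩ := hK.continuous.bounded_above_of_compact_support hφc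
    refine ⟨bw_lip_mul hC hK hB hD, hφc.mul_left, ?_⟩
    exact (tsupport_mul_subset_right (f := fun x => gradient u x j) (g := φ)).trans hφs
  let e : Fin n → 𝔼 := fun j => EuclideanSpace.single j 1
  have hgrad : ∀ j : Fin n, ∀ᵐ x, gradient (fun x => gradient u x j * φ x) x =
      gradient u x j • gradient φ x + φ x • fderiv ℝ (gradient u) x (e j) := by
    intro j
    filter_upwards [hK.ae_differentiableAt] with x hx
    have h1 : HasFDerivAt (fun x => gradient u x j)
        ((EuclideanSpace.proj j : 𝔼 →L[ℝ] ℝ).comp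
          (fderiv ℝ (gradient u) x)) x :=
      (EuclideanSpace.proj j : 𝔼 →L[ℝ] ℝ).hasFDerivAt.comp x
        ((hg2.differentiable (by simp)) x).hasFDerivAt
    have h2 := h1.mul hx.hasFDerivAt
    have h2' : HasFDerivAt (fun x => gradient u x j * φ x) _ x := h2
    refine ext_inner_right ℝ fun w => ?_
    rw [inner_gradient_left, h2'.fderiv]
    have h3 := bw_hess_symm hu x w (e j)
    have h4 : ⟪fderiv ℝ (gradient u) x w, e j⟫ = fderiv ℝ (gradient u) x w j := by
      simp [e, EuclideanSpace.inner_single_right]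
    rw [inner_add_left, inner_smul_left, inner_smul_left, ← h3, h4, inner_gradient_left]
    simp
  have hHc : ∀ v, Continuous (fun x => fderiv ℝ (gradient u) x v) := fun v =>
    (hg2.continuous_fderiv (by simp)).clm_apply continuous_const
  have hAHc : ∀ v, Continuous (fun x => Aop a (gradient u x) (fderiv ℝ (gradient u) x v)) :=
    fun v => bw_Aop_cont ha hg2.continuous (hHc v)
  have hHcs : HasCompactSupport (fderiv ℝ (gradient u)) := hgc.fderiv ℝ
  -- integrability
  have hi1 : ∀ j : Fin n, Integrable (fun x =>
      ⟪gradient u x j • Aop a (gradient u x) (fderiv ℝ (gradient u) x (e j)), gradient φ x⟫) := by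
    intro j
    have hc : Continuous (fun x =>
      gradient u x j • Aop a (gradient u x) (fderiv ℝ (gradient u) x (e j))) :=
      (hcoord j).continuous.smul (hAHc _)
    obtain ⟨B, hB⟩ := hc.bounded_above_of_compact_support (hcoordc j).smul_right
    exact bw_mul_int hc hB (bw_grad_int hφ)
  have hi2 : ∀ j : Fin n, Integrable (fun x => φ x *
      ⟪Aop a (gradient u x) (fderiv ℝ (gradient u) x (e j)), fderiv ℝ (gradient u) x (e j)⟫) := by
    intro j
    exact (hK.continuous.mul ((hAHc _).inner (hHc _))).integrable_of_hasCompactSupport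
      hφc.mul_right
  have hi3 : ∀ j : Fin n, Integrable (fun x => φ x * (deriv f (u x) * gradient u x j ^ 2)) := by
    intro j
    exact (hK.continuous.mul (((hf.continuous_deriv le_rfl).comp hu.continuous).mul
      ((hcoord j).continuous.pow 2))).integrable_of_hasCompactSupport hφc.mul_right
  have hj : ∀ j : Fin n,
      (∫ x, ⟪gradient u x j • Aop a (gradient u x) (fderiv ℝ (gradient u) x (e j)),
        gradient φ x⟫) + (∫ x, φ x *
      ⟪Aop a (gradient u x) (fderiv ℝ (gradient u) x (e j)), fderiv ℝ (gradient u) x (e j)⟫)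
      = ∫ x, φ x * (deriv f (u x) * gradient u x j ^ 2) := by
    intro j
    have h := key _ (htest j) (e j)
    rw [← integral_add (hi1 j) (hi2 j)]
    calc _ = _ := ?_
      _ = _ := h
      _ = _ := ?_
    · refine integral_congr_ae ?_
      filter_upwards [hgrad j] with x hx
      rw [hx, hX', inner_add_right, inner_smul_right, inner_smul_right, inner_smul_left]
      simp
    · refine integral_congr_ae (Eventually.of_forall fun x => ?_)
      have h4 : fderiv ℝ u x (e j) = gradient u x j := by
        rw [← inner_gradient_left]
        simp only [e, EuclideanSpace.inner_single_right]
        simp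
      simp only [hfu', smul_apply, h4, smul_eq_mul]
      ring
  have hsum := Finset.sum_congr (rfl : (Finset.univ : Finset (Fin n)) = Finset.univ)
    (fun j _ => hj j)
  rw [Finset.sum_add_distrib, ← integral_finsetSum _ (fun j _ => hi1 j),
    ← integral_finsetSum _ (fun j _ => hi2 j), ← integral_finsetSum _ (fun j _ => hi3 j)] at hsum
  have t1 : ∀ x, ∑ j, ⟪gradient u x j • Aop a (gradient u x) (fderiv ℝ (gradient u) x (e j)),
        gradient φ x⟫ =
      ⟪Aop a (gradient u x) (fderiv ℝ (gradient u) x (gradient u x)), gradient φ x⟫ := by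
    intro x
    rw [← sum_inner]
    congr 1
    have h5 : fderiv ℝ (gradient u) x (gradient u x) =
        ∑ j, gradient u x j • fderiv ℝ (gradient u) x (e j) := by
      have := congrArg (fderiv ℝ (gradient u) x) (bw_sum_single (gradient u x))
      rw [map_sum] at this
      rw [← this]
      simp only [map_smul, e]
    rw [h5]
    simp only [← bwA_apply, map_sum, map_smul]
  have t3 : ∀ x, ∑ j, φ x * (deriv f (u x) * gradient u x j ^ 2) =
      φ x * (deriv f (u x) * ‖gradient u x‖ ^ 2) := by
    intro x
    rw [EuclideanSpace.norm_sq_eq, ← Finset.mul_sum, ← Finset.mul_sum]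
    simp
  have hi2' : Integrable (fun x => ∑ j, φ x *
      ⟪Aop a (gradient u x) (fderiv ℝ (gradient u) x (e j)), fderiv ℝ (gradient u) x (e j)⟫) :=
    integrable_finsetSum _ fun j _ => hi2 j
  have hi3' : Integrable (fun x => ∑ j, φ x * (deriv f (u x) * gradient u x j ^ 2)) :=
    integrable_finsetSum _ fun j _ => hi3 j
  have hP : ∫ x, φ x * bwP a f u x = (∫ x, ∑ j, φ x *
      ⟪Aop a (gradient u x) (fderiv ℝ (gradient u) x (e j)), fderiv ℝ (gradient u) x (e j)⟫) -
      ∫ x, ∑ j, φ x * (deriv f (u x) * gradient u x j ^ 2) := by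
    rw [← integral_sub hi2' hi3']
    refine integral_congr_ae (Eventually.of_forall fun x => ?_)
    simp only [t3, bwP, mul_sub, Finset.mul_sum, e]
  rw [hP, ← hsum]
  simp only [t1]
  ring

/-- Pointwise comparison. -/
lemma bwQ_eq {a f : ℝ → ℝ} {u : 𝔼 → ℝ} (hu : ContDiff ℝ 3 u) (x : 𝔼)
    (hx : gradient u x ≠ 0) : bochnerQ a f u x = bwP a f u x := by
  have hg2 := bw_grad_contDiff hu
  set p := gradient u x with hp
  set H := fderiv ℝ (gradient u) x with hH
  have hpn : ‖p‖ ≠ 0 := norm_ne_zero_iff.mpr hx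
  set ν := ‖p‖⁻¹ • p with hν
  have hν1 : ⟪ν, ν⟫ = 1 := by
    rw [hν, inner_smul_left, inner_smul_right, real_inner_self_eq_norm_sq]
    simp; field_simp
  have hgn : gradient (fun y => ‖gradient u y‖) x = H ν := by
    have h := (bw_norm_deriv hx).comp x ((hg2.differentiable (by simp)) x).hasFDerivAt
    have h' : HasFDerivAt (fun y => ‖gradient u y‖) _ x := h
    refine ext_inner_right ℝ fun w => ?_
    rw [inner_gradient_left, h'.fderiv, bw_hess_symm hu x ν w, real_inner_comm, hν,
      inner_smul_left]
    simp [hH, hp]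
  have hT : ‖tangGrad u x‖ ^ 2 = ‖H ν‖ ^ 2 - ⟪H ν, ν⟫ ^ 2 := by
    rw [tangGrad, hgn, ← hp, ← hν, ← real_inner_self_eq_norm_sq, ← real_inner_self_eq_norm_sq]
    simp only [inner_sub_left, inner_sub_right, inner_smul_left, inner_smul_right, hν1,
      real_inner_comm ν (H ν)]
    simp
    rw [real_inner_comm (H ν) ν]
    ring
  have hS : ∑ j : Fin n, ⟪p, H (EuclideanSpace.single j 1)⟫ ^ 2 = ‖p‖ ^ 2 * ‖H ν‖ ^ 2 := by
    have e1 : ‖p‖ ^ 2 * ‖H ν‖ ^ 2 = ‖H p‖ ^ 2 := by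
      rw [hν, map_smul, norm_smul]
      simp
      field_simp
    rw [e1, EuclideanSpace.norm_sq_eq]
    refine Finset.sum_congr rfl fun j _ => ?_
    rw [real_inner_comm, bw_hess_symm hu]
    simp [EuclideanSpace.inner_single_right, hH]
  have hPeq : bwP a f u x = a ‖p‖ * hessFrob2 u x + deriv a ‖p‖ * ‖p‖ * ‖H ν‖ ^ 2
      - deriv f (u x) * ‖p‖ ^ 2 := by
    rw [bwP, ← hp, ← hH]
    congr 1
    have : ∀ j : Fin n, ⟪Aop a p (H (EuclideanSpace.single j 1)), H (EuclideanSpace.single j 1)⟫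
        = a ‖p‖ * ‖H (EuclideanSpace.single j 1)‖ ^ 2 +
          deriv a ‖p‖ / ‖p‖ * ⟪p, H (EuclideanSpace.single j 1)⟫ ^ 2 := by
      intro j
      rw [Aop, inner_add_left, inner_smul_left, inner_smul_left, real_inner_self_eq_norm_sq]
      simp
      ring
    simp only [this]
    rw [Finset.sum_add_distrib, ← Finset.mul_sum, ← Finset.mul_sum, hS, hessFrob2]
    congr 1
    field_simp
  rw [hPeq, bochnerQ, if_neg hx, hT, lam1, lam2]
  ring

lemma bwP_crit {a f : ℝ → ℝ} (ha0 : 0 ≤ a 0) {u : 𝔼 → ℝ} (x : 𝔼)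
    (hx : gradient u x = 0) : 0 ≤ bwP a f u x := by
  rw [bwP, hx]
  simp only [Aop, norm_zero, inner_zero_left, mul_zero, zero_smul, add_zero]
  simp only [ne_eq, OfNat.ofNat_ne_zero, not_false_eq_true, zero_pow, mul_zero, sub_zero]
  refine Finset.sum_nonneg fun j _ => ?_
  rw [inner_smul_left]
  exact mul_nonneg ha0 real_inner_self_nonneg

lemma bw_grad_normsq {u : 𝔼 → ℝ} (hu : ContDiff ℝ 3 u) (x : 𝔼) :
    gradient (fun y => ‖gradient u y‖ ^ 2) x = (2 : ℝ) • fderiv ℝ (gradient u) x (gradient u x) := by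
  have h := ((bw_grad_contDiff hu).differentiable (by simp) x).hasFDerivAt.norm_sq
  refine ext_inner_right ℝ fun w => ?_
  rw [inner_gradient_left, h.fderiv, inner_smul_left, bw_hess_symm hu, real_inner_comm]
  simp

lemma bw_global {W : Set 𝔼} (hW : IsOpen W) {a f : ℝ → ℝ} (ha : C11Loc a) (ha0 : 0 ≤ a 0)
    (hf : ContDiff ℝ 1 f)
    {u : 𝔼 → ℝ} (hu : ContDiff ℝ 3 u) (huc : HasCompactSupport u)
    (hsol : ∀ ψ, IsTestOn W ψ →
      ∫ x, a ‖gradient u x‖ * ⟪gradient u x, gradient ψ x⟫ = ∫ x, f (u x) * ψ x)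
    {φ : 𝔼 → ℝ} (hφ : IsTestOn W φ) (hφ0 : ∀ x, 0 ≤ φ x) :
    ∫ x, φ x * bochnerQ a f u x ≤ -(1 / 2) * ∫ x,
      ⟪Aop a (gradient u x) (gradient (fun y => ‖gradient u y‖ ^ 2) x), gradient φ x⟫ := by
  have hm := bw_main hW ha hf hu huc hsol hφ
  have e : ∀ x, ⟪Aop a (gradient u x) (gradient (fun y => ‖gradient u y‖ ^ 2) x), gradient φ x⟫ =
    2 * ⟪Aop a (gradient u x) (fderiv ℝ (gradient u) x (gradient u x)), gradient φ x⟫ := by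
    intro x
    rw [bw_grad_normsq hu, ← bwA_apply, map_smul, inner_smul_left, bwA_apply]
    simp
  have hR : -(1 / 2) * ∫ x,
      ⟪Aop a (gradient u x) (gradient (fun y => ‖gradient u y‖ ^ 2) x), gradient φ x⟫
      = ∫ x, φ x * bwP a f u x := by
    rw [hm]
    simp only [e]
    rw [integral_const_mul]
    ring
  rw [hR]
  have hPi : Integrable (fun x => φ x * bwP a f u x) := by
    obtain ⟨⟨K, hK⟩, hφc, -⟩ := hφ
    exact (hK.continuous.mul (bwP_cont ha hf hu)).integrable_of_hasCompactSupport hφc.mul_right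
  have hopen : MeasurableSet {x | gradient u x ≠ 0} :=
    (isOpen_ne_fun (bw_grad_contDiff hu).continuous continuous_const).measurableSet
  have hQi : Integrable (fun x => φ x * bochnerQ a f u x) := by
    have := hPi.indicator hopen
    refine this.congr (Eventually.of_forall fun x => ?_)
    by_cases hx : gradient u x = 0
    · simp [hx, bochnerQ]
    · simp [hx, bwQ_eq hu x hx]
  refine integral_mono hQi hPi fun x => ?_
  refine mul_le_mul_of_nonneg_left ?_ (hφ0 x)
  by_cases hx : gradient u x = 0
  · have := bwP_crit (f := f) ha0 x hx
    rw [bochnerQ, if_pos hx]; exact this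
  · exact (bwQ_eq hu x hx).le

lemma bw_Q_congr {a f : ℝ → ℝ} {u w : 𝔼 → ℝ} {x : 𝔼} (h : u =ᶠ[𝓝 x] w) :
    bochnerQ a f u x = bochnerQ a f w x := by
  have h1 := h.gradient (𝕜 := ℝ)
  have h2 : (fun y => ‖gradient u y‖) =ᶠ[𝓝 x] fun y => ‖gradient w y‖ := by
    filter_upwards [h1] with y hy
    rw [hy]
  simp only [bochnerQ, tangGrad, hessFrob2, h1.eq_of_nhds, h1.fderiv_eq, h2.gradient_eq,
    h.eq_of_nhds]

lemma bw_cutoff {Ω : Set 𝔼} (hΩ : IsOpen Ω) {u : 𝔼 → ℝ} (hu : ContDiffOn ℝ 3 u Ω)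
    {K : Set 𝔼} (hK : IsCompact K) (hKΩ : K ⊆ Ω) :
    ∃ W : Set 𝔼, IsOpen W ∧ K ⊆ W ∧ W ⊆ Ω ∧ ∃ w : 𝔼 → ℝ, ContDiff ℝ 3 w ∧ HasCompactSupport w ∧
      ∀ x ∈ W, w x = u x := by
  obtain ⟨L, hL, hKL, hLΩ⟩ := exists_compact_between hK hΩ hKΩ
  obtain ⟨χ, h1, h0, -⟩ := exists_contMDiffMap_one_nhds_of_subset_interior
    (modelWithCornersSelf ℝ 𝔼) (n := 3) hK.isClosed hKL
  have hχ : ContDiff ℝ 3 χ := χ.contMDiff.contDiff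
  obtain ⟨V, hV, hKV, hVs⟩ := (eventually_nhdsSet_iff_exists).mp h1
  have hχL : tsupport χ ⊆ L := closure_minimal
    (fun x hx => by by_contra h; exact hx (h0 x h)) hL.isClosed
  refine ⟨V ∩ Ω, hV.inter hΩ, subset_inter hKV hKΩ, inter_subset_right, fun x => χ x * u x,
    ?_, ?_, ?_⟩
  · rw [contDiff_iff_contDiffAt]
    intro x
    by_cases hx : x ∈ Ω
    · exact hχ.contDiffAt.mul (hu.contDiffAt (hΩ.mem_nhds hx))
    · have hx' : x ∉ tsupport χ := fun h => hx (hLΩ (hχL h))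
      have : (fun x => χ x * u x) =ᶠ[𝓝 x] fun _ => 0 := by
        filter_upwards [notMem_tsupport_iff_eventuallyEq.mp hx'] with y hy
        simp [hy]
      exact contDiffAt_const.congr_of_eventuallyEq this
  · exact (HasCompactSupport.of_support_subset_isCompact hL
      (fun x hx => by by_contra h; exact hx (h0 x h)) : HasCompactSupport χ).mul_right
  · intro x hx
    simp [hVs x hx.1]

end Main

/-- The weak Bochner-type inequality (4.1) of the paper, in the Euclidean (Ricci-flat) case. -/
theorem bochner_weak_inequality
    (n : ℕ) (Ω : Set (EuclideanSpace ℝ (Fin n))) (hΩ : IsOpen Ω)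
    (a : ℝ → ℝ) (ha : C11Loc a)
    (hapos : ∀ t ≥ (0 : ℝ), 0 < a t) (hlam : ∀ t ≥ (0 : ℝ), 0 < lam1 a t)
    (f : ℝ → ℝ) (hf : ContDiff ℝ 1 f)
    (u : EuclideanSpace ℝ (Fin n) → ℝ) (hu : ContDiffOn ℝ 3 u Ω)
    (hsol : IsWeakSolution a f Ω u) :
    ∀ φ : EuclideanSpace ℝ (Fin n) → ℝ, IsTestOn Ω φ → (∀ x, 0 ≤ φ x) →
      ∫ x in Ω, φ x * bochnerQ a f u x
        ≤ -(1 / 2) * ∫ x in Ω,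
            ⟪Aop a (gradient u x) (gradient (fun y => ‖gradient u y‖ ^ 2) x),
              gradient φ x⟫ := by
  intro φ hφ hφ0
  obtain ⟨W, hW, hKW, hWΩ, w, hw, hwc, hwu⟩ := bw_cutoff hΩ hu hφ.2.1.isCompact hφ.2.2
  have hev : ∀ x ∈ W, w =ᶠ[𝓝 x] u := fun x hx =>
    Filter.eventually_of_mem (hW.mem_nhds hx) hwu
  have hsol' : ∀ ψ, IsTestOn W ψ →
      ∫ x, a ‖gradient w x‖ * ⟪gradient w x, gradient ψ x⟫ = ∫ x, f (w x) * ψ x := by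
    intro ψ hψ
    have h := hsol ψ ⟨hψ.1, hψ.2.1, hψ.2.2.trans hWΩ⟩
    have hz : ∀ x, x ∉ Ω → x ∉ tsupport ψ := fun x hx h => hx (hWΩ (hψ.2.2 h))
    rw [setIntegral_eq_integral_of_forall_compl_eq_zero
        (fun x hx => by rw [bw_grad_zero (hz x hx)]; simp),
      setIntegral_eq_integral_of_forall_compl_eq_zero
        (fun x hx => by rw [image_eq_zero_of_notMem_tsupport (hz x hx)]; simp)] at h
    convert h using 2
    · ext x
      by_cases hx : x ∈ tsupport ψ
      · rw [(hev x (hψ.2.2 hx)).gradient_eq]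
      · rw [bw_grad_zero hx]; simp
    · ext x
      by_cases hx : x ∈ tsupport ψ
      · rw [hwu x (hψ.2.2 hx)]
      · rw [image_eq_zero_of_notMem_tsupport hx]; simp
  have hφW : IsTestOn W φ := ⟨hφ.1, hφ.2.1, hKW⟩
  have h := bw_global hW ha (hapos 0 le_rfl).le hf hw hwc hsol' hφW hφ0
  have hz : ∀ x, x ∉ Ω → x ∉ tsupport φ := fun x hx h => hx (hφ.2.2 h)
  rw [setIntegral_eq_integral_of_forall_compl_eq_zero
      (fun x hx => by rw [image_eq_zero_of_notMem_tsupport (hz x hx)]; simp),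
    setIntegral_eq_integral_of_forall_compl_eq_zero
      (fun x hx => by rw [bw_grad_zero (hz x hx)]; simp)]
  convert h using 3
  · rename_i x
    by_cases hx : x ∈ tsupport φ
    · rw [bw_Q_congr (hev x (hKW hx))]
    · rw [image_eq_zero_of_notMem_tsupport hx]; simp
  · ext x
    by_cases hx : x ∈ tsupport φ
    · have h1 := (hev x (hKW hx)).gradient (𝕜 := ℝ)
      have h2 : (fun y => ‖gradient w y‖ ^ 2) =ᶠ[𝓝 x] fun y => ‖gradient u y‖ ^ 2 := by
        filter_upwards [h1] with y hy
        rw [hy]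
      rw [h1.eq_of_nhds, h2.gradient_eq]
    · rw [bw_grad_zero hx]; simp
end
end

section
/- Let Ω ⊆ ℝⁿ be a C² domain, let a ∈ C¹([0,∞)) satisfy a(t) > 0 and (t·a(t))′ > 0 for all t ≥ 0, and let u ∈ C²(cl Ω). Let Γ be a connected component of ∂Ω on which u is constant and on which the normal derivative ∂_η u = ⟨∇u, η⟩ is a constant c. Then for every fixed vector e ∈ ℝⁿ, setting w := ⟨∇u, e⟩, the identity ⟨ (1/2)·w·A(∇u)∇(|∇u|²) − |∇u|²·A(∇u)∇w , η ⟩ = 0 holds at every point of Γ. -/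
open MeasureTheory Set Metric Filter
open scoped RealInnerProductSpace Topology ENNReal

noncomputable section

variable {n : ℕ}

/-- Chain rule up to the boundary along a two-parameter family. -/
lemma chain_up_to_boundary {E G : Type} [NormedAddCommGroup E] [NormedSpace ℝ E]
    [NormedAddCommGroup G] [NormedSpace ℝ G] (Ω : Set E) (F : ℝ × ℝ → E)
    (hF : ContDiffAt ℝ 1 F 0) (hin : ∀ᶠ z in 𝓝 (0 : ℝ × ℝ), z.1 < 0 → F z ∈ Ω)
    (f : E → G) (f' : E → E →L[ℝ] G) (hf : ∀ x ∈ Ω, HasFDerivAt f (f' x) x)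
    (hfc : ContinuousOn f (closure Ω)) (hfc' : ContinuousOn f' (closure Ω)) :
    HasDerivAt (fun t : ℝ => f (F (0, t))) (f' (F 0) (fderiv ℝ F 0 (0, 1))) 0 := by
  have hFe : ∀ᶠ z in 𝓝 (0 : ℝ × ℝ), ContDiffAt ℝ 1 F z := hF.eventually (by simp)
  obtain ⟨δ, hδ, hb⟩ := Metric.eventually_nhds_iff_ball.1 (hFe.and hin)
  have hmem : ∀ z : ℝ × ℝ, |z.1| < δ → |z.2| < δ → z ∈ ball (0 : ℝ × ℝ) δ := by
    intro z h1 h2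
    rw [mem_ball_zero_iff, Prod.norm_def]
    exact max_lt (by simpa using h1) (by simpa using h2)
  set ε := δ / 2 with hε
  have hε0 : 0 < ε := by positivity
  set S : Set (ℝ × ℝ) := Ioo (-ε) 0 ×ˢ Ioo (-ε) ε with hS
  have hSc : closure S = Icc (-ε) 0 ×ˢ Icc (-ε) ε := by
    rw [hS, closure_prod_eq, closure_Ioo (by linarith), closure_Ioo (by linarith)]
  have hScb : ∀ z ∈ closure S, z ∈ ball (0 : ℝ × ℝ) δ := by
    intro z hz
    rw [hSc] at hz
    obtain ⟨⟨h1, h2⟩, h3, h4⟩ := hz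
    exact hmem z (by rw [abs_lt]; constructor <;> linarith)
      (by rw [abs_lt]; constructor <;> linarith)
  have hSΩ : ∀ z ∈ S, F z ∈ Ω := fun z hz => (hb z (hScb z (subset_closure hz))).2 hz.1.2
  have hFc : ∀ z ∈ closure S, ContinuousAt F z := fun z hz => (hb z (hScb z hz)).1.continuousAt
  have hclΩ : ∀ z ∈ closure S, F z ∈ closure Ω := by
    intro z hz
    exact (hFc z hz).continuousWithinAt.mem_closure hz hSΩ
  have hcont : ∀ z ∈ closure S, Tendsto F (𝓝[S] z) (𝓝[closure Ω] (F z)) := by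
    intro z hz
    refine tendsto_nhdsWithin_iff.2 ⟨(hFc z hz).continuousWithinAt, ?_⟩
    filter_upwards [self_mem_nhdsWithin] with y hy
    exact subset_closure (hSΩ y hy)
  have h0S : (0 : ℝ × ℝ) ∈ closure S := by
    rw [hSc]
    exact ⟨⟨by simpa using hε0.le, le_rfl⟩, by simpa using hε0.le, by simpa using hε0.le⟩
  have hder : ∀ z ∈ S, HasFDerivAt (fun z => f (F z)) ((f' (F z)).comp (fderiv ℝ F z)) z := by
    intro z hz
    exact (hf _ (hSΩ z hz)).comp z
      ((hb z (hScb z (subset_closure hz))).1.differentiableAt (by simp)).hasFDerivAt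
  have key : HasFDerivWithinAt (fun z => f (F z)) ((f' (F 0)).comp (fderiv ℝ F 0))
      (closure S) 0 := by
    apply hasFDerivWithinAt_closure_of_tendsto_fderiv
    · exact fun z hz => (hder z hz).differentiableAt.differentiableWithinAt
    · exact (convex_Ioo _ _).prod (convex_Ioo _ _)
    · exact isOpen_Ioo.prod isOpen_Ioo
    · intro z hz
      exact (hfc (F z) (hclΩ z hz)).tendsto.comp (hcont z hz)
    · have h1 : Tendsto (fun z => f' (F z)) (𝓝[S] 0) (𝓝 (f' (F 0))) :=
        (hfc' (F 0) (hclΩ 0 h0S)).tendsto.comp (hcont 0 h0S)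
      have h2 : Tendsto (fun z => fderiv ℝ F z) (𝓝[S] 0) (𝓝 (fderiv ℝ F 0)) :=
        ((hF.continuousAt_fderiv (by simp))).tendsto.mono_left nhdsWithin_le_nhds
      have h3 : Tendsto (fun z => (f' (F z)).comp (fderiv ℝ F z)) (𝓝[S] 0)
          (𝓝 ((f' (F 0)).comp (fderiv ℝ F 0))) :=
        ((isBoundedBilinearMap_comp (𝕜 := ℝ) (E := ℝ × ℝ) (F := E) (G := G)).continuous.tendsto
          (f' (F 0), fderiv ℝ F 0)).comp (h1.prodMk_nhds h2)
      refine h3.congr' ?_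
      filter_upwards [self_mem_nhdsWithin] with z hz
      exact (hder z hz).fderiv.symm
  have hline : HasDerivWithinAt (fun t : ℝ => ((0 : ℝ), t)) ((0 : ℝ), (1 : ℝ)) (Icc (-ε) ε) 0 :=
    ((hasDerivAt_const (0 : ℝ) (0 : ℝ)).prodMk (hasDerivAt_id (0 : ℝ))).hasDerivWithinAt
  have hmaps : MapsTo (fun t : ℝ => ((0 : ℝ), t)) (Icc (-ε) ε) (closure S) := by
    intro t ht
    rw [hSc]
    exact ⟨⟨by simpa using hε0.le, le_rfl⟩, ht⟩
  have h := HasFDerivWithinAt.comp_hasDerivWithinAt (x := (0 : ℝ))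
    (l := fun z : ℝ × ℝ => f (F z)) (f := fun t : ℝ => ((0 : ℝ), t)) (t := closure S) key hline hmaps
  exact h.hasDerivAt (Icc_mem_nhds (by linarith) hε0)

/-- Two-parameter family adapted to level sets. -/
lemma exists_family {n : ℕ} (g : EuclideanSpace ℝ (Fin n) → ℝ) (p τ : EuclideanSpace ℝ (Fin n))
    (hg : ContDiffAt ℝ 1 g p) (hgp : g p = 0) (hN : gradient g p ≠ 0)
    (hτ : ⟪gradient g p, τ⟫ = 0) :
    ∃ F : ℝ × ℝ → EuclideanSpace ℝ (Fin n), ContDiffAt ℝ 1 F 0 ∧ F 0 = p ∧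
      fderiv ℝ F 0 (0, 1) = τ ∧ ∀ᶠ z in 𝓝 (0 : ℝ × ℝ), g (F z) = z.1 := by
  set N := gradient g p with hNdef
  set L : ℝ × ℝ →L[ℝ] EuclideanSpace ℝ (Fin n) :=
    (ContinuousLinearMap.fst ℝ ℝ ℝ).smulRight N + (ContinuousLinearMap.snd ℝ ℝ ℝ).smulRight τ with hL
  have hLz : ∀ z : ℝ × ℝ, L z = z.1 • N + z.2 • τ := fun z => by simp [hL]
  set P : ℝ × ℝ → EuclideanSpace ℝ (Fin n) := fun z => p + L z with hP
  have hPd : ContDiff ℝ 1 P := contDiff_const.add L.contDiff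
  have hP0 : P 0 = p := by simp [hP]
  have hPf : HasFDerivAt P L 0 := L.hasFDerivAt.const_add p
  set Q : ℝ × ℝ → ℝ × ℝ := fun z => (g (P z), z.2) with hQ
  have hQd : ContDiffAt ℝ 1 Q 0 := by
    refine ContDiffAt.prodMk (ContDiffAt.comp (0 : ℝ × ℝ) (by rw [hP0]; exact hg) hPd.contDiffAt)
      contDiffAt_snd
  have hNN : ‖N‖ ^ 2 ≠ 0 := by simpa using hN
  let B : (ℝ × ℝ) ≃L[ℝ] (ℝ × ℝ) :=
    (ContinuousLinearEquiv.smulLeft (Units.mk0 (‖N‖ ^ 2) hNN) : ℝ ≃L[ℝ] ℝ).prodCongr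
      (ContinuousLinearEquiv.refl ℝ ℝ)
  have hBz : ∀ z : ℝ × ℝ, B z = (‖N‖ ^ 2 * z.1, z.2) := fun z => rfl
  have hgf : HasFDerivAt g (fderiv ℝ g p) (P 0) := by
    rw [hP0]; exact (hg.differentiableAt (by simp)).hasFDerivAt
  have hgv : ∀ v, fderiv ℝ g p v = ⟪N, v⟫ := by
    intro v
    rw [hNdef, gradient, InnerProductSpace.toDual_symm_apply]
  have hQf : HasFDerivAt Q (B : (ℝ × ℝ) →L[ℝ] (ℝ × ℝ)) 0 := by
    have h := (hgf.comp (0 : ℝ × ℝ) hPf).prodMk (hasFDerivAt_snd (𝕜 := ℝ) (p := (0 : ℝ × ℝ)))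
    refine h.congr_fderiv ?_
    refine ContinuousLinearMap.ext fun z => ?_
    have : fderiv ℝ g p (L z) = ‖N‖ ^ 2 * z.1 := by
      rw [hgv, hLz, inner_add_right, inner_smul_right, inner_smul_right, hτ,
        real_inner_self_eq_norm_sq]
      ring
    change (fderiv ℝ g p (L z), z.2) = B z
    rw [this, hBz]
  have hQ0 : Q 0 = 0 := by simp [hQ, hP0, hgp]
  set R := hQd.localInverse hQf (by simp) with hR
  have hstrict : HasStrictFDerivAt Q (B : (ℝ × ℝ) →L[ℝ] (ℝ × ℝ)) 0 :=
    hQd.hasStrictFDerivAt' hQf (by simp)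
  have hRd : ContDiffAt ℝ 1 R 0 := by
    have := hQd.to_localInverse hQf (by simp)
    rwa [hQ0] at this
  have hR0 : R 0 = 0 := by
    have := hQd.localInverse_apply_image hQf (by simp)
    rwa [hQ0] at this
  have hRinv : ∀ᶠ z in 𝓝 (0 : ℝ × ℝ), Q (R z) = z := by
    have := hstrict.eventually_right_inverse
    rwa [hQ0] at this
  have hRf : HasFDerivAt R (B.symm : (ℝ × ℝ) →L[ℝ] (ℝ × ℝ)) 0 := by
    have := hstrict.to_localInverse.hasFDerivAt
    rwa [hQ0] at this
  have hPf' : HasFDerivAt P L (R 0) := by rw [hR0]; exact hPf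
  refine ⟨fun z => P (R z), hPd.contDiffAt.comp _ hRd, (congrArg P hR0).trans hP0, ?_, ?_⟩
  · have h : HasFDerivAt (fun z => P (R z)) (L.comp (B.symm : (ℝ × ℝ) →L[ℝ] (ℝ × ℝ))) 0 :=
      hPf'.comp (0 : ℝ × ℝ) hRf
    rw [h.fderiv]
    have hb : B.symm (0, 1) = (0, 1) := by
      rw [ContinuousLinearEquiv.symm_apply_eq, hBz]; simp
    change L (B.symm (0, 1)) = τ
    rw [hb, hLz]; simp
  · filter_upwards [hRinv] with z hz
    exact congrArg Prod.fst hz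

lemma exists_curve {n : ℕ} (Ω : Set (EuclideanSpace ℝ (Fin n)))
    (η : EuclideanSpace ℝ (Fin n) → EuclideanSpace ℝ (Fin n))
    (hΩ : IsCkDomainWithNormal 2 Ω η) (p τ : EuclideanSpace ℝ (Fin n))
    (hp : p ∈ frontier Ω) (hτ : ⟪η p, τ⟫ = 0) :
    ∃ F : ℝ × ℝ → EuclideanSpace ℝ (Fin n), ContDiffAt ℝ 1 F 0 ∧ F 0 = p ∧
      fderiv ℝ F 0 (0, 1) = τ ∧ (∀ᶠ z in 𝓝 (0 : ℝ × ℝ), z.1 < 0 → F z ∈ Ω) ∧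
      ∀ᶠ t in 𝓝 (0 : ℝ), F (0, t) ∈ connectedComponentIn (frontier Ω) p := by
  obtain ⟨-, hop, -, hloc⟩ := hΩ
  obtain ⟨V, g, hV, hpV, hg, hgrad, hΩV, hη⟩ := hloc p hp
  have hVn : V ∈ 𝓝 p := hV.mem_nhds hpV
  have hgp2 : ContDiffAt ℝ 2 g p := hg.contDiffAt hVn
  have hfr : frontier Ω = closure Ω \ Ω := hop.frontier_eq
  have hpΩ : p ∉ Ω := by rw [hfr] at hp; exact hp.2
  have hpc : p ∈ closure Ω := frontier_subset_closure hp
  have hiff : ∀ x ∈ V, (x ∈ Ω ↔ g x < 0) := by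
    intro x hx
    constructor
    · intro h
      have : x ∈ Ω ∩ V := ⟨h, hx⟩
      rw [hΩV] at this; exact this.2
    · intro h
      have : x ∈ {x ∈ V | g x < 0} := ⟨hx, h⟩
      rw [← hΩV] at this; exact this.1
  have hgp : g p = 0 := by
    apply le_antisymm
    · by_contra! h
      have h1 : ∀ᶠ x in 𝓝 p, 0 < g x := hgp2.continuousAt.eventually (lt_mem_nhds h)
      obtain ⟨x, hx, hx1, hx2⟩ :=
        ((mem_closure_iff_frequently.1 hpc).and_eventually (h1.and hVn)).exists
      have := (hiff x hx2).1 hx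
      linarith
    · by_contra! h
      exact hpΩ ((hiff p hpV).2 h)
  have hN := hgrad p hpV
  have hτ' : ⟪gradient g p, τ⟫ = 0 := by
    rw [hη, inner_neg_left, inner_smul_left] at hτ
    simpa [hN] using hτ
  obtain ⟨F, hF, hF0, hFτ, hFg⟩ := exists_family g p τ (hgp2.of_le (by norm_num)) hgp hN hτ'
  have hFV : ∀ᶠ z in 𝓝 (0 : ℝ × ℝ), F z ∈ V :=
    hF.continuousAt.eventually (by rw [hF0]; exact hVn)
  have hFe : ∀ᶠ z in 𝓝 (0 : ℝ × ℝ), ContDiffAt ℝ 1 F z := hF.eventually (by simp)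
  have hin : ∀ᶠ z in 𝓝 (0 : ℝ × ℝ), z.1 < 0 → F z ∈ Ω := by
    filter_upwards [hFV, hFg] with z h1 h2 h3
    rw [hiff _ h1, h2]; exact h3
  refine ⟨F, hF, hF0, hFτ, hin, ?_⟩
  obtain ⟨δ, hδ, hb⟩ := Metric.eventually_nhds_iff_ball.1 (hFV.and (hFg.and (hFe.and hin)))
  have hmem : ∀ z : ℝ × ℝ, |z.1| < δ → |z.2| < δ → z ∈ ball (0 : ℝ × ℝ) δ := by
    intro z h1 h2
    rw [mem_ball_zero_iff, Prod.norm_def]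
    exact max_lt (by simpa using h1) (by simpa using h2)
  have hsub : (fun t : ℝ => F (0, t)) '' Ioo (-δ) δ ⊆ frontier Ω := by
    rintro _ ⟨t, ht, rfl⟩
    have ht' : |t| < δ := abs_lt.2 ht
    obtain ⟨h1, h2, h3, -⟩ := hb (0, t) (hmem _ (by simpa using hδ) ht')
    rw [hfr]
    refine ⟨?_, fun h => by have := (hiff _ h1).1 h; rw [h2] at this; simp at this⟩
    have hcl : ((0 : ℝ), t) ∈ closure (Ioo (-δ) 0 ×ˢ {t}) := by
      rw [closure_prod_eq, closure_Ioo (by linarith)]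
      exact ⟨⟨by simpa using hδ.le, le_rfl⟩, subset_closure rfl⟩
    refine h3.continuousAt.continuousWithinAt.mem_closure hcl ?_
    rintro ⟨s, t'⟩ ⟨hs, rfl⟩
    exact (hb _ (hmem _ (abs_lt.2 ⟨hs.1, hs.2.trans hδ⟩) ht')).2.2.2 hs.2
  have hpre : IsPreconnected ((fun t : ℝ => F (0, t)) '' Ioo (-δ) δ) := by
    refine isPreconnected_Ioo.image _ ?_
    intro t ht
    have h3 := (hb (0, t) (hmem _ (by simpa using hδ) (abs_lt.2 ht))).2.2.1.continuousAt
    have : ContinuousAt (fun t : ℝ => ((0 : ℝ), t)) t := by fun_prop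
    exact (ContinuousAt.comp (f := fun t : ℝ => ((0 : ℝ), t)) h3 this).continuousWithinAt
  have hsub2 := hpre.subset_connectedComponentIn (x := p)
    ⟨0, ⟨by linarith, hδ⟩, hF0⟩ hsub
  filter_upwards [Ioo_mem_nhds (show -δ < 0 by linarith) hδ] with t ht
  exact hsub2 ⟨t, ht, rfl⟩

/-- Lemma 4.3 of the paper in `ℝⁿ`, with the Killing field a constant field `e`:
the boundary cancellation identity on a component `Γ` of `∂Ω` where `u` and `∂_η u` are
constant.  `Du` and `H` are the continuous extensions to `cl Ω` of `∇u` and `Hess u`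
(`u ∈ C²(cl Ω)`). -/
theorem boundary_cancellation_identity
    (n : ℕ) (Ω : Set (EuclideanSpace ℝ (Fin n)))
    (η : EuclideanSpace ℝ (Fin n) → EuclideanSpace ℝ (Fin n))
    (hΩ : IsCkDomainWithNormal 2 Ω η)
    (a : ℝ → ℝ) (ha : ContDiffOn ℝ 1 a (Ici 0))
    (hapos : ∀ t ≥ (0 : ℝ), 0 < a t) (hlam : ∀ t ≥ (0 : ℝ), 0 < lam1 a t)
    (u : EuclideanSpace ℝ (Fin n) → ℝ)
    (hu2 : ContDiffOn ℝ 2 u Ω) (hucl : ContinuousOn u (closure Ω))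
    (Du : EuclideanSpace ℝ (Fin n) → EuclideanSpace ℝ (Fin n))
    (hDu : ∀ x ∈ Ω, Du x = gradient u x) (hDuc : ContinuousOn Du (closure Ω))
    (H : EuclideanSpace ℝ (Fin n) → EuclideanSpace ℝ (Fin n) →L[ℝ] EuclideanSpace ℝ (Fin n))
    (hH : ∀ x ∈ Ω, H x = fderiv ℝ (gradient u) x) (hHc : ContinuousOn H (closure Ω))
    (p₀ : EuclideanSpace ℝ (Fin n)) (hp₀ : p₀ ∈ frontier Ω)
    (Γ : Set (EuclideanSpace ℝ (Fin n))) (hΓ : Γ = connectedComponentIn (frontier Ω) p₀)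
    (b c : ℝ) (hub : ∀ p ∈ Γ, u p = b) (hc : ∀ p ∈ Γ, ⟪Du p, η p⟫ = c)
    (e : EuclideanSpace ℝ (Fin n)) :
    ∀ p ∈ Γ,
      ⟪(⟪Du p, e⟫ / 2) • Aop a (Du p) ((2 : ℝ) • (H p) (Du p)) -
          ‖Du p‖ ^ 2 • Aop a (Du p) ((H p) e),
        η p⟫ = 0 := by
  obtain ⟨hne, hop, hconn, hloc⟩ := id hΩ
  have hΓf : ∀ p ∈ Γ, p ∈ frontier Ω := fun p hp => by
    rw [hΓ] at hp; exact connectedComponentIn_subset _ _ hp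
  have hΓp : ∀ p ∈ Γ, connectedComponentIn (frontier Ω) p = Γ := fun p hp => by
    rw [hΓ] at hp ⊢; exact (connectedComponentIn_eq hp).symm
  have hη1 : ∀ p ∈ Γ, ‖η p‖ = 1 := by
    intro p hp
    obtain ⟨V, g, hV, hpV, hg, hgrad, hΩV, hη⟩ := hloc p (hΓf p hp)
    rw [hη, norm_neg, norm_smul, norm_inv, norm_norm]
    exact inv_mul_cancel₀ (norm_ne_zero_iff.2 (hgrad p hpV))
  have hu : ∀ x ∈ Ω, ContDiffAt ℝ 2 u x := fun x hx => hu2.contDiffAt (hop.mem_nhds hx)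
  have huf : ∀ x ∈ Ω, HasFDerivAt u (innerSL ℝ (Du x)) x := by
    intro x hx
    have h := ((hu x hx).differentiableAt (by simp)).hasGradientAt
    rw [← hDu x hx] at h
    exact h.hasFDerivAt
  have hDuf : ∀ x ∈ Ω, HasFDerivAt Du (H x) x := by
    intro x hx
    have h1 : DifferentiableAt ℝ (fderiv ℝ u) x :=
      ((hu x hx).fderiv_right (m := 1) (by norm_num)).differentiableAt (by simp)
    have h2 : DifferentiableAt ℝ (gradient u) x :=
      ((InnerProductSpace.toDual ℝ (EuclideanSpace ℝ (Fin n))).symm.differentiable _).comp x h1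
    rw [hH x hx]
    refine h2.hasFDerivAt.congr_of_eventuallyEq ?_
    filter_upwards [hop.mem_nhds hx] with y hy using hDu y hy
  have step1 : ∀ p ∈ Γ, Du p = c • η p := by
    intro p hp
    have hηη : ⟪η p, η p⟫ = 1 := by rw [real_inner_self_eq_norm_sq, hη1 p hp]; norm_num
    have horth : ⟪η p, Du p - c • η p⟫ = 0 := by
      rw [inner_sub_right, inner_smul_right, hηη, real_inner_comm, hc p hp]; ring
    obtain ⟨F, hF, hF0, hFτ, hin, hev⟩ := exists_curve Ω η hΩ p _ (hΓf p hp) horth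
    have hd := chain_up_to_boundary Ω F hF hin u (fun x => innerSL ℝ (Du x)) huf hucl
      ((innerSL ℝ).continuous.comp_continuousOn hDuc)
    have hconst : HasDerivAt (fun t : ℝ => u (F (0, t))) 0 0 := by
      refine (hasDerivAt_const (0 : ℝ) b).congr_of_eventuallyEq ?_
      filter_upwards [hev] with t ht
      rw [hΓp p hp] at ht
      exact hub _ ht
    have h0 := hd.unique hconst
    rw [hF0, hFτ, innerSL_apply_apply] at h0
    rw [← sub_eq_zero, ← inner_self_eq_zero (𝕜 := ℝ), inner_sub_left, h0, inner_smul_left, horth]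
    simp
  intro p hp
  have hηη : ⟪η p, η p⟫ = 1 := by rw [real_inner_self_eq_norm_sq, hη1 p hp]; norm_num
  have hD := step1 p hp
  by_cases hc0 : c = 0
  · have : Du p = 0 := by rw [hD, hc0, zero_smul]
    simp [this]
  have horth : ⟪η p, ⟪η p, e⟫ • η p - e⟫ = 0 := by
    rw [inner_sub_right, inner_smul_right, hηη]; ring
  have step2 : ⟪η p, H p (⟪η p, e⟫ • η p - e)⟫ = 0 := by
    obtain ⟨F, hF, hF0, hFτ, hin, hev⟩ := exists_curve Ω η hΩ p _ (hΓf p hp) horth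
    have hd := chain_up_to_boundary Ω F hF hin Du H hDuf hDuc hHc
    have hd2 := hd.inner ℝ hd
    have hconst : HasDerivAt (fun t : ℝ => ⟪Du (F (0, t)), Du (F (0, t))⟫) 0 0 := by
      refine (hasDerivAt_const (0 : ℝ) (c ^ 2)).congr_of_eventuallyEq ?_
      filter_upwards [hev] with t ht
      rw [hΓp p hp] at ht
      rw [real_inner_self_eq_norm_sq, step1 _ ht, norm_smul, hη1 _ ht]
      simp
    have h0 := hd2.unique hconst
    have hz : F (0, 0) = p := hF0
    rw [hF0, hFτ, hz, real_inner_comm (Du p), ← two_mul, hD, inner_smul_left] at h0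
    simpa [hc0] using h0
  rw [map_sub, map_smul, inner_sub_right, inner_smul_right] at step2
  have hA : ∀ v, ⟪Aop a (Du p) v, η p⟫ = (a ‖Du p‖ + deriv a ‖Du p‖ / ‖Du p‖ * c ^ 2) * ⟪η p, v⟫ := by
    intro v
    rw [Aop, inner_add_left, inner_smul_left, inner_smul_left, hc p hp, real_inner_comm (η p) v]
    conv_lhs => rw [show ⟪Du p, v⟫ = c * ⟪η p, v⟫ by rw [hD, inner_smul_left]; rfl]
    simp only [conj_trivial]
    ring
  rw [inner_sub_left, inner_smul_left, inner_smul_left, hA, hA, inner_smul_right]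
  simp only [conj_trivial]
  have hn : ‖Du p‖ ^ 2 = c ^ 2 := by rw [hD, norm_smul, hη1 p hp]; simp
  have he : ⟪Du p, e⟫ = c * ⟪η p, e⟫ := by rw [hD, inner_smul_left]; rfl
  have hH' : ⟪η p, H p (Du p)⟫ = c * ⟪η p, H p (η p)⟫ := by
    rw [hD, map_smul, inner_smul_right]
  rw [hn, he, hH']
  linear_combination (a ‖Du p‖ + deriv a ‖Du p‖ / ‖Du p‖ * c ^ 2) * c ^ 2 * step2
end
end
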